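/- arXiv:1410.7081 — 2 statements merged into one kernel-verified Lean document; each statement's English description precedes it below -/
import Mathlib

section
/- ∫₀¹ k(2-17k²+17k⁴) K(k)⁶ dk = (5715/64)ζ(7). -/
open scoped Real
open MeasureTheory

noncomputable def EllK (k : ℝ) : ℝ :=
  ∫ x in (0:ℝ)..(1:ℝ), 1 / Real.sqrt ((1 - x^2) * (1 - k^2 * x^2))

/-!
A rectangular lattice with periods `2` and `2iy` has `℘`-values `e₁ > e₂ > e₃` at its half periods.
With `m = (e₂ - e₃) / (e₁ - e₃)`, inverting `℘` along the real axis gives `√(e₁ - e₃) = K(m)`, and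
rotating the lattice by `i` then gives `y = K(1 - m) / K(m)`. The sixth derivative of `℘` at the
half period `1 + iy` is a polynomial in `e₂` and `g₂`, that is, a multiple of
`m (1 - m) (2 - 17 m (1 - m)) K(m)⁸`; it is also `5040 ∑ ((2p + 1) + (2q + 1)iy)⁻⁸`, which the
partial fractions of the cotangent turn into a sum over odd `n` of the seventh derivative of the
logistic function at `-nπy`. Legendre's relation gives `dy/dm = -π / (4 m (1 - m) K(m)²)`, so the
substitutions `m = 1 - k²` and then `y` turn the integral of `k (2 - 17k² + 17k⁴) K(k)⁶` into the
sixth moment of this sum, in which each odd `n` contributes a multiple of `n⁻⁷`.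
-/

section Calculus

open Set Filter Topology Interval

lemma hasDerivAt_intervalIntegral_of_continuousOn {𝕜 E : Type*} [RCLike 𝕜] [NormedAddCommGroup E]
    [NormedSpace ℝ E] [NormedSpace 𝕜 E] {F F' : 𝕜 → ℝ → E} {U : Set 𝕜} {x₀ : 𝕜} {a b : ℝ}
    (hU : IsOpen U) (hx₀ : x₀ ∈ U) (hF : ∀ x ∈ U, ContinuousOn (F x) [[a, b]])
    (hF' : ContinuousOn (fun p : 𝕜 × ℝ ↦ F' p.1 p.2) (U ×ˢ [[a, b]]))
    (hd : ∀ x ∈ U, ∀ t ∈ [[a, b]], HasDerivAt (F · t) (F' x t) x) :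
    HasDerivAt (fun x ↦ ∫ t in a..b, F x t) (∫ t in a..b, F' x₀ t) x₀ := by
  obtain ⟨r, hr, hball⟩ := Metric.nhds_basis_closedBall.mem_iff.1 (hU.mem_nhds hx₀)
  obtain ⟨C, hC⟩ := ((isCompact_closedBall x₀ r).prod isCompact_uIcc).exists_bound_of_continuousOn
    (hF'.mono (prod_mono_left hball))
  have hF'x₀ : ContinuousOn (F' x₀) [[a, b]] :=
    hF'.comp (f := fun t ↦ (x₀, t)) (by fun_prop) fun t ht ↦ ⟨hx₀, ht⟩
  have hmeas {g : ℝ → E} (hg : ContinuousOn g [[a, b]]) :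
      AEStronglyMeasurable g (volume.restrict (Ι a b)) :=
    (hg.mono uIoc_subset_uIcc).aestronglyMeasurable measurableSet_uIoc
  refine (intervalIntegral.hasDerivAt_integral_of_dominated_loc_of_deriv_le (bound := fun _ ↦ C)
    (Metric.closedBall_mem_nhds x₀ hr) ?_ (hF x₀ hx₀).intervalIntegrable (hmeas hF'x₀)
    ?_ (by simp) ?_).2
  · filter_upwards [hU.mem_nhds hx₀] with x hx using hmeas (hF x hx)
  · exact .of_forall fun t ht x hx ↦ hC (x, t) ⟨hx, uIoc_subset_uIcc ht⟩
  · exact .of_forall fun t ht x hx ↦ hd x (hball hx) t (uIoc_subset_uIcc ht)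

end Calculus

/-! ### Complete elliptic integrals -/

section EllipticIntegrals

open Set Filter Topology

/-- Legendre's `Δ(θ) = √(1 - m sin² θ)`, for the parameter `m = k²` (not the modulus `k`). -/
noncomputable def ellipticDelta (m θ : ℝ) : ℝ := √(1 - m * Real.sin θ ^ 2)

/-- The complete elliptic integral of the first kind, as a function of the parameter `m = k²`. -/
noncomputable def ellipticK (m : ℝ) : ℝ := ∫ θ in 0..π / 2, (ellipticDelta m θ)⁻¹

/-- The complete elliptic integral of the second kind, as a function of the parameter `m = k²`. -/
noncomputable def ellipticE (m : ℝ) : ℝ := ∫ θ in 0..π / 2, ellipticDelta m θ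

lemma one_sub_le_one_sub_mul_sin_sq {m c : ℝ} (hmc : m ≤ c) (hc : 0 ≤ c) (θ : ℝ) :
    1 - c ≤ 1 - m * Real.sin θ ^ 2 := by
  nlinarith [Real.sin_sq_le_one θ, sq_nonneg (Real.sin θ)]

lemma one_sub_mul_sin_sq_pos {m : ℝ} (hm : m < 1) (θ : ℝ) : 0 < 1 - m * Real.sin θ ^ 2 := by
  linarith [one_sub_le_one_sub_mul_sin_sq (le_max_left m 0) (le_max_right m 0) θ,
    max_lt hm zero_lt_one]

lemma ellipticDelta_pos {m : ℝ} (hm : m < 1) (θ : ℝ) : 0 < ellipticDelta m θ :=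
  Real.sqrt_pos.2 (one_sub_mul_sin_sq_pos hm θ)

lemma ellipticDelta_sq {m : ℝ} (hm : m < 1) (θ : ℝ) :
    ellipticDelta m θ ^ 2 = 1 - m * Real.sin θ ^ 2 :=
  Real.sq_sqrt (one_sub_mul_sin_sq_pos hm θ).le

lemma continuous_uncurry_ellipticDelta : Continuous fun p : ℝ × ℝ ↦ ellipticDelta p.1 p.2 := by
  unfold ellipticDelta
  fun_prop

lemma continuous_ellipticDelta (m : ℝ) : Continuous (ellipticDelta m) :=
  continuous_uncurry_ellipticDelta.comp (Continuous.prodMk_right m)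

lemma continuous_ellipticDelta_zpow {m : ℝ} (hm : m < 1) (n : ℤ) :
    Continuous fun θ ↦ ellipticDelta m θ ^ n :=
  (continuous_ellipticDelta m).zpow₀ n fun θ ↦ .inl (ellipticDelta_pos hm θ).ne'

lemma continuous_inv_ellipticDelta {m : ℝ} (hm : m < 1) :
    Continuous fun θ ↦ (ellipticDelta m θ)⁻¹ :=
  (continuous_ellipticDelta m).inv₀ fun θ ↦ (ellipticDelta_pos hm θ).ne'

lemma ellipticK_pos {m : ℝ} (hm : m < 1) : 0 < ellipticK m :=
  intervalIntegral.intervalIntegral_pos_of_pos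
    ((continuous_inv_ellipticDelta hm).intervalIntegrable _ _)
    (fun θ ↦ inv_pos.2 (ellipticDelta_pos hm θ)) Real.pi_div_two_pos

lemma sin_image_Ioo : Real.sin '' Ioo 0 (π / 2) = Ioo 0 1 := by
  ext x
  constructor
  · rintro ⟨θ, ⟨h0, h1⟩, rfl⟩
    refine ⟨Real.sin_pos_of_pos_of_lt_pi h0 (by linarith), ?_⟩
    rw [← Real.sin_pi_div_two]
    exact Real.sin_lt_sin_of_lt_of_le_pi_div_two (by linarith) le_rfl h1
  · rintro ⟨h0, h1⟩
    exact ⟨Real.arcsin x, ⟨Real.arcsin_pos.2 h0, Real.arcsin_lt_pi_div_two.2 h1⟩,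
      Real.sin_arcsin (by linarith) h1.le⟩

lemma EllK_eq_ellipticK (k : ℝ) : EllK k = ellipticK (k ^ 2) := by
  have hmono : MonotoneOn Real.sin (Ioo 0 (π / 2)) := Real.strictMonoOn_sin.monotoneOn.mono
    (Ioo_subset_Icc_self.trans (Icc_subset_Icc_left (by linarith [Real.pi_pos])))
  rw [EllK, ellipticK, intervalIntegral.integral_of_le zero_le_one,
    intervalIntegral.integral_of_le Real.pi_div_two_pos.le, integral_Ioc_eq_integral_Ioo,
    integral_Ioc_eq_integral_Ioo, ← sin_image_Ioo,
    integral_image_eq_integral_deriv_smul_of_monotoneOn measurableSet_Ioo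
      (fun θ _ ↦ (Real.hasDerivAt_sin θ).hasDerivWithinAt) hmono]
  refine setIntegral_congr_fun measurableSet_Ioo fun θ hθ ↦ ?_
  have hc : 0 < Real.cos θ := Real.cos_pos_of_mem_Ioo ⟨by linarith [hθ.1, Real.pi_pos], hθ.2⟩
  simp only [smul_eq_mul, ellipticDelta]
  rw [← Real.cos_sq', Real.sqrt_mul (sq_nonneg _), Real.sqrt_sq hc.le]
  field_simp

lemma hasDerivAt_ellipticDelta {m : ℝ} (hm : m < 1) (θ : ℝ) :
    HasDerivAt (ellipticDelta · θ) (-Real.sin θ ^ 2 / (2 * ellipticDelta m θ)) m := by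
  simpa [ellipticDelta] using (((hasDerivAt_id m).mul_const (Real.sin θ ^ 2)).const_sub 1).sqrt
    (one_sub_mul_sin_sq_pos hm θ).ne'

lemma hasDerivAt_ellipticDelta_zpow {m : ℝ} (hm : m < 1) (n : ℤ) (θ : ℝ) :
    HasDerivAt (fun m ↦ ellipticDelta m θ ^ n)
      (-(n / 2 * (Real.sin θ ^ 2 * ellipticDelta m θ ^ (n - 2)))) m := by
  have hΔ := (ellipticDelta_pos hm θ).ne'
  refine ((hasDerivAt_zpow n _ (.inl hΔ)).comp m (hasDerivAt_ellipticDelta hm θ)).congr_deriv ?_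
  rw [zpow_sub_one₀ hΔ, zpow_sub₀ hΔ, zpow_ofNat]
  field_simp

lemma hasDerivAt_integral_ellipticDelta_zpow {m : ℝ} (hm : m < 1) (n : ℤ) (a b : ℝ) :
    HasDerivAt (fun m ↦ ∫ θ in a..b, ellipticDelta m θ ^ n)
      (∫ θ in a..b, -(n / 2 * (Real.sin θ ^ 2 * ellipticDelta m θ ^ (n - 2)))) m := by
  refine hasDerivAt_intervalIntegral_of_continuousOn isOpen_Iio hm
    (fun x hx ↦ (continuous_ellipticDelta_zpow hx n).continuousOn) (fun p hp ↦ ?_)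
    fun x hx θ _ ↦ hasDerivAt_ellipticDelta_zpow hx n θ
  have hΔ := continuous_uncurry_ellipticDelta.continuousAt.zpow₀ (a := p) (n - 2)
    (.inl (ellipticDelta_pos hp.1 p.2).ne')
  exact ContinuousAt.continuousWithinAt (by fun_prop)

-- The parameter enters only through `m sin² θ = 1 - Δ²`.
lemma hasDerivAt_integral_ellipticDelta_zpow_of_ne_zero {m : ℝ} (h0 : m ≠ 0) (hm : m < 1) (n : ℤ)
    (a b : ℝ) :
    HasDerivAt (fun m ↦ ∫ θ in a..b, ellipticDelta m θ ^ n)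
      (n / (2 * m) * ((∫ θ in a..b, ellipticDelta m θ ^ n)
        - ∫ θ in a..b, ellipticDelta m θ ^ (n - 2))) m := by
  refine (hasDerivAt_integral_ellipticDelta_zpow hm n a b).congr_deriv ?_
  rw [← intervalIntegral.integral_sub ((continuous_ellipticDelta_zpow hm _).intervalIntegrable _ _)
    ((continuous_ellipticDelta_zpow hm _).intervalIntegrable _ _),
    ← intervalIntegral.integral_const_mul]
  refine intervalIntegral.integral_congr fun θ _ ↦ ?_
  have hΔ := (ellipticDelta_pos hm θ).ne'
  have hsin : Real.sin θ ^ 2 = (1 - ellipticDelta m θ ^ 2) / m := by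
    rw [ellipticDelta_sq hm, sub_sub_cancel, mul_div_cancel_left₀ _ h0]
  simp only [hsin, zpow_sub₀ hΔ, zpow_ofNat]
  field_simp
  ring

lemma hasDerivAt_sin_mul_cos_div_ellipticDelta {m : ℝ} (hm : m < 1) (θ : ℝ) :
    HasDerivAt (fun θ ↦ m * (Real.sin θ * Real.cos θ / ellipticDelta m θ))
      (ellipticDelta m θ - (1 - m) * ellipticDelta m θ ^ (-3 : ℤ)) θ := by
  have hΔ := (ellipticDelta_pos hm θ).ne'
  have hΔ' : HasDerivAt (ellipticDelta m)
      (-(m * (2 * Real.sin θ * Real.cos θ)) / (2 * ellipticDelta m θ)) θ := by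
    have h := ((((Real.hasDerivAt_sin θ).pow 2).const_mul m).const_sub 1).sqrt
      (one_sub_mul_sin_sq_pos hm θ).ne'
    simp only [Nat.cast_ofNat, Nat.add_one_sub_one, pow_one] at h
    exact h
  refine ((((Real.hasDerivAt_sin θ).mul (Real.hasDerivAt_cos θ)).div hΔ' hΔ).const_mul
    m).congr_deriv ?_
  simp only [Pi.mul_apply, zpow_neg, zpow_ofNat]
  have hsq := ellipticDelta_sq hm θ
  have hcos := Real.cos_sq' θ
  field_simp
  grind

lemma integral_ellipticDelta_zpow_neg_three {m : ℝ} (hm : m < 1) :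
    ∫ θ in 0..π / 2, ellipticDelta m θ ^ (-3 : ℤ) = ellipticE m / (1 - m) := by
  have hΔ := (continuous_ellipticDelta m).intervalIntegrable (μ := volume) 0 (π / 2)
  have hΔ3 := ((continuous_ellipticDelta_zpow hm (-3)).const_mul (1 - m)).intervalIntegrable
    (μ := volume) 0 (π / 2)
  have h := intervalIntegral.integral_eq_sub_of_hasDerivAt
    (fun θ _ ↦ hasDerivAt_sin_mul_cos_div_ellipticDelta hm θ) (hΔ.sub hΔ3)
  rw [intervalIntegral.integral_sub hΔ hΔ3, intervalIntegral.integral_const_mul,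
    Real.cos_pi_div_two, Real.sin_zero, mul_zero, zero_mul, zero_div, zero_div, mul_zero,
    sub_zero, ← ellipticE] at h
  rw [eq_div_iff (sub_pos.2 hm).ne']
  linarith

lemma hasDerivAt_ellipticE {m : ℝ} (h0 : m ≠ 0) (hm : m < 1) :
    HasDerivAt ellipticE ((ellipticE m - ellipticK m) / (2 * m)) m := by
  have h := hasDerivAt_integral_ellipticDelta_zpow_of_ne_zero h0 hm 1 0 (π / 2)
  simp only [zpow_one, Int.cast_one, Int.reduceSub, zpow_neg_one] at h
  exact h.congr_deriv (by rw [ellipticE, ellipticK]; ring)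

lemma hasDerivAt_ellipticK {m : ℝ} (h0 : m ≠ 0) (hm : m < 1) :
    HasDerivAt ellipticK ((ellipticE m - (1 - m) * ellipticK m) / (2 * m * (1 - m))) m := by
  have h := hasDerivAt_integral_ellipticDelta_zpow_of_ne_zero h0 hm (-1) 0 (π / 2)
  simp only [zpow_neg_one, Int.reduceSub, integral_ellipticDelta_zpow_neg_three hm] at h
  refine h.congr_deriv ?_
  have hm' : 1 - m ≠ 0 := (sub_pos.2 hm).ne'
  rw [← ellipticK]
  push_cast
  field_simp
  ring

lemma continuous_ellipticE : Continuous ellipticE :=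
  intervalIntegral.continuous_parametric_intervalIntegral_of_continuous'
    continuous_uncurry_ellipticDelta _ _

lemma continuousAt_ellipticK {m : ℝ} (hm : m < 1) : ContinuousAt ellipticK m := by
  have h := (hasDerivAt_integral_ellipticDelta_zpow hm (-1) 0 (π / 2)).continuousAt
  simp only [zpow_neg_one] at h
  exact h

lemma ellipticK_zero : ellipticK 0 = π / 2 := by simp [ellipticK, ellipticDelta]

lemma ellipticE_one : ellipticE 1 = 1 := by
  have h : ellipticE 1 = ∫ θ in 0..π / 2, Real.cos θ := by
    refine intervalIntegral.integral_congr fun θ hθ ↦ ?_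
    rw [uIcc_of_le Real.pi_div_two_pos.le] at hθ
    simp only [ellipticDelta, one_mul]
    rw [← Real.cos_sq', Real.sqrt_sq (Real.cos_nonneg_of_mem_Icc
      ⟨by linarith [hθ.1, Real.pi_pos], hθ.2⟩)]
  rw [h, integral_cos, Real.sin_pi_div_two, Real.sin_zero, sub_zero]

lemma ellipticK_le {m : ℝ} (h0 : 0 ≤ m) (hm : m < 1) : ellipticK m ≤ π / 2 * (√(1 - m))⁻¹ := by
  have h : ellipticK m ≤ ∫ _ in 0..π / 2, (√(1 - m))⁻¹ := by
    refine intervalIntegral.integral_mono_on Real.pi_div_two_pos.le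
      ((continuous_inv_ellipticDelta hm).intervalIntegrable _ _) (by simp) fun θ _ ↦ ?_
    exact inv_anti₀ (Real.sqrt_pos.2 (by linarith))
      (Real.sqrt_le_sqrt (one_sub_le_one_sub_mul_sin_sq le_rfl h0 θ))
  simpa using h

lemma abs_ellipticE_sub_ellipticK_le {m : ℝ} (h0 : 0 ≤ m) (hm : m < 1) :
    |ellipticE m - ellipticK m| ≤ m * ellipticK m := by
  have hE := (continuous_ellipticDelta m).intervalIntegrable (μ := volume) 0 (π / 2)
  have hK := (continuous_inv_ellipticDelta hm).intervalIntegrable (μ := volume) 0 (π / 2)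
  rw [abs_sub_comm, ellipticE, ellipticK, ← intervalIntegral.integral_sub hK hE,
    ← intervalIntegral.integral_const_mul]
  refine (intervalIntegral.abs_integral_le_integral_abs Real.pi_div_two_pos.le).trans
    (intervalIntegral.integral_mono_on Real.pi_div_two_pos.le (hK.sub hE).abs
      (hK.const_mul m) fun θ _ ↦ ?_)
  have hΔ := ellipticDelta_pos hm θ
  have hsub : (ellipticDelta m θ)⁻¹ - ellipticDelta m θ
      = m * Real.sin θ ^ 2 * (ellipticDelta m θ)⁻¹ := by
    field_simp
    rw [ellipticDelta_sq hm]
    ring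
  rw [hsub, abs_of_nonneg (by positivity)]
  gcongr
  exact mul_le_of_le_one_right h0 (Real.sin_sq_le_one θ)

/-- The left-hand side `E' K + E K' - K K'` of Legendre's relation, where a prime denotes
the complementary parameter `1 - m`. -/
noncomputable def legendreExpr (m : ℝ) : ℝ :=
  ellipticE (1 - m) * ellipticK m + ellipticE m * ellipticK (1 - m)
    - ellipticK m * ellipticK (1 - m)

lemma hasDerivAt_legendreExpr {m : ℝ} (h0 : 0 < m) (hm : m < 1) :
    HasDerivAt legendreExpr 0 m := by
  have hm' : 0 < 1 - m := sub_pos.2 hm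
  have hK := hasDerivAt_ellipticK h0.ne' hm
  have hE := hasDerivAt_ellipticE h0.ne' hm
  have hcompl := (hasDerivAt_id m).const_sub 1
  have hK' := (hasDerivAt_ellipticK (m := 1 - m) hm'.ne' (by linarith)).comp m hcompl
  have hE' := (hasDerivAt_ellipticE (m := 1 - m) hm'.ne' (by linarith)).comp m hcompl
  refine (((hE'.mul hK).add (hE.mul hK')).sub (hK.mul hK')).congr_deriv ?_
  simp only [Function.comp_apply, sub_sub_cancel]
  field_simp
  ring

lemma tendsto_sub_mul_ellipticK_one_sub :
    Tendsto (fun m ↦ (ellipticE m - ellipticK m) * ellipticK (1 - m)) (𝓝[>] 0) (𝓝 0) := by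
  have hbound : Tendsto (fun m ↦ √m * ellipticK m * (π / 2)) (𝓝[>] 0) (𝓝 0) := by
    have hK := (continuousAt_ellipticK zero_lt_one).tendsto
    have hsqrt : Tendsto Real.sqrt (𝓝 0) (𝓝 0) := by simpa using Real.continuous_sqrt.tendsto 0
    simpa using ((hsqrt.mul hK).mul_const (π / 2)).mono_left nhdsWithin_le_nhds
  refine squeeze_zero_norm' ?_ hbound
  filter_upwards [Ioo_mem_nhdsGT zero_lt_one] with m ⟨h0, hm⟩
  have hK' := ellipticK_le (m := 1 - m) (by linarith) (by linarith)
  have hK'pos := ellipticK_pos (m := 1 - m) (by linarith)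
  rw [sub_sub_cancel] at hK'
  rw [norm_mul, Real.norm_eq_abs, Real.norm_eq_abs, abs_of_pos hK'pos]
  calc |ellipticE m - ellipticK m| * ellipticK (1 - m)
      ≤ m * ellipticK m * (π / 2 * (√m)⁻¹) :=
        mul_le_mul (abs_ellipticE_sub_ellipticK_le h0.le hm) hK' hK'pos.le
          (mul_nonneg h0.le (ellipticK_pos hm).le)
    _ = √m * ellipticK m * (π / 2) := by
        have := Real.sqrt_pos.2 h0
        field_simp
        rw [Real.sq_sqrt h0.le, mul_comm]

lemma tendsto_legendreExpr : Tendsto legendreExpr (𝓝[>] 0) (𝓝 (π / 2)) := by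
  have hK : Tendsto ellipticK (𝓝[>] 0) (𝓝 (π / 2)) := by
    rw [← ellipticK_zero]
    exact (continuousAt_ellipticK zero_lt_one).tendsto.mono_left nhdsWithin_le_nhds
  have hE : Tendsto (fun m ↦ ellipticE (1 - m)) (𝓝[>] 0) (𝓝 1) := by
    have : ContinuousAt (fun m ↦ ellipticE (1 - m)) 0 :=
      (continuous_ellipticE.comp (continuous_const.sub continuous_id)).continuousAt
    simpa [ContinuousAt, ellipticE_one] using this.tendsto.mono_left nhdsWithin_le_nhds
  have h := (hE.mul hK).add tendsto_sub_mul_ellipticK_one_sub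
  rw [one_mul, add_zero] at h
  exact h.congr fun m ↦ by rw [legendreExpr]; ring

theorem legendre_relation {m : ℝ} (h0 : 0 < m) (hm : m < 1) : legendreExpr m = π / 2 := by
  have hconst : ∀ x ∈ Ioo (0 : ℝ) 1, legendreExpr x = legendreExpr m := fun x hx ↦
    isOpen_Ioo.is_const_of_deriv_eq_zero isPreconnected_Ioo
      (fun z hz ↦ (hasDerivAt_legendreExpr hz.1 hz.2).differentiableAt.differentiableWithinAt)
      (fun z hz ↦ (hasDerivAt_legendreExpr hz.1 hz.2).deriv) hx ⟨h0, hm⟩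
  refine tendsto_nhds_unique (tendsto_const_nhds.congr' ?_) tendsto_legendreExpr
  filter_upwards [Ioo_mem_nhdsGT zero_lt_one] with x hx using (hconst x hx).symm

/-- The ratio `K'(m) / K(m)` of the quarter periods; it parametrises the shapes of rectangular
lattices. -/
noncomputable def periodRatio (m : ℝ) : ℝ := ellipticK (1 - m) / ellipticK m

lemma hasDerivAt_periodRatio {m : ℝ} (h0 : 0 < m) (hm : m < 1) :
    HasDerivAt periodRatio (-(π / (4 * (m * (1 - m)) * ellipticK m ^ 2))) m := by
  have hm' : 0 < 1 - m := sub_pos.2 hm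
  have hcompl := (hasDerivAt_id m).const_sub 1
  have hK' := (hasDerivAt_ellipticK (m := 1 - m) hm'.ne' (by linarith)).comp m hcompl
  have hK := ellipticK_pos hm
  refine (hK'.div (hasDerivAt_ellipticK h0.ne' hm) hK.ne').congr_deriv ?_
  have hL := legendre_relation h0 hm
  simp only [Function.comp_apply, sub_sub_cancel]
  rw [show π = 2 * (π / 2) by ring, ← hL, legendreExpr]
  field_simp
  ring

lemma strictAntiOn_periodRatio : StrictAntiOn periodRatio (Ioo 0 1) := by
  refine strictAntiOn_of_deriv_neg (convex_Ioo 0 1)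
    (fun m hm ↦ (hasDerivAt_periodRatio hm.1 hm.2).continuousAt.continuousWithinAt) fun m hm ↦ ?_
  rw [interior_Ioo] at hm
  rw [(hasDerivAt_periodRatio hm.1 hm.2).deriv, neg_lt_zero]
  have := ellipticK_pos hm.2
  have := mul_pos hm.1 (sub_pos.2 hm.2)
  positivity

end EllipticIntegrals

/-! ### The Weierstrass function of an arbitrary lattice -/

section Weierstrass

open Set Filter Topology ComplexConjugate Polynomial
open scoped PeriodPair

lemma eventuallyEq_of_iteratedDeriv_eq {𝕜 E : Type*} [NontriviallyNormedField 𝕜] [CharZero 𝕜]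
    [NormedAddCommGroup E] [NormedSpace 𝕜 E] [CompleteSpace E] {f g : 𝕜 → E} {z₀ : 𝕜}
    (hf : AnalyticAt 𝕜 f z₀) (hg : AnalyticAt 𝕜 g z₀)
    (h : ∀ n, iteratedDeriv n f z₀ = iteratedDeriv n g z₀) : f =ᶠ[𝓝 z₀] g := by
  have htop : analyticOrderAt (f - g) z₀ = ⊤ := ENat.eq_top_iff_forall_ge.2 fun n ↦
    (natCast_le_analyticOrderAt_iff_iteratedDeriv_eq_zero (hf.sub hg)).2 fun i _ ↦ by
      rw [iteratedDeriv_sub hf.contDiffAt hg.contDiffAt, h, sub_self]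
  filter_upwards [analyticOrderAt_eq_top.1 htop] with z hz using sub_eq_zero.1 hz

variable (L : PeriodPair)

lemma isOpen_compl_lattice : IsOpen (L.latticeᶜ : Set ℂ) := L.isClosed_lattice.isOpen_compl

lemma countable_lattice : (L.lattice : Set ℂ).Countable :=
  countable_coe_iff.1 L.latticeEquivProd.injective.countable

lemma eventually_notMem_lattice (z : ℂ) : ∀ᶠ w in 𝓝[≠] z, w ∉ L.lattice := by
  filter_upwards [nhdsWithin_le_nhds (L.compl_lattice_sdiff_singleton_mem_nhds z),
    self_mem_nhdsWithin] with w hw hne hL using hw ⟨hL, hne⟩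

lemma isPreconnected_compl_of_countable {s : Set ℂ} (hs : s.Countable) : IsPreconnected sᶜ :=
  (hs.isConnected_compl_of_one_lt_rank (by simp [Complex.rank_real_complex])).isPreconnected

lemma tendsto_norm_weierstrassP {l : ℂ} (hl : l ∈ L.lattice) :
    Tendsto (fun z ↦ ‖℘[L] z‖) (𝓝[≠] l) atTop := by
  rw [tendsto_norm_atTop_iff_cobounded,
    tendsto_cobounded_iff_meromorphicOrderAt_neg (L.meromorphic_weierstrassP l),
    L.order_weierstrassP l hl]
  decide

variable {L} in
lemma hasDerivAt_weierstrassP {z : ℂ} (hz : z ∉ L.lattice) : HasDerivAt ℘[L] (℘'[L] z) z := by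
  rw [← L.deriv_weierstrassP]
  exact (L.differentiableOn_weierstrassP.differentiableAt
    ((isOpen_compl_lattice L).mem_nhds hz)).hasDerivAt

lemma exists_derivWeierstrassP_ne_zero : ∃ z ∉ L.lattice, ℘'[L] z ≠ 0 := by
  by_contra! h
  obtain ⟨w, hw⟩ := (eventually_notMem_lattice L 0).exists
  have hconst : ∀ z ∉ L.lattice, ℘[L] z = ℘[L] w := fun z hz ↦
    (isOpen_compl_lattice L).is_const_of_deriv_eq_zero
      (isPreconnected_compl_of_countable (countable_lattice L)) L.differentiableOn_weierstrassP
      (fun z hz ↦ by rw [L.deriv_weierstrassP, h z hz, Pi.zero_apply]) hz hw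
  refine not_tendsto_nhds_of_tendsto_atTop (tendsto_norm_weierstrassP L (zero_mem _)) ‖℘[L] w‖
    (tendsto_const_nhds.congr' ?_)
  filter_upwards [eventually_notMem_lattice L 0] with z hz
  rw [hconst z hz]

-- Differentiating `℘'² = 4 ℘³ - g₂ ℘ - g₃` gives `2 ℘' (℘'' - 6 ℘² + g₂ / 2) = 0`, and the ring of
-- analytic functions on a connected open set has no zero divisors.
variable {L} in
lemma hasDerivAt_derivWeierstrassP {z : ℂ} (hz : z ∉ L.lattice) :
    HasDerivAt ℘'[L] (6 * ℘[L] z ^ 2 - L.g₂ / 2) z := by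
  have hderiv : ∀ w ∉ L.lattice, HasDerivAt ℘'[L] (deriv ℘'[L] w) w := fun w hw ↦
    (L.differentiableOn_derivWeierstrassP.differentiableAt
      ((isOpen_compl_lattice L).mem_nhds hw)).hasDerivAt
  let F : ℂ → ℂ := fun w ↦ deriv ℘'[L] w - (6 * ℘[L] w ^ 2 - L.g₂ / 2)
  have hF : AnalyticOnNhd ℂ F (L.latticeᶜ : Set ℂ) := L.analyticOnNhd_derivWeierstrassP.deriv.sub
    ((analyticOnNhd_const.mul (L.analyticOnNhd_weierstrassP.pow 2)).sub analyticOnNhd_const)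
  have hmul : ∀ w ∈ (L.latticeᶜ : Set ℂ), ℘'[L] w * F w = 0 := by
    intro w hw
    have hP := hasDerivAt_weierstrassP hw
    have hcubic := (((hP.pow 3).const_mul 4).sub (hP.const_mul L.g₂)).sub_const L.g₃
    have hode : ℘'[L] ^ 2 =ᶠ[𝓝 w] fun z ↦ 4 * ℘[L] z ^ 3 - L.g₂ * ℘[L] z - L.g₃ := by
      filter_upwards [(isOpen_compl_lattice L).mem_nhds hw] with z hz
      exact L.derivWeierstrassP_sq z hz
    have h := ((hderiv w hw).pow 2).unique (hcubic.congr_of_eventuallyEq hode)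
    simp only [Nat.cast_ofNat, Nat.add_one_sub_one, pow_one] at h
    linear_combination h / 2
  obtain ⟨w, hw, hw0⟩ := exists_derivWeierstrassP_ne_zero L
  have hzero := (L.analyticOnNhd_derivWeierstrassP.eq_zero_or_eq_zero_of_mul_eq_zero hF hmul
    (isPreconnected_compl_of_countable (countable_lattice L))).resolve_left fun h ↦ hw0 (h w hw)
  exact (hderiv z hz).congr_deriv (sub_eq_zero.1 (hzero z hz))

/-- The operator `D` on polynomials with `(p ∘ ℘)'' = D p ∘ ℘`, so that the even derivatives of `℘`
are the polynomials `D^[n] X` in `℘`. -/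
noncomputable def weierstrassPDerivOp (p : ℂ[X]) : ℂ[X] :=
  (4 * X ^ 3 - C L.g₂ * X - C L.g₃) * derivative (derivative p)
    + (6 * X ^ 2 - C (L.g₂ / 2)) * derivative p

variable {L}

lemma hasDerivAt_eval_weierstrassP (p : ℂ[X]) {z : ℂ} (hz : z ∉ L.lattice) :
    HasDerivAt (fun z ↦ p.eval (℘[L] z)) ((derivative p).eval (℘[L] z) * ℘'[L] z) z :=
  (p.hasDerivAt _).comp z (hasDerivAt_weierstrassP hz)

lemma hasDerivAt_eval_derivative_mul_derivWeierstrassP (p : ℂ[X]) {z : ℂ} (hz : z ∉ L.lattice) :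
    HasDerivAt (fun z ↦ (derivative p).eval (℘[L] z) * ℘'[L] z)
      ((weierstrassPDerivOp L p).eval (℘[L] z)) z := by
  refine ((hasDerivAt_eval_weierstrassP (derivative p) hz).mul
    (hasDerivAt_derivWeierstrassP hz)).congr_deriv ?_
  simp only [weierstrassPDerivOp, eval_add, eval_mul, eval_sub, eval_pow, eval_X, eval_C,
    eval_ofNat]
  linear_combination (derivative (derivative p)).eval (℘[L] z) * L.derivWeierstrassP_sq z hz

lemma iteratedDeriv_succ_of_eqOn_compl_lattice {n : ℕ} {f G : ℂ → ℂ} {g' z : ℂ}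
    (h : ∀ z ∉ L.lattice, iteratedDeriv n f z = G z) (hz : z ∉ L.lattice)
    (hG : HasDerivAt G g' z) : iteratedDeriv (n + 1) f z = g' := by
  have hev : iteratedDeriv n f =ᶠ[𝓝 z] G := by
    filter_upwards [(isOpen_compl_lattice L).mem_nhds hz] with w hw using h w hw
  rw [iteratedDeriv_succ, hev.deriv_eq, hG.deriv]

lemma iteratedDeriv_two_mul_weierstrassP (n : ℕ) : ∀ z ∉ L.lattice,
    iteratedDeriv (2 * n) ℘[L] z = ((weierstrassPDerivOp L)^[n] X).eval (℘[L] z) := by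
  induction n with
  | zero => simp
  | succ n ih =>
    intro z hz
    rw [Function.iterate_succ_apply']
    exact iteratedDeriv_succ_of_eqOn_compl_lattice
      (fun z hz ↦ iteratedDeriv_succ_of_eqOn_compl_lattice ih hz
        (hasDerivAt_eval_weierstrassP _ hz)) hz
      (hasDerivAt_eval_derivative_mul_derivWeierstrassP _ hz)

lemma iteratedDeriv_two_mul_add_one_weierstrassP (n : ℕ) {z : ℂ} (hz : z ∉ L.lattice) :
    iteratedDeriv (2 * n + 1) ℘[L] z
      = (derivative ((weierstrassPDerivOp L)^[n] X)).eval (℘[L] z) * ℘'[L] z :=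
  iteratedDeriv_succ_of_eqOn_compl_lattice (iteratedDeriv_two_mul_weierstrassP n) hz
    (hasDerivAt_eval_weierstrassP _ hz)

lemma iteratedDeriv_weierstrassP_congr {z w : ℂ} (hz : z ∉ L.lattice) (hw : w ∉ L.lattice)
    (h : ℘[L] z = ℘[L] w) (h' : ℘'[L] z = ℘'[L] w) (n : ℕ) :
    iteratedDeriv n ℘[L] z = iteratedDeriv n ℘[L] w := by
  obtain ⟨k, rfl | rfl⟩ := n.even_or_odd'
  · rw [iteratedDeriv_two_mul_weierstrassP k z hz, iteratedDeriv_two_mul_weierstrassP k w hw, h]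
  · rw [iteratedDeriv_two_mul_add_one_weierstrassP k hz,
      iteratedDeriv_two_mul_add_one_weierstrassP k hw, h, h']

lemma mem_lattice_of_weierstrassP_add_eq {d : ℂ}
    (h : ∀ u, u ∉ L.lattice → d + u ∉ L.lattice → ℘[L] u = ℘[L] (d + u)) : d ∈ L.lattice := by
  by_contra hd
  have hcont : Continuous fun u ↦ d + u := by fun_prop
  have hlim : Tendsto (fun u ↦ ‖℘[L] (d + u)‖) (𝓝[≠] 0) (𝓝 ‖℘[L] d‖) := by
    have hP : ContinuousAt ℘[L] (d + 0) :=
      (hasDerivAt_weierstrassP (by rwa [add_zero])).continuousAt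
    simpa [Function.comp_def] using
      (hP.tendsto.comp (hcont.tendsto 0)).norm.mono_left nhdsWithin_le_nhds
  refine not_tendsto_nhds_of_tendsto_atTop (tendsto_norm_weierstrassP L (zero_mem _)) _
    (hlim.congr' ?_)
  have hd0 : ∀ᶠ u in 𝓝[≠] (0 : ℂ), d + u ∉ L.lattice := nhdsWithin_le_nhds
    ((hcont.tendsto 0).eventually ((isOpen_compl_lattice L).mem_nhds (by simpa using hd)))
  filter_upwards [eventually_notMem_lattice L 0, hd0] with u hu hdu
  rw [h u hu hdu]

-- All derivatives of `℘` agree at `z` and `w`, so `℘` is invariant under translation by `w - z`.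
theorem sub_mem_lattice_of_weierstrassP_eq {z w : ℂ} (hz : z ∉ L.lattice) (hw : w ∉ L.lattice)
    (h : ℘[L] z = ℘[L] w) (h' : ℘'[L] z = ℘'[L] w) : w - z ∈ L.lattice := by
  set s : Set ℂ := L.lattice ∪ (fun u ↦ w - z + u) ⁻¹' L.lattice
  have hsc : s.Countable := (countable_lattice L).union
    ((countable_lattice L).preimage (add_right_injective _))
  have hshift : AnalyticOnNhd ℂ (fun u ↦ ℘[L] (w - z + u)) sᶜ := fun u hu ↦
    (L.analyticOnNhd_weierstrassP _ fun hL ↦ hu (.inr hL)).comp (by fun_prop)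
  have hzs : z ∈ sᶜ := by
    rintro (hL | hL)
    · exact hz hL
    · exact hw (by simpa using hL)
  have hloc : ℘[L] =ᶠ[𝓝 z] fun u ↦ ℘[L] (w - z + u) :=
    eventuallyEq_of_iteratedDeriv_eq (L.analyticOnNhd_weierstrassP z hz) (hshift z hzs) fun n ↦ by
      rw [iteratedDeriv_comp_const_add]
      simp only [sub_add_cancel]
      exact iteratedDeriv_weierstrassP_congr hz hw h h' n
  have heq : EqOn ℘[L] (fun u ↦ ℘[L] (w - z + u)) sᶜ :=
    (L.analyticOnNhd_weierstrassP.mono (compl_subset_compl.2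
      subset_union_left)).eqOn_of_preconnected_of_eventuallyEq hshift
      (isPreconnected_compl_of_countable hsc) hzs hloc
  exact mem_lattice_of_weierstrassP_add_eq fun u hu hu' ↦ heq fun hus ↦ hus.elim hu hu'

lemma derivWeierstrassP_eq_zero_of_two_mul_mem {z : ℂ} (h : 2 * z ∈ L.lattice) :
    ℘'[L] z = 0 := by
  have hper := L.derivWeierstrassP_add_coe (-z) ⟨_, h⟩
  rw [show -z + 2 * z = z by ring, L.derivWeierstrassP_neg] at hper
  exact CharZero.eq_neg_self_iff.1 hper

lemma derivWeierstrassP_eq_zero_iff {z : ℂ} (hz : z ∉ L.lattice) :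
    ℘'[L] z = 0 ↔ 2 * z ∈ L.lattice := by
  refine ⟨fun h ↦ ?_, derivWeierstrassP_eq_zero_of_two_mul_mem⟩
  have hmem := sub_mem_lattice_of_weierstrassP_eq (z := -z) (by rwa [neg_mem_iff]) hz
    (L.weierstrassP_neg z) (by rw [L.derivWeierstrassP_neg, h, neg_zero])
  rwa [sub_neg_eq_add, ← two_mul] at hmem

lemma weierstrassP_ne_of_two_mul_mem {z w : ℂ} (hz : z ∉ L.lattice) (hw : w ∉ L.lattice)
    (hz2 : 2 * z ∈ L.lattice) (hw2 : 2 * w ∈ L.lattice) (hzw : w - z ∉ L.lattice) :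
    ℘[L] z ≠ ℘[L] w := fun h ↦
  hzw (sub_mem_lattice_of_weierstrassP_eq hz hw h (by
    rw [derivWeierstrassP_eq_zero_of_two_mul_mem hz2,
      derivWeierstrassP_eq_zero_of_two_mul_mem hw2]))

lemma iteratedDeriv_weierstrassP_eq_sumInvPow {z : ℂ} (hz : z ∉ L.lattice) {n : ℕ} (hn : n ≠ 0) :
    iteratedDeriv n ℘[L] z = (n + 1).factorial * L.sumInvPow z (n + 2) := by
  obtain ⟨r, hr0, hr⟩ :=
    Metric.nhds_basis_closedBall.mem_iff.1 ((isOpen_compl_lattice L).mem_nhds hz)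
  lift r to NNReal using hr0.le
  have hseries := (L.hasFPowerSeriesOnBall_weierstrassP z r (mod_cast hr0) hr).hasFPowerSeriesAt
  have hcoeff := congrArg (fun p ↦ p.coeff n)
    ((L.analyticOnNhd_weierstrassP z hz).hasFPowerSeriesAt.eq_formalMultilinearSeries hseries)
  simp only [FormalMultilinearSeries.coeff_ofScalars, PeriodPair.weierstrassPSeries, hn,
    if_false] at hcoeff
  rw [div_eq_iff (mod_cast n.factorial_ne_zero)] at hcoeff
  rw [hcoeff, Nat.factorial_succ]
  push_cast
  ring

lemma weierstrassP_mul {L L' : PeriodPair} {c : ℂ} (hc : c ≠ 0)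
    (h : ∀ l, c * l ∈ L'.lattice ↔ l ∈ L.lattice) (z : ℂ) :
    ℘[L'] (c * z) = (c ^ 2)⁻¹ * ℘[L] z := by
  let e : L.lattice ≃ L'.lattice := (Equiv.mulLeft₀ c hc).subtypeEquiv fun l ↦ (h l).symm
  simp only [PeriodPair.weierstrassP]
  rw [← e.tsum_eq, ← tsum_mul_left]
  refine tsum_congr fun l ↦ ?_
  have he : (e l : ℂ) = c * l := rfl
  rw [he, ← mul_sub, mul_pow, mul_pow]
  simp only [one_div, mul_inv]
  ring

lemma weierstrassP_conj {L L' : PeriodPair} (h : ∀ l, conj l ∈ L'.lattice ↔ l ∈ L.lattice) (z : ℂ) :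
    ℘[L'] (conj z) = conj (℘[L] z) := by
  let e : L.lattice ≃ L'.lattice := (starRingAut (R := ℂ)).toEquiv.subtypeEquiv fun l ↦ (h l).symm
  simp only [PeriodPair.weierstrassP]
  rw [← e.tsum_eq, Complex.conj_tsum]
  refine tsum_congr fun l ↦ ?_
  have he : (e l : ℂ) = conj (l : ℂ) := rfl
  simp [he]

lemma derivWeierstrassP_conj {L L' : PeriodPair} (h : ∀ l, conj l ∈ L'.lattice ↔ l ∈ L.lattice)
    (z : ℂ) : ℘'[L'] (conj z) = conj (℘'[L] z) := by
  have hL' : ℘[L'] = conj ∘ ℘[L] ∘ conj := funext fun w ↦ by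
    simpa using weierstrassP_conj h (conj w)
  rw [← L.deriv_weierstrassP, ← L'.deriv_weierstrassP, hL', deriv_conj_conj]
  simp only [Function.comp_apply, Complex.conj_conj]

end Weierstrass

section HalfPeriods

open Polynomial
open scoped PeriodPair

variable (L : PeriodPair)

/-- The value `e₁` of `℘` at the half period `ω₁ / 2`. -/
noncomputable def weierstrassE₁ : ℂ := ℘[L] (L.ω₁ / 2)

/-- The value `e₂` of `℘` at the half period `(ω₁ + ω₂) / 2`. For a rectangular lattice this is the
middle one of the three half-period values. -/
noncomputable def weierstrassE₂ : ℂ := ℘[L] ((L.ω₁ + L.ω₂) / 2)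

/-- The value `e₃` of `℘` at the half period `ω₂ / 2`. -/
noncomputable def weierstrassE₃ : ℂ := ℘[L] (L.ω₂ / 2)

lemma ω₁_add_ω₂_div_two_notMem_lattice : (L.ω₁ + L.ω₂) / 2 ∉ L.lattice := by
  have h := L.mul_ω₁_add_mul_ω₂_mem_lattice (α := 1 / 2) (β := 1 / 2)
  rw [show ((1 / 2 : ℚ) : ℂ) * L.ω₁ + (1 / 2 : ℚ) * L.ω₂ = (L.ω₁ + L.ω₂) / 2 by
    push_cast; ring] at h
  rw [h]
  norm_num

lemma two_mul_ω₁_div_two_mem_lattice : 2 * (L.ω₁ / 2) ∈ L.lattice := by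
  rw [mul_div_cancel₀ _ two_ne_zero]
  exact L.ω₁_mem_lattice

lemma two_mul_ω₂_div_two_mem_lattice : 2 * (L.ω₂ / 2) ∈ L.lattice := by
  rw [mul_div_cancel₀ _ two_ne_zero]
  exact L.ω₂_mem_lattice

lemma two_mul_ω₁_add_ω₂_div_two_mem_lattice : 2 * ((L.ω₁ + L.ω₂) / 2) ∈ L.lattice := by
  rw [mul_div_cancel₀ _ two_ne_zero]
  exact add_mem L.ω₁_mem_lattice L.ω₂_mem_lattice

lemma weierstrassE₁_ne_weierstrassE₂ : weierstrassE₁ L ≠ weierstrassE₂ L :=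
  weierstrassP_ne_of_two_mul_mem L.ω₁_div_two_notMem_lattice (ω₁_add_ω₂_div_two_notMem_lattice L)
    (two_mul_ω₁_div_two_mem_lattice L) (two_mul_ω₁_add_ω₂_div_two_mem_lattice L) <| by
    rw [← sub_div, add_sub_cancel_left]
    exact L.ω₂_div_two_notMem_lattice

lemma weierstrassE₃_ne_weierstrassE₂ : weierstrassE₃ L ≠ weierstrassE₂ L :=
  weierstrassP_ne_of_two_mul_mem L.ω₂_div_two_notMem_lattice (ω₁_add_ω₂_div_two_notMem_lattice L)
    (two_mul_ω₂_div_two_mem_lattice L) (two_mul_ω₁_add_ω₂_div_two_mem_lattice L) <| by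
    rw [← sub_div, add_sub_cancel_right]
    exact L.ω₁_div_two_notMem_lattice

lemma weierstrassE₁_ne_weierstrassE₃ : weierstrassE₁ L ≠ weierstrassE₃ L :=
  weierstrassP_ne_of_two_mul_mem L.ω₁_div_two_notMem_lattice L.ω₂_div_two_notMem_lattice
    (two_mul_ω₁_div_two_mem_lattice L) (two_mul_ω₂_div_two_mem_lattice L) fun h ↦
    ω₁_add_ω₂_div_two_notMem_lattice L <| by
      convert add_mem h L.ω₁_mem_lattice using 1
      ring

lemma weierstrass_cubic_eq_zero_of_two_mul_mem {L : PeriodPair} {z : ℂ} (hz : z ∉ L.lattice)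
    (h : 2 * z ∈ L.lattice) : 4 * ℘[L] z ^ 3 - L.g₂ * ℘[L] z - L.g₃ = 0 := by
  rw [← L.derivWeierstrassP_sq z hz, derivWeierstrassP_eq_zero_of_two_mul_mem h,
    zero_pow two_ne_zero]

lemma vieta_depressed_cubic {K : Type*} [Field K] [CharZero K] {g₂ g₃ x y z : K} (hxy : x ≠ y)
    (hxz : x ≠ z) (hzy : z ≠ y) (hx : 4 * x ^ 3 - g₂ * x - g₃ = 0)
    (hy : 4 * y ^ 3 - g₂ * y - g₃ = 0) (hz : 4 * z ^ 3 - g₂ * z - g₃ = 0) :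
    x + y + z = 0 ∧ g₂ = -4 * (x * y + x * z + y * z) ∧ g₃ = 4 * (x * y * z) := by
  have hxy' : 4 * (x ^ 2 + x * y + y ^ 2) = g₂ :=
    mul_left_cancel₀ (sub_ne_zero.2 hxy) (by linear_combination hx - hy)
  have hxz' : 4 * (x ^ 2 + x * z + z ^ 2) = g₂ :=
    mul_left_cancel₀ (sub_ne_zero.2 hxz) (by linear_combination hx - hz)
  have hsum : x + y + z = 0 :=
    mul_left_cancel₀ (sub_ne_zero.2 hzy) (by linear_combination (hxz' - hxy') / 4)
  obtain rfl : z = -x - y := by linear_combination hsum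
  exact ⟨hsum, by linear_combination -hxy', by linear_combination -hx + x * hxy'⟩

lemma weierstrass_vieta : weierstrassE₁ L + weierstrassE₂ L + weierstrassE₃ L = 0 ∧
    L.g₂ = -4 * (weierstrassE₁ L * weierstrassE₂ L + weierstrassE₁ L * weierstrassE₃ L
      + weierstrassE₂ L * weierstrassE₃ L) ∧
    L.g₃ = 4 * (weierstrassE₁ L * weierstrassE₂ L * weierstrassE₃ L) :=
  vieta_depressed_cubic (weierstrassE₁_ne_weierstrassE₂ L) (weierstrassE₁_ne_weierstrassE₃ L)
    (weierstrassE₃_ne_weierstrassE₂ L)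
    (weierstrass_cubic_eq_zero_of_two_mul_mem L.ω₁_div_two_notMem_lattice
      (two_mul_ω₁_div_two_mem_lattice L))
    (weierstrass_cubic_eq_zero_of_two_mul_mem (ω₁_add_ω₂_div_two_notMem_lattice L)
      (two_mul_ω₁_add_ω₂_div_two_mem_lattice L))
    (weierstrass_cubic_eq_zero_of_two_mul_mem L.ω₂_div_two_notMem_lattice
      (two_mul_ω₂_div_two_mem_lattice L))

variable {L}

lemma derivWeierstrassP_sq_eq_prod {z : ℂ} (hz : z ∉ L.lattice) :
    ℘'[L] z ^ 2 = 4 * (℘[L] z - weierstrassE₁ L) * (℘[L] z - weierstrassE₂ L)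
      * (℘[L] z - weierstrassE₃ L) := by
  obtain ⟨hsum, hg₂, hg₃⟩ := weierstrass_vieta L
  rw [L.derivWeierstrassP_sq z hz, hg₂, hg₃]
  linear_combination 4 * ℘[L] z ^ 2 * hsum

lemma weierstrassPDerivOp_iterate_two_X :
    (weierstrassPDerivOp L)^[2] X = 120 * X ^ 3 - 18 * C L.g₂ * X - 12 * C L.g₃ := by
  have hX : weierstrassPDerivOp L X = 6 * X ^ 2 - C (L.g₂ / 2) := by
    simp [weierstrassPDerivOp]
  have hderiv : derivative (6 * X ^ 2 - C (L.g₂ / 2)) = 12 * X := by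
    simp only [derivative_sub, derivative_mul, derivative_X, derivative_C, derivative_pow,
      derivative_ofNat, C_eq_natCast]
    push_cast
    ring
  have hderiv2 : derivative (12 * X : ℂ[X]) = 12 := by
    simp only [derivative_mul, derivative_X, derivative_ofNat, zero_mul, zero_add, mul_one]
  have hg₂ : C L.g₂ = 2 * C (L.g₂ / 2) := by
    rw [← C_ofNat, ← C_mul, mul_div_cancel₀ _ two_ne_zero]
  rw [Function.iterate_succ_apply', Function.iterate_one, hX, weierstrassPDerivOp, hderiv,
    hderiv2, hg₂]
  ring

lemma weierstrassPDerivOp_iterate_three_X :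
    (weierstrassPDerivOp L)^[3] X = (4 * X ^ 3 - C L.g₂ * X - C L.g₃) * (720 * X)
      + (6 * X ^ 2 - C (L.g₂ / 2)) * (360 * X ^ 2 - 18 * C L.g₂) := by
  have hderiv : derivative (120 * X ^ 3 - 18 * C L.g₂ * X - 12 * C L.g₃)
      = 360 * X ^ 2 - 18 * C L.g₂ := by
    simp only [derivative_sub, derivative_mul, derivative_X, derivative_C, derivative_pow,
      derivative_ofNat, C_eq_natCast]
    push_cast
    ring
  have hderiv2 : derivative (360 * X ^ 2 - 18 * C L.g₂) = 720 * X := by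
    simp only [derivative_sub, derivative_mul, derivative_X, derivative_C, derivative_pow,
      derivative_ofNat, C_eq_natCast]
    push_cast
    ring
  rw [Function.iterate_succ_apply', weierstrassPDerivOp_iterate_two_X, weierstrassPDerivOp, hderiv,
    hderiv2]

lemma sumInvPow_eight_of_two_mul_mem {z : ℂ} (hz : z ∉ L.lattice) (h : 2 * z ∈ L.lattice) :
    5040 * L.sumInvPow z 8
      = (6 * ℘[L] z ^ 2 - L.g₂ / 2) * (360 * ℘[L] z ^ 2 - 18 * L.g₂) := by
  have hderiv := iteratedDeriv_weierstrassP_eq_sumInvPow hz (n := 2 * 3) (by norm_num)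
  rw [iteratedDeriv_two_mul_weierstrassP 3 z hz, weierstrassPDerivOp_iterate_three_X] at hderiv
  simp only [eval_add, eval_mul, eval_sub, eval_pow, eval_X, eval_C, eval_ofNat,
    weierstrass_cubic_eq_zero_of_two_mul_mem hz h, zero_mul, zero_add] at hderiv
  rw [hderiv]
  norm_num [Nat.factorial]

end HalfPeriods

/-! ### Rectangular lattices -/

section RectangularLattice

open Set Filter Topology ComplexConjugate
open scoped PeriodPair

/-- The period pair `(2a, 2bi)` of a rectangular lattice. -/
noncomputable def rectPair {a b : ℝ} (ha : 0 < a) (hb : 0 < b) : PeriodPair where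
  ω₁ := 2 * a
  ω₂ := 2 * b * Complex.I
  indep := by
    refine LinearIndependent.pair_iff.2 fun s t h ↦ ?_
    have hre : s * (2 * a) = 0 := by simpa using congrArg Complex.re h
    have him : t * (2 * b) = 0 := by simpa using congrArg Complex.im h
    exact ⟨(mul_eq_zero.1 hre).resolve_right (by positivity),
      (mul_eq_zero.1 him).resolve_right (by positivity)⟩

variable {a b : ℝ} (ha : 0 < a) (hb : 0 < b)

lemma mem_rectPair_lattice {z : ℂ} :
    z ∈ (rectPair ha hb).lattice ↔ ∃ m n : ℤ, z.re = m * (2 * a) ∧ z.im = n * (2 * b) := by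
  rw [PeriodPair.mem_lattice]
  refine exists₂_congr fun m n ↦ ⟨?_, fun ⟨hre, him⟩ ↦ ?_⟩
  · rintro rfl
    simp [rectPair]
  · apply Complex.ext <;> simp [rectPair, hre, him]

lemma conj_mem_rectPair_lattice (z : ℂ) :
    conj z ∈ (rectPair ha hb).lattice ↔ z ∈ (rectPair ha hb).lattice := by
  simp only [mem_rectPair_lattice, Complex.conj_re, Complex.conj_im]
  refine exists_congr fun m ↦ ⟨fun ⟨n, hre, him⟩ ↦ ⟨-n, hre, ?_⟩, fun ⟨n, hre, him⟩ ↦ ⟨-n, hre, ?_⟩⟩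
    <;> push_cast <;> linarith

lemma I_mul_mem_rectPair_lattice (z : ℂ) :
    Complex.I * z ∈ (rectPair ha hb).lattice ↔ z ∈ (rectPair hb ha).lattice := by
  simp only [mem_rectPair_lattice, Complex.I_mul_re, Complex.I_mul_im]
  refine ⟨fun ⟨m, n, hre, him⟩ ↦ ⟨n, -m, him, ?_⟩, fun ⟨m, n, hre, him⟩ ↦ ⟨-n, m, ?_, hre⟩⟩
    <;> push_cast <;> linarith

lemma ofReal_notMem_rectPair_lattice {x : ℝ} (h0 : 0 < x) (h1 : x < 2 * a) :
    (x : ℂ) ∉ (rectPair ha hb).lattice := by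
  rw [mem_rectPair_lattice, Complex.ofReal_re]
  rintro ⟨m, -, rfl, -⟩
  have hm0 : (0 : ℝ) < m := pos_of_mul_pos_left h0 (by linarith)
  have hm1 : (m : ℝ) < 1 := by nlinarith
  norm_cast at hm0 hm1
  omega

lemma ofReal_re_weierstrassP_rectPair {z : ℂ} (hz : conj z - z ∈ (rectPair ha hb).lattice) :
    ((℘[rectPair ha hb] z).re : ℂ) = ℘[rectPair ha hb] z := by
  rw [← Complex.conj_eq_iff_re, ← weierstrassP_conj (conj_mem_rectPair_lattice ha hb),
    ← (rectPair ha hb).weierstrassP_add_coe z ⟨_, hz⟩, add_sub_cancel]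

lemma ofReal_re_derivWeierstrassP_rectPair (x : ℝ) :
    ((℘'[rectPair ha hb] x).re : ℂ) = ℘'[rectPair ha hb] x := by
  rw [← Complex.conj_eq_iff_re, ← derivWeierstrassP_conj (conj_mem_rectPair_lattice ha hb),
    Complex.conj_ofReal]

lemma weierstrassP_rectPair_I_mul (z : ℂ) :
    ℘[rectPair ha hb] (Complex.I * z) = -℘[rectPair hb ha] z := by
  rw [weierstrassP_mul Complex.I_ne_zero (I_mul_mem_rectPair_lattice ha hb), Complex.I_sq,
    inv_neg_one, neg_one_mul]

/-- The (real) value of `℘` at the half period `a`. -/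
noncomputable def rectE₁ : ℝ := (weierstrassE₁ (rectPair ha hb)).re

/-- The (real) value of `℘` at the half period `a + bi`. -/
noncomputable def rectE₂ : ℝ := (weierstrassE₂ (rectPair ha hb)).re

/-- The (real) value of `℘` at the half period `bi`. -/
noncomputable def rectE₃ : ℝ := (weierstrassE₃ (rectPair ha hb)).re

lemma rectPair_ω₁_div_two : (rectPair ha hb).ω₁ / 2 = a := by simp [rectPair]

lemma rectPair_ω₂_div_two : (rectPair ha hb).ω₂ / 2 = b * Complex.I := by
  simp [rectPair, mul_assoc]

lemma rectPair_ω₁_add_ω₂_div_two :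
    ((rectPair ha hb).ω₁ + (rectPair ha hb).ω₂) / 2 = a + b * Complex.I := by
  rw [add_div, rectPair_ω₁_div_two, rectPair_ω₂_div_two]

lemma ofReal_rectE₁ : (rectE₁ ha hb : ℂ) = weierstrassE₁ (rectPair ha hb) :=
  ofReal_re_weierstrassP_rectPair ha hb (by simp [rectPair_ω₁_div_two])

lemma ofReal_rectE₂ : (rectE₂ ha hb : ℂ) = weierstrassE₂ (rectPair ha hb) :=
  ofReal_re_weierstrassP_rectPair ha hb <| by
    convert neg_mem (rectPair ha hb).ω₂_mem_lattice using 1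
    rw [rectPair_ω₁_add_ω₂_div_two]
    apply Complex.ext <;> simp [rectPair]
    ring

lemma ofReal_rectE₃ : (rectE₃ ha hb : ℂ) = weierstrassE₃ (rectPair ha hb) :=
  ofReal_re_weierstrassP_rectPair ha hb <| by
    convert neg_mem (rectPair ha hb).ω₂_mem_lattice using 1
    rw [rectPair_ω₂_div_two]
    apply Complex.ext <;> simp [rectPair]
    ring

lemma rectE₁_swap : rectE₁ hb ha = -rectE₃ ha hb := by
  rw [rectE₁, rectE₃, weierstrassE₁, weierstrassE₃, rectPair_ω₁_div_two, rectPair_ω₂_div_two,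
    mul_comm, weierstrassP_rectPair_I_mul, Complex.neg_re, neg_neg]

lemma rectE₃_swap : rectE₃ hb ha = -rectE₁ ha hb := by rw [rectE₁_swap hb ha, neg_neg]

lemma rectE₂_swap : rectE₂ hb ha = -rectE₂ ha hb := by
  have hI : ((rectPair ha hb).ω₁ + (rectPair ha hb).ω₂) / 2
      = Complex.I * (((rectPair hb ha).ω₁ + (rectPair hb ha).ω₂) / 2)
        + ((⟨_, (rectPair ha hb).ω₁_mem_lattice⟩ : (rectPair ha hb).lattice) : ℂ) := by
    rw [rectPair_ω₁_add_ω₂_div_two, rectPair_ω₁_add_ω₂_div_two]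
    apply Complex.ext <;> simp [rectPair]
    ring
  rw [rectE₂, rectE₂, weierstrassE₂, weierstrassE₂, hI, (rectPair ha hb).weierstrassP_add_coe,
    weierstrassP_rectPair_I_mul, Complex.neg_re, neg_neg]

lemma rectE₂_ne_rectE₁ : rectE₂ ha hb ≠ rectE₁ ha hb := fun h ↦
  weierstrassE₁_ne_weierstrassE₂ (rectPair ha hb) <| by rw [← ofReal_rectE₁, ← ofReal_rectE₂, h]

/-- The restriction of `℘` to the real axis. -/
noncomputable def rectP (x : ℝ) : ℝ := (℘[rectPair ha hb] x).re

/-- The restriction of `℘'` to the real axis. -/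
noncomputable def rectP' (x : ℝ) : ℝ := (℘'[rectPair ha hb] x).re

lemma hasDerivAt_rectP {x : ℝ} (h0 : 0 < x) (h1 : x < 2 * a) :
    HasDerivAt (rectP ha hb) (rectP' ha hb x) x :=
  (hasDerivAt_weierstrassP (ofReal_notMem_rectPair_lattice ha hb h0 h1)).real_of_complex

lemma continuousOn_rectP : ContinuousOn (rectP ha hb) (Ioc 0 a) := fun _ hx ↦
  (hasDerivAt_rectP ha hb hx.1 (by linarith [hx.2])).continuousAt.continuousWithinAt

lemma continuousOn_rectP' : ContinuousOn (rectP' ha hb) (Ioo 0 a) := fun _ hx ↦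
  (hasDerivAt_derivWeierstrassP (ofReal_notMem_rectPair_lattice ha hb hx.1
    (by linarith [hx.2]))).real_of_complex.continuousAt.continuousWithinAt

lemma rectP'_sq {x : ℝ} (h0 : 0 < x) (h1 : x < 2 * a) :
    rectP' ha hb x ^ 2 = 4 * (rectP ha hb x - rectE₁ ha hb) * (rectP ha hb x - rectE₂ ha hb) *
      (rectP ha hb x - rectE₃ ha hb) := by
  have h := derivWeierstrassP_sq_eq_prod (ofReal_notMem_rectPair_lattice ha hb h0 h1)
  rw [← ofReal_re_derivWeierstrassP_rectPair, ← ofReal_re_weierstrassP_rectPair ha hb (by simp),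
    ← ofReal_rectE₁, ← ofReal_rectE₂, ← ofReal_rectE₃] at h
  exact_mod_cast h

lemma rectP'_ne_zero {x : ℝ} (h0 : 0 < x) (h1 : x < a) : rectP' ha hb x ≠ 0 := by
  intro h
  have hmem := (derivWeierstrassP_eq_zero_iff (ofReal_notMem_rectPair_lattice ha hb h0
    (by linarith))).1 (by rw [← ofReal_re_derivWeierstrassP_rectPair, ← rectP', h,
      Complex.ofReal_zero])
  exact ofReal_notMem_rectPair_lattice ha hb (x := 2 * x) (by linarith) (by linarith)
    (by exact_mod_cast hmem)

lemma tendsto_rectP_atTop : Tendsto (rectP ha hb) (𝓝[>] 0) atTop := by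
  set L := rectPair ha hb
  have hregular : Tendsto (fun x : ℝ ↦ (L.weierstrassPExcept 0 x).re) (𝓝[>] 0)
      (𝓝 (L.weierstrassPExcept 0 0).re) := by
    have hcont : ContinuousAt (L.weierstrassPExcept 0) ((0 : ℝ) : ℂ) := by
      simpa using (L.analyticAt_weierstrassPExcept 0).continuousAt
    simpa [Function.comp_def] using (Complex.continuous_re.continuousAt.comp (hcont.comp
      Complex.continuous_ofReal.continuousAt)).tendsto.mono_left
      (nhdsWithin_le_nhds (s := Ioi (0 : ℝ)))
  have hpole : Tendsto (fun x : ℝ ↦ (x ^ 2)⁻¹) (𝓝[>] 0) atTop := by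
    simpa [Function.comp_def] using
      (tendsto_pow_atTop two_ne_zero).comp (tendsto_inv_nhdsGT_zero (𝕜 := ℝ))
  refine (hregular.add_atTop hpole).congr fun x ↦ ?_
  have h := L.weierstrassPExcept_add ⟨0, zero_mem _⟩ x
  simp only [sub_zero] at h
  have hre : (1 / (x : ℂ) ^ 2).re = (x ^ 2)⁻¹ := by
    rw [← one_div]
    norm_cast
  rw [rectP, ← h, Complex.add_re, Complex.sub_re, hre]
  simp

-- `℘'` has no zero on `(0, a)`, and its sign is forced by `℘ → ∞` at `0⁺`.
lemma rectP'_neg {x : ℝ} (h0 : 0 < x) (h1 : x < a) : rectP' ha hb x < 0 := by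
  by_contra! hx
  have hpos : ∀ y ∈ Ioo 0 a, 0 < rectP' ha hb y := by
    intro y hy
    by_contra! hy'
    obtain ⟨z, hz, hz0⟩ := isPreconnected_Ioo.intermediate_value hy ⟨h0, h1⟩
      (continuousOn_rectP' ha hb) ⟨hy', hx⟩
    exact rectP'_ne_zero ha hb hz.1 hz.2 hz0
  have hmono : StrictMonoOn (rectP ha hb) (Ioo 0 a) :=
    strictMonoOn_of_hasDerivWithinAt_pos (convex_Ioo 0 a)
      ((continuousOn_rectP ha hb).mono Ioo_subset_Ioc_self) (fun y hy ↦ by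
        rw [interior_Ioo] at hy
        exact (hasDerivAt_rectP ha hb hy.1 (by linarith [hy.2])).hasDerivWithinAt)
      fun y hy ↦ hpos y (interior_subset hy)
  obtain ⟨y, hy, hyx⟩ := (((tendsto_rectP_atTop ha hb).eventually_gt_atTop (rectP ha hb x)).and
    (Ioo_mem_nhdsGT h0)).exists
  exact (hmono ⟨hyx.1, hyx.2.trans h1⟩ ⟨h0, h1⟩ hyx.2).not_gt hy

lemma strictAntiOn_rectP : StrictAntiOn (rectP ha hb) (Ioc 0 a) := by
  refine strictAntiOn_of_hasDerivWithinAt_neg (convex_Ioc 0 a) (continuousOn_rectP ha hb)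
    (f' := rectP' ha hb) (fun y hy ↦ ?_) fun y hy ↦ ?_ <;> rw [interior_Ioc] at hy
  · exact (hasDerivAt_rectP ha hb hy.1 (by linarith [hy.2])).hasDerivWithinAt
  · exact rectP'_neg ha hb hy.1 hy.2

lemma rectP_self : rectP ha hb a = rectE₁ ha hb := by
  rw [rectP, rectE₁, weierstrassE₁, rectPair_ω₁_div_two]

lemma exists_rectP_eq {t : ℝ} (ht : rectE₁ ha hb < t) : ∃ x ∈ Ioo 0 a, rectP ha hb x = t := by
  rw [← rectP_self] at ht
  obtain ⟨y, hy, hya⟩ := (((tendsto_rectP_atTop ha hb).eventually_gt_atTop t).and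
    (Ioo_mem_nhdsGT ha)).exists
  have hcont : ContinuousOn (rectP ha hb) (Icc y a) :=
    (continuousOn_rectP ha hb).mono fun z hz ↦ ⟨hya.1.trans_le hz.1, hz.2⟩
  obtain ⟨x, hx, hxt⟩ := intermediate_value_Ioo' hya.2.le hcont ⟨ht, hy⟩
  exact ⟨x, ⟨hya.1.trans hx.1, hx.2⟩, hxt⟩

-- `℘` takes every value above `e₁` on `(0, a)`, where `℘' ≠ 0`.
lemma rectE₂_lt_rectE₁ : rectE₂ ha hb < rectE₁ ha hb := by
  refine (rectE₂_ne_rectE₁ ha hb).lt_of_le ?_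
  by_contra! h
  obtain ⟨x, hx, hxe⟩ := exists_rectP_eq ha hb h
  refine rectP'_ne_zero ha hb hx.1 hx.2 ((pow_eq_zero_iff two_ne_zero).1 ?_)
  rw [rectP'_sq ha hb hx.1 (by linarith [hx.2]), hxe, sub_self, mul_zero, zero_mul]

lemma rectE₃_lt_rectE₂ : rectE₃ ha hb < rectE₂ ha hb := by
  simpa [rectE₁_swap ha hb, rectE₂_swap ha hb] using rectE₂_lt_rectE₁ hb ha

lemma rectE₃_lt_rectE₁ : rectE₃ ha hb < rectE₁ ha hb :=
  (rectE₃_lt_rectE₂ ha hb).trans (rectE₂_lt_rectE₁ ha hb)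

/-- The parameter `m = k²` of the Jacobi functions of the lattice with periods `2a`, `2bi`. -/
noncomputable def rectParameter : ℝ :=
  (rectE₂ ha hb - rectE₃ ha hb) / (rectE₁ ha hb - rectE₃ ha hb)

lemma rectParameter_pos : 0 < rectParameter ha hb :=
  div_pos (sub_pos.2 (rectE₃_lt_rectE₂ ha hb)) (sub_pos.2 (rectE₃_lt_rectE₁ ha hb))

lemma rectParameter_lt_one : rectParameter ha hb < 1 := by
  rw [rectParameter, div_lt_one (sub_pos.2 (rectE₃_lt_rectE₁ ha hb))]
  exact sub_lt_sub_right (rectE₂_lt_rectE₁ ha hb) _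

lemma rectParameter_swap : rectParameter hb ha = 1 - rectParameter ha hb := by
  have hpos := sub_pos.2 (rectE₃_lt_rectE₁ ha hb)
  rw [rectParameter, rectParameter, rectE₁_swap ha hb, rectE₂_swap ha hb, rectE₃_swap ha hb,
    neg_sub_neg, neg_sub_neg]
  field_simp
  ring

/-- The function `√((e₁ - e₃) / (℘ - e₃))` on the real axis, which is the Jacobi function `sn` up to
a rescaling of its argument. -/
noncomputable def rectSn (x : ℝ) : ℝ :=
  √((rectE₁ ha hb - rectE₃ ha hb) / (rectP ha hb x - rectE₃ ha hb))

variable {x : ℝ}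

lemma rectP_sub_rectE₃_pos (hx : x ∈ Ioc 0 a) : 0 < rectP ha hb x - rectE₃ ha hb := by
  rw [sub_pos]
  refine (rectE₃_lt_rectE₁ ha hb).trans_le ?_
  rw [← rectP_self]
  exact (strictAntiOn_rectP ha hb).antitoneOn hx ⟨ha, le_rfl⟩ hx.2

lemma rectSn_pos (hx : x ∈ Ioc 0 a) : 0 < rectSn ha hb x :=
  Real.sqrt_pos.2 (div_pos (sub_pos.2 (rectE₃_lt_rectE₁ ha hb)) (rectP_sub_rectE₃_pos ha hb hx))

lemma rectSn_sq (hx : x ∈ Ioc 0 a) : rectSn ha hb x ^ 2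
    = (rectE₁ ha hb - rectE₃ ha hb) / (rectP ha hb x - rectE₃ ha hb) :=
  Real.sq_sqrt (div_pos (sub_pos.2 (rectE₃_lt_rectE₁ ha hb)) (rectP_sub_rectE₃_pos ha hb hx)).le

lemma rectSn_self : rectSn ha hb a = 1 := by
  rw [rectSn, rectP_self, div_self (sub_pos.2 (rectE₃_lt_rectE₁ ha hb)).ne', Real.sqrt_one]

lemma strictMonoOn_rectSn : StrictMonoOn (rectSn ha hb) (Ioc 0 a) := fun _ hx _ hy hxy ↦
  Real.sqrt_lt_sqrt
    (div_pos (sub_pos.2 (rectE₃_lt_rectE₁ ha hb)) (rectP_sub_rectE₃_pos ha hb hx)).le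
    (div_lt_div_of_pos_left (sub_pos.2 (rectE₃_lt_rectE₁ ha hb)) (rectP_sub_rectE₃_pos ha hb hy)
      (sub_lt_sub_right (strictAntiOn_rectP ha hb hx hy hxy) _))

lemma rectSn_image : rectSn ha hb '' Ioo 0 a = Ioo 0 1 := by
  have hu := sub_pos.2 (rectE₃_lt_rectE₁ ha hb)
  refine Subset.antisymm ?_ fun s ⟨h0, h1⟩ ↦ ?_
  · rintro _ ⟨x, hx, rfl⟩
    refine ⟨rectSn_pos ha hb (Ioo_subset_Ioc_self hx), ?_⟩
    rw [← rectSn_self ha hb]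
    exact strictMonoOn_rectSn ha hb (Ioo_subset_Ioc_self hx) ⟨ha, le_rfl⟩ hx.2
  · obtain ⟨x, hx, hxt⟩ := exists_rectP_eq ha hb
      (t := rectE₃ ha hb + (rectE₁ ha hb - rectE₃ ha hb) / s ^ 2) (by
        rw [← sub_lt_iff_lt_add', lt_div_iff₀ (pow_pos h0 2)]
        exact mul_lt_of_lt_one_right hu (pow_lt_one₀ h0.le h1 two_ne_zero))
    refine ⟨x, hx, ?_⟩
    rw [rectSn, hxt, add_sub_cancel_left, div_div_cancel₀ hu.ne', Real.sqrt_sq h0.le]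

lemma hasDerivAt_rectSn (hx : x ∈ Ioo 0 a) :
    HasDerivAt (rectSn ha hb) (√(rectE₁ ha hb - rectE₃ ha hb) *
      √((1 - rectSn ha hb x ^ 2) * (1 - rectParameter ha hb * rectSn ha hb x ^ 2))) x := by
  have hx' := Ioo_subset_Ioc_self hx
  have hx2 : x < 2 * a := by linarith [hx.2]
  have hu := sub_pos.2 (rectE₃_lt_rectE₁ ha hb)
  have hd := rectP_sub_rectE₃_pos ha hb hx'
  have hs := rectSn_pos ha hb hx'
  have hderiv : HasDerivAt (rectSn ha hb) ((rectE₁ ha hb - rectE₃ ha hb) *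
      (-rectP' ha hb x / (rectP ha hb x - rectE₃ ha hb) ^ 2) / (2 * rectSn ha hb x)) x := by
    simp only [rectSn, div_eq_mul_inv (rectE₁ ha hb - rectE₃ ha hb)]
    exact ((((hasDerivAt_rectP ha hb hx.1 hx2).sub_const _).fun_inv hd.ne').const_mul _).sqrt
      (mul_pos hu (inv_pos.2 hd)).ne'
  have hpos := neg_pos.2 (rectP'_neg ha hb hx.1 hx.2)
  refine hderiv.congr_deriv ?_
  rw [← Real.sqrt_mul hu.le, eq_comm, Real.sqrt_eq_iff_mul_self_eq_of_pos (by positivity), ← sq,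
    div_pow, mul_pow, div_pow, neg_sq, mul_pow, rectSn_sq ha hb hx', rectP'_sq ha hb hx.1 hx2,
    rectParameter]
  field_simp
  ring

lemma one_sub_sq_mul_one_sub_mul_sq_pos {m s : ℝ} (hm : m < 1) (hs : s ∈ Ioo 0 1) :
    0 < (1 - s ^ 2) * (1 - m * s ^ 2) := by
  have hs1 : s ^ 2 < 1 := pow_lt_one₀ hs.1.le hs.2 two_ne_zero
  exact mul_pos (sub_pos.2 hs1) (by nlinarith [sq_nonneg s])

lemma ellipticK_rectParameter :
    ellipticK (rectParameter ha hb) = a * √(rectE₁ ha hb - rectE₃ ha hb) := by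
  rw [← Real.sq_sqrt (rectParameter_pos ha hb).le, ← EllK_eq_ellipticK, EllK,
    intervalIntegral.integral_of_le zero_le_one, integral_Ioc_eq_integral_Ioo,
    Real.sq_sqrt (rectParameter_pos ha hb).le, ← rectSn_image ha hb,
    integral_image_eq_integral_deriv_smul_of_monotoneOn measurableSet_Ioo
      (fun x hx ↦ (hasDerivAt_rectSn ha hb hx).hasDerivWithinAt)
      ((strictMonoOn_rectSn ha hb).mono Ioo_subset_Ioc_self).monotoneOn,
    setIntegral_congr_fun (g := fun _ ↦ √(rectE₁ ha hb - rectE₃ ha hb)) measurableSet_Ioo]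
  · simp [ha.le]
  · intro x hx
    have hs : rectSn ha hb x ∈ Ioo 0 1 := rectSn_image ha hb ▸ mem_image_of_mem _ hx
    have hQ := Real.sqrt_pos.2
      (one_sub_sq_mul_one_sub_mul_sq_pos (rectParameter_lt_one ha hb) hs)
    simp only [smul_eq_mul]
    rw [mul_one_div, mul_div_cancel_right₀ _ hQ.ne']

lemma periodRatio_rectParameter : periodRatio (rectParameter ha hb) = b / a := by
  have hu := Real.sqrt_pos.2 (sub_pos.2 (rectE₃_lt_rectE₁ ha hb))
  rw [periodRatio, ← rectParameter_swap ha hb, ellipticK_rectParameter, ellipticK_rectParameter,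
    rectE₁_swap ha hb, rectE₃_swap ha hb, neg_sub_neg]
  field_simp

end RectangularLattice

/-! ### The lattice sum over odd points -/

section OddLatticeSum

open Set
open scoped PeriodPair

/-- The sum of `((2p + 1) + (2q + 1)iy)⁻ᵏ` over all integers `p`, `q`. -/
noncomputable def oddLatticeSum (k : ℕ) (y : ℝ) : ℂ :=
  ∑' x : ℤ × ℤ, (((2 * x.1 + 1) + (2 * x.2 + 1) * (y * Complex.I) : ℂ) ^ k)⁻¹

lemma hasSum_oddLatticeSum_sumInvPow {k : ℕ} (hk : 2 < k) {y : ℝ} (hy : 0 < y) :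
    HasSum (fun x : ℤ × ℤ ↦ (((2 * x.1 + 1) + (2 * x.2 + 1) * (y * Complex.I) : ℂ) ^ k)⁻¹)
      ((rectPair one_pos hy).sumInvPow
        (((rectPair one_pos hy).ω₁ + (rectPair one_pos hy).ω₂) / 2) k) := by
  set L := rectPair one_pos hy
  have h := L.hasSum_sumInvPow ((L.ω₁ + L.ω₂) / 2) hk
  rw [← ((Equiv.addRight (1 : ℤ)).prodCongr (Equiv.addRight (1 : ℤ)) |>.trans
    L.latticeEquivProd.symm.toEquiv).hasSum_iff] at h
  refine h.congr_fun fun x ↦ congrArg (fun z : ℂ ↦ (z ^ k)⁻¹) ?_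
  refine .trans ?_ (congrArg (· - (L.ω₁ + L.ω₂) / 2)
    (L.latticeEquiv_symm_apply (x.1 + 1, x.2 + 1)).symm)
  simp only [L, rectPair]
  push_cast
  ring

lemma oddLatticeSum_eq_sumInvPow {k : ℕ} (hk : 2 < k) {y : ℝ} (hy : 0 < y) :
    oddLatticeSum k y = (rectPair one_pos hy).sumInvPow
      (((rectPair one_pos hy).ω₁ + (rectPair one_pos hy).ω₂) / 2) k :=
  (hasSum_oddLatticeSum_sumInvPow hk hy).tsum_eq

lemma periodRatio_pos {m : ℝ} (hm : m ∈ Ioo 0 1) : 0 < periodRatio m :=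
  div_pos (ellipticK_pos (by linarith [hm.1])) (ellipticK_pos hm.2)

lemma rectParameter_one_periodRatio {m : ℝ} (hm : m ∈ Ioo 0 1) :
    rectParameter one_pos (periodRatio_pos hm) = m :=
  strictAntiOn_periodRatio.injOn ⟨rectParameter_pos _ _, rectParameter_lt_one _ _⟩ hm <| by
    rw [periodRatio_rectParameter, div_one]

lemma oddLatticeSum_eight_rectParameter {y : ℝ} (hy : 0 < y) {m : ℝ}
    (hm : rectParameter one_pos hy = m) :
    5040 * oddLatticeSum 8 y =
      ((-16 * (m * (1 - m)) * (2 - 17 * (m * (1 - m))) * ellipticK m ^ 8 : ℝ) : ℂ) := by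
  have hpos : 0 < rectE₁ one_pos hy - rectE₃ one_pos hy := sub_pos.2 (rectE₃_lt_rectE₁ one_pos hy)
  have hK : ellipticK m ^ 8 = (rectE₁ one_pos hy - rectE₃ one_pos hy) ^ 4 := by
    rw [← hm, ellipticK_rectParameter, one_mul, pow_mul _ 2 4, Real.sq_sqrt hpos.le]
  obtain ⟨hsum, hg₂, -⟩ := weierstrass_vieta (rectPair one_pos hy)
  have hE₂ : weierstrassE₂ (rectPair one_pos hy) =
      -weierstrassE₁ (rectPair one_pos hy) - weierstrassE₃ (rectPair one_pos hy) := by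
    linear_combination hsum
  have hne : weierstrassE₁ (rectPair one_pos hy) - weierstrassE₃ (rectPair one_pos hy) ≠ 0 := by
    rw [← ofReal_rectE₁, ← ofReal_rectE₃]
    exact_mod_cast hpos.ne'
  rw [oddLatticeSum_eq_sumInvPow (by norm_num) hy,
    sumInvPow_eight_of_two_mul_mem (ω₁_add_ω₂_div_two_notMem_lattice _)
      (two_mul_ω₁_add_ω₂_div_two_mem_lattice _), ← weierstrassE₂, hg₂, hK, ← hm, rectParameter]
  push_cast
  rw [ofReal_rectE₁, ofReal_rectE₂, ofReal_rectE₃, hE₂]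
  field_simp
  ring

lemma oddLatticeSum_eight_periodRatio {m : ℝ} (hm : m ∈ Ioo 0 1) :
    5040 * oddLatticeSum 8 (periodRatio m) =
      ((-16 * (m * (1 - m)) * (2 - 17 * (m * (1 - m))) * ellipticK m ^ 8 : ℝ) : ℂ) :=
  oddLatticeSum_eight_rectParameter _ (rectParameter_one_periodRatio hm)

end OddLatticeSum

/-! ### Moments of the logistic function -/

section Logistic

open Set Filter Topology Polynomial Asymptotics Real

/-- The polynomials `P k` with `P k (σ y)` the `k`-th derivative of the logistic function
`σ = Real.sigmoid`, which satisfies `σ' = σ (1 - σ)`. -/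
noncomputable def logisticPoly : ℕ → ℝ[X]
  | 0 => X
  | k + 1 => X * (1 - X) * derivative (logisticPoly k)

lemma X_dvd_logisticPoly (k : ℕ) : X ∣ logisticPoly k := by
  cases k with
  | zero => exact dvd_rfl
  | succ k => exact (dvd_mul_right _ _).mul_right _

lemma hasDerivAt_eval_logisticPoly_sigmoid_neg (k : ℕ) (y : ℝ) :
    HasDerivAt (fun y ↦ (logisticPoly k).eval (sigmoid (-y)))
      (-(logisticPoly (k + 1)).eval (sigmoid (-y))) y := by
  have hσ := (hasDerivAt_sigmoid (-y)).comp y (hasDerivAt_neg y)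
  refine (((logisticPoly k).hasDerivAt (sigmoid (-y))).comp y hσ).congr_deriv ?_
  simp only [logisticPoly, eval_mul, eval_sub, eval_X, eval_one]
  ring

lemma continuous_eval_logisticPoly_sigmoid_neg (k : ℕ) :
    Continuous fun y ↦ (logisticPoly k).eval (sigmoid (-y)) :=
  (logisticPoly k).continuous.comp (continuous_sigmoid.comp continuous_neg)

lemma sigmoid_neg_isBigO_exp_neg : (fun y ↦ sigmoid (-y)) =O[atTop] fun y ↦ rexp (-y) :=
  .of_bound 1 <| .of_forall fun y ↦ by
    rw [one_mul, norm_of_nonneg (sigmoid_pos _).le, norm_of_nonneg (exp_pos _).le, sigmoid_def,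
      neg_neg, exp_neg]
    gcongr
    linarith

lemma pow_mul_eval_logisticPoly_isBigO (j k : ℕ) :
    (fun y ↦ y ^ j * (logisticPoly k).eval (sigmoid (-y)))
      =O[atTop] fun y ↦ rexp (-(1 / 2) * y) := by
  obtain ⟨q, hq⟩ := X_dvd_logisticPoly k
  have hbdd : (fun y ↦ q.eval (sigmoid (-y))) =O[atTop] fun _ ↦ (1 : ℝ) :=
    ((q.continuous.tendsto 0).comp (sigmoid_neg_isBigO_exp_neg.trans_tendsto
      (tendsto_exp_neg_atTop_nhds_zero))).isBigO_one ℝ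
  refine (((isLittleO_pow_exp_pos_mul_atTop j one_half_pos).isBigO.mul
    sigmoid_neg_isBigO_exp_neg).mul hbdd).congr (fun y ↦ ?_) fun y ↦ ?_
  · rw [hq, eval_mul, eval_X, mul_assoc]
  · rw [mul_one, ← exp_add]
    ring_nf

lemma tendsto_pow_mul_eval_logisticPoly (j k : ℕ) :
    Tendsto (fun y ↦ y ^ j * (logisticPoly k).eval (sigmoid (-y))) atTop (𝓝 0) :=
  (pow_mul_eval_logisticPoly_isBigO j k).trans_tendsto
    (tendsto_exp_atBot.comp (tendsto_id.const_mul_atTop_of_neg (by norm_num)))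

lemma integrableOn_pow_mul_eval_logisticPoly (j k : ℕ) :
    IntegrableOn (fun y ↦ y ^ j * (logisticPoly k).eval (sigmoid (-y))) (Ioi 0) :=
  integrable_of_isBigO_exp_neg one_half_pos
    ((continuous_pow j).mul (continuous_eval_logisticPoly_sigmoid_neg k)).continuousOn
    (pow_mul_eval_logisticPoly_isBigO j k)

lemma integral_eval_logisticPoly_one :
    ∫ y in Ioi (0 : ℝ), (logisticPoly 1).eval (sigmoid (-y)) = 1 / 2 := by
  have hint : IntegrableOn (fun y ↦ (logisticPoly 1).eval (sigmoid (-y))) (Ioi 0) := by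
    simpa only [pow_zero, one_mul] using integrableOn_pow_mul_eval_logisticPoly 0 1
  have hlim : Tendsto (fun y ↦ (logisticPoly 0).eval (sigmoid (-y))) atTop (𝓝 0) := by
    simpa only [pow_zero, one_mul] using tendsto_pow_mul_eval_logisticPoly 0 0
  have hFTC := integral_Ioi_of_hasDerivAt_of_tendsto
    (continuous_eval_logisticPoly_sigmoid_neg 0).continuousWithinAt
    (fun y (_ : y ∈ Ioi 0) ↦ hasDerivAt_eval_logisticPoly_sigmoid_neg 0 y) hint.neg hlim
  rw [integral_neg, logisticPoly, eval_X, neg_zero, sigmoid_zero] at hFTC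
  linarith

lemma integral_pow_succ_mul_eval_logisticPoly_succ (j k : ℕ) :
    ∫ y in Ioi (0 : ℝ), y ^ (j + 1) * (logisticPoly (k + 1)).eval (sigmoid (-y)) =
      (j + 1) * ∫ y in Ioi (0 : ℝ), y ^ j * (logisticPoly k).eval (sigmoid (-y)) := by
  have hderiv (y : ℝ) : HasDerivAt (fun y ↦ y ^ (j + 1) * (logisticPoly k).eval (sigmoid (-y)))
      ((j + 1) * (y ^ j * (logisticPoly k).eval (sigmoid (-y))) -
        y ^ (j + 1) * (logisticPoly (k + 1)).eval (sigmoid (-y))) y := by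
    refine ((hasDerivAt_pow (j + 1) y).mul
      (hasDerivAt_eval_logisticPoly_sigmoid_neg k y)).congr_deriv ?_
    push_cast [Nat.add_sub_cancel]
    ring
  have hint₁ := (integrableOn_pow_mul_eval_logisticPoly j k).const_mul ((j : ℝ) + 1)
  have hint₂ := integrableOn_pow_mul_eval_logisticPoly (j + 1) (k + 1)
  have hFTC := integral_Ioi_of_hasDerivAt_of_tendsto (a := 0)
    (hderiv 0).continuousAt.continuousWithinAt (fun y _ ↦ hderiv y) (hint₁.sub hint₂)
    (tendsto_pow_mul_eval_logisticPoly (j + 1) k)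
  rw [integral_sub hint₁ hint₂, integral_const_mul, zero_pow j.succ_ne_zero] at hFTC
  linarith

lemma integral_pow_mul_eval_logisticPoly_succ (j : ℕ) :
    ∫ y in Ioi (0 : ℝ), y ^ j * (logisticPoly (j + 1)).eval (sigmoid (-y)) = j.factorial / 2 := by
  induction j with
  | zero => simpa only [pow_zero, one_mul, Nat.factorial_zero, Nat.cast_one]
      using integral_eval_logisticPoly_one
  | succ j ih =>
    rw [integral_pow_succ_mul_eval_logisticPoly_succ, ih, Nat.factorial_succ]
    push_cast
    ring

end Logistic

/-! ### The odd lattice sum as a series of logistic derivatives -/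

section Cotangent

open Complex Set Polynomial
open UpperHalfPlane hiding I

/-- The function `e^{2πiz} / (e^{2πiz} - 1)`, which equals `1/2 + cot (πz) / (2i)` and satisfies
the logistic equation up to a factor `2πi`. -/
noncomputable def expRatio (z : ℂ) : ℂ := cexp (2 * π * I * z) / (cexp (2 * π * I * z) - 1)

lemma exp_two_pi_I_mul_sub_one_ne_zero {z : ℂ} (hz : z ∈ upperHalfPlaneSet) :
    cexp (2 * π * I * z) - 1 ≠ 0 := fun h ↦ by
  have hlt : ‖cexp (2 * π * I * z)‖ < 1 := UpperHalfPlane.norm_exp_two_pi_I_lt_one ⟨z, hz⟩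
  rw [sub_eq_zero.1 h, norm_one] at hlt
  exact lt_irrefl _ hlt

lemma hasDerivAt_expRatio {z : ℂ} (hz : z ∈ upperHalfPlaneSet) :
    HasDerivAt expRatio (2 * π * I * (expRatio z * (1 - expRatio z))) z := by
  have hne := exp_two_pi_I_mul_sub_one_ne_zero hz
  have hexp := ((hasDerivAt_id z).const_mul (2 * π * I)).cexp
  refine (hexp.fun_div (hexp.sub_const 1) hne).congr_deriv ?_
  simp only [expRatio, id]
  field_simp

lemma pi_mul_cot_eq_expRatio {z : ℂ} (hz : z ∈ upperHalfPlaneSet) :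
    π * cot (π * z) = -π * I + 2 * π * I * expRatio z := by
  have hne : 1 - cexp (2 * π * I * z) ≠ 0 := fun h ↦
    exp_two_pi_I_mul_sub_one_ne_zero hz (by linear_combination -h)
  rw [cot_pi_eq_exp_ratio, expRatio, mul_comm I (1 - _), ← div_div, div_I,
    ← neg_sub 1 (cexp _), div_neg]
  generalize cexp (2 * π * I * z) = w at hne
  field_simp
  ring

lemma iteratedDerivWithin_pi_mul_cot_eq_logisticPoly (k : ℕ) :
    EqOn (iteratedDerivWithin (k + 1) (fun z : ℂ ↦ π * cot (π * z)) upperHalfPlaneSet)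
      (fun z ↦ (2 * π * I) ^ (k + 2) * aeval (expRatio z) (logisticPoly (k + 1)))
      upperHalfPlaneSet := by
  have hU : UniqueDiffOn ℂ upperHalfPlaneSet := isOpen_upperHalfPlaneSet.uniqueDiffOn
  induction k with
  | zero =>
    intro z hz
    have hderiv := ((hasDerivAt_expRatio hz).const_mul (2 * π * I)).const_add (-π * I)
    rw [iteratedDerivWithin_one, derivWithin_congr (fun w hw ↦ pi_mul_cot_eq_expRatio hw)
      (pi_mul_cot_eq_expRatio hz), hderiv.hasDerivWithinAt.derivWithin (hU z hz)]
    simp only [logisticPoly, derivative_X, mul_one, map_mul, map_sub, map_one, aeval_X]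
    ring
  | succ k ih =>
    intro z hz
    have hderiv := (((logisticPoly (k + 1)).hasDerivAt_aeval (expRatio z)).comp z
      (hasDerivAt_expRatio hz)).const_mul ((2 * π * I) ^ (k + 2))
    rw [iteratedDerivWithin_succ, derivWithin_congr ih (ih hz)]
    refine (hderiv.hasDerivWithinAt.derivWithin (hU z hz)).trans ?_
    rw [logisticPoly.eq_2 (k + 1)]
    simp only [map_mul, map_sub, map_one, aeval_X]
    ring

lemma factorial_mul_tsum_add_int_pow {k : ℕ} (hk : 1 ≤ k) {z : ℂ} (hz : z ∈ upperHalfPlaneSet) :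
    (-1) ^ k * k.factorial * ∑' p : ℤ, 1 / (z + p) ^ (k + 1) =
      (2 * π * I) ^ (k + 1) * aeval (expRatio z) (logisticPoly k) := by
  obtain ⟨k, rfl⟩ := Nat.exists_eq_add_of_le' hk
  exact (iteratedDerivWithin_cot_pi_mul_eq_mul_tsum_div_pow hk hz).symm.trans
    (iteratedDerivWithin_pi_mul_cot_eq_logisticPoly k hz)

lemma expRatio_one_add_mul_I_div_two (y : ℝ) :
    expRatio ((1 + y * I) / 2) = Real.sigmoid (-(π * y)) := by
  have hexp : cexp (2 * π * I * ((1 + y * I) / 2)) = -((Real.exp (π * y) : ℝ) : ℂ)⁻¹ := by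
    rw [show 2 * π * I * ((1 + y * I) / 2) = π * I + -((π * y : ℝ) : ℂ) by
      push_cast
      linear_combination (π * y : ℂ) * I_sq, Complex.exp_add, exp_pi_mul_I, Complex.exp_neg,
      Complex.ofReal_exp]
    ring
  have hpos := Real.exp_pos (π * y)
  rw [expRatio, hexp, Real.sigmoid_def, neg_neg]
  norm_cast
  have hne : -1 - Real.exp (π * y) ≠ 0 := by linarith
  field_simp
  ring

lemma factorial_mul_tsum_odd_add_pow {k : ℕ} (hk : 1 ≤ k) {y : ℝ} (hy : 0 < y) :
    (-1) ^ k * k.factorial * ∑' p : ℤ, ((2 * p + 1 + y * I) ^ (k + 1))⁻¹ =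
      (π * I) ^ (k + 1) * ((logisticPoly k).eval (Real.sigmoid (-(π * y))) : ℝ) := by
  have hz : (1 + y * I) / 2 ∈ upperHalfPlaneSet := by
    simpa [upperHalfPlaneSet] using hy
  have hsummand (p : ℤ) : 1 / ((1 + y * I) / 2 + p) ^ (k + 1) =
      2 ^ (k + 1) * ((2 * p + 1 + y * I) ^ (k + 1))⁻¹ := by
    rw [show (1 + y * I) / 2 + p = (2 * p + 1 + y * I) / 2 by ring, div_pow, one_div_div,
      div_eq_mul_inv]
  have h := factorial_mul_tsum_add_int_pow hk hz
  have heval : aeval ((Real.sigmoid (-(π * y)) : ℝ) : ℂ) (logisticPoly k) =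
      ((logisticPoly k).eval (Real.sigmoid (-(π * y))) : ℝ) := by
    simpa only [coe_algebraMap, coe_aeval_eq_eval]
      using aeval_algebraMap_apply ℂ (Real.sigmoid (-(π * y))) (logisticPoly k)
  simp only [hsummand, tsum_mul_left, expRatio_one_add_mul_I_div_two, heval] at h
  refine mul_left_cancel₀ (pow_ne_zero (k + 1) (two_ne_zero' ℂ)) ?_
  linear_combination h

lemma factorial_mul_oddLatticeSum {k : ℕ} (hk : Odd k) (hk1 : 1 < k) {y : ℝ} (hy : 0 < y) :
    k.factorial * oddLatticeSum (k + 1) y = -(2 * (π * I) ^ (k + 1)) *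
      ((∑' q : ℕ, (logisticPoly k).eval (Real.sigmoid (-((2 * q + 1) * π * y))) : ℝ) : ℂ) := by
  have hs := (hasSum_oddLatticeSum_sumInvPow (Nat.succ_lt_succ hk1) hy).summable.prod_symm
  obtain ⟨F, hF⟩ : ∃ F : ℤ → ℂ, ∀ q, F q =
    ∑' p : ℤ, (((2 * p + 1) + (2 * q + 1) * (y * I) : ℂ) ^ (k + 1))⁻¹ := ⟨_, fun _ ↦ rfl⟩
  have hsF : Summable F := hs.prod.congr fun q ↦ (hF q).symm
  have hnonneg (q : ℕ) : k.factorial * F q = -(π * I) ^ (k + 1) *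
      ((logisticPoly k).eval (Real.sigmoid (-((2 * q + 1) * π * y))) : ℝ) := by
    have h := factorial_mul_tsum_odd_add_pow hk1.le (y := (2 * q + 1) * y) (by positivity)
    rw [hk.neg_one_pow, ← mul_assoc π, mul_comm π] at h
    rw [hF]
    push_cast at h ⊢
    simp only [mul_assoc] at h ⊢
    linear_combination -h
  have hneg (q : ℕ) : F (-(q + 1)) = F q := by
    rw [hF, hF, ← (Equiv.subLeft (-1 : ℤ)).tsum_eq]
    refine tsum_congr fun p ↦ ?_
    rw [← hk.add_one.neg_pow, Equiv.subLeft_apply]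
    push_cast
    ring
  have hsum : oddLatticeSum (k + 1) y = ∑' q, F q := by
    rw [oddLatticeSum, ← (Equiv.prodComm ℤ ℤ).tsum_eq]
    exact hs.tsum_prod.trans (tsum_congr fun q ↦ (hF q).symm)
  rw [hsum, tsum_of_nat_of_neg_add_one (hsF.comp_injective Nat.cast_injective)
    (hsF.comp_injective (i := fun n : ℕ ↦ (-(n + 1) : ℤ)) fun a b h ↦ by simpa using h)]
  simp only [hneg]
  rw [← two_mul, mul_left_comm, ← tsum_mul_left, tsum_congr hnonneg, tsum_mul_left, ofReal_tsum]
  ring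

end Cotangent

/-! ### Termwise Mellin transform -/

section Mellin

open Set

lemma integral_pow_mul_comp_mul_left {c : ℝ} (hc : 0 < c) (j : ℕ) (g : ℝ → ℝ) :
    ∫ y in Ioi (0 : ℝ), y ^ j * g (c * y) =
      1 / c ^ (j + 1) * ∫ y in Ioi (0 : ℝ), y ^ j * g y := by
  have h := integral_comp_mul_left_Ioi (fun y ↦ y ^ j * g y) 0 hc
  rw [mul_zero, smul_eq_mul] at h
  simp only [mul_pow, mul_assoc, integral_const_mul] at h
  have := hc.ne'
  field_simp at h ⊢
  linear_combination h

lemma integrableOn_pow_mul_comp_mul_left {c : ℝ} (hc : 0 < c) {j : ℕ} {g : ℝ → ℝ}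
    (hg : IntegrableOn (fun y ↦ y ^ j * g y) (Ioi 0)) :
    IntegrableOn (fun y ↦ y ^ j * g (c * y)) (Ioi 0) := by
  have h := (integrableOn_Ioi_comp_mul_left_iff (fun y ↦ y ^ j * g y) 0 hc).2 (by rwa [mul_zero])
  refine (h.const_mul (c ^ j)⁻¹).congr (.of_forall fun y ↦ ?_)
  have := hc.ne'
  simp only [mul_pow]
  field_simp

lemma integral_pow_mul_tsum_comp_mul_left {ι : Type*} [Countable ι] {c : ι → ℝ} {j : ℕ}
    {g : ℝ → ℝ} (hc : ∀ i, 0 < c i) (hs : Summable fun i ↦ 1 / c i ^ (j + 1))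
    (hg : IntegrableOn (fun y ↦ y ^ j * g y) (Ioi 0)) :
    ∫ y in Ioi (0 : ℝ), y ^ j * ∑' i, g (c i * y) =
      (∑' i, 1 / c i ^ (j + 1)) * ∫ y in Ioi (0 : ℝ), y ^ j * g y := by
  have hnorm (i : ι) : ∫ y in Ioi (0 : ℝ), ‖y ^ j * g (c i * y)‖ =
      1 / c i ^ (j + 1) * ∫ y in Ioi (0 : ℝ), y ^ j * ‖g y‖ := by
    rw [← integral_pow_mul_comp_mul_left (hc i) j (fun y ↦ ‖g y‖)]
    refine setIntegral_congr_fun measurableSet_Ioi fun y (hy : 0 < y) ↦ ?_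
    simp only [norm_mul, Real.norm_of_nonneg (pow_nonneg hy.le j)]
  have hsum := hasSum_integral_of_summable_integral_norm
    (fun i ↦ integrableOn_pow_mul_comp_mul_left (hc i) hg)
    (by simpa only [hnorm] using hs.mul_right _)
  simp only [tsum_mul_left, integral_pow_mul_comp_mul_left (hc _)] at hsum
  rw [← hsum.tsum_eq, tsum_mul_right]

end Mellin

section OddZeta

lemma summable_one_div_odd_pow {k : ℕ} (hk : 1 < k) :
    Summable fun q : ℕ ↦ 1 / (2 * q + 1 : ℝ) ^ k := by
  have h := (Real.summable_one_div_nat_pow.2 hk).comp_injective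
    (i := fun q : ℕ ↦ 2 * q + 1) fun a b h ↦ by simpa using h
  simpa only [Function.comp_def, Nat.cast_add, Nat.cast_mul, Nat.cast_ofNat, Nat.cast_one] using h

lemma tsum_one_div_odd_pow_eq_riemannZeta {k : ℕ} (hk : 1 < k) :
    ((∑' q : ℕ, 1 / (2 * q + 1 : ℝ) ^ k : ℝ) : ℂ) = (1 - 1 / 2 ^ k) * riemannZeta k := by
  have hs := Real.summable_one_div_nat_pow.2 hk
  have h := tsum_even_add_odd (f := fun n : ℕ ↦ 1 / (n : ℝ) ^ k)
    (hs.comp_injective (i := fun q : ℕ ↦ 2 * q) fun a b h ↦ by simpa using h)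
    (hs.comp_injective (i := fun q : ℕ ↦ 2 * q + 1) fun a b h ↦ by simpa using h)
  have heven (q : ℕ) : 1 / ((2 * q : ℕ) : ℝ) ^ k = 1 / 2 ^ k * (1 / (q : ℝ) ^ k) := by
    rw [Nat.cast_mul, mul_pow, one_div_mul_one_div, Nat.cast_ofNat]
  simp only [heven, tsum_mul_left] at h
  push_cast at h
  rw [zeta_nat_eq_tsum_of_gt_one hk, eq_sub_of_add_eq' h]
  push_cast
  ring

end OddZeta

/-! ### The period ratio as integration variable -/

section Substitution

open Set

lemma periodRatio_image_Ioo : periodRatio '' Ioo 0 1 = Ioi 0 := by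
  refine subset_antisymm (image_subset_iff.2 fun m hm ↦ periodRatio_pos hm)
    fun y (hy : 0 < y) ↦ ?_
  exact ⟨rectParameter one_pos hy, ⟨rectParameter_pos _ _, rectParameter_lt_one _ _⟩, by
    rw [periodRatio_rectParameter, div_one]⟩

lemma integral_Ioi_eq_integral_comp_periodRatio (g : ℝ → ℝ) :
    ∫ y in Ioi (0 : ℝ), g y = ∫ m in Ioo (0 : ℝ) 1,
      π / (4 * (m * (1 - m)) * ellipticK m ^ 2) * g (periodRatio m) := by
  rw [← periodRatio_image_Ioo, integral_image_eq_integral_deriv_smul_of_antitoneOn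
    measurableSet_Ioo (fun m hm ↦ (hasDerivAt_periodRatio hm.1 hm.2).hasDerivWithinAt)
    strictAntiOn_periodRatio.antitoneOn]
  simp only [neg_neg, smul_eq_mul]

lemma integral_mul_comp_one_sub_sq (g : ℝ → ℝ) :
    ∫ k in (0 : ℝ)..1, k * g (1 - k ^ 2) = 1 / 2 * ∫ m in (0 : ℝ)..1, g m := by
  have h := intervalIntegral.integral_comp_mul_deriv_of_deriv_nonpos (a := 0) (b := 1) (g := g)
    (f := fun k : ℝ ↦ 1 - k ^ 2) (by fun_prop) (fun k _ ↦ (hasDerivAt_pow 2 k).const_sub 1)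
    fun k hk ↦ by
      rw [min_eq_left zero_le_one] at hk
      have := hk.1
      simp only [Left.neg_nonpos_iff]
      positivity
  rw [one_pow, sub_self, zero_pow two_ne_zero, sub_zero, intervalIntegral.integral_symm 0 1] at h
  rw [← neg_eq_iff_eq_neg.2 h, ← intervalIntegral.integral_neg,
    ← intervalIntegral.integral_const_mul]
  refine intervalIntegral.integral_congr fun k _ ↦ ?_
  simp only [Function.comp_apply]
  push_cast
  ring

lemma mul_ellipticK_pow_eight {m : ℝ} (hm : m ∈ Ioo 0 1) :
    m * (1 - m) * (2 - 17 * (m * (1 - m))) * ellipticK m ^ 8 = π ^ 8 / 8 *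
      ∑' q : ℕ, (logisticPoly 7).eval (Real.sigmoid (-((2 * q + 1) * π * periodRatio m))) := by
  have h := factorial_mul_oddLatticeSum (k := 7) (by decide) (by norm_num) (periodRatio_pos hm)
  rw [show (Nat.factorial 7 : ℂ) = 5040 by norm_num [Nat.factorial],
    oddLatticeSum_eight_periodRatio hm, mul_pow, pow_mul Complex.I 4 2, Complex.I_pow_four,
    one_pow] at h
  apply Complex.ofReal_injective
  push_cast at h ⊢
  linear_combination -1 / 16 * h

lemma integral_mul_ellipticK_one_sub_pow_six :
    ∫ m in (0 : ℝ)..1, (2 - 17 * (m * (1 - m))) * ellipticK (1 - m) ^ 6 =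
      π ^ 7 / 2 * ∫ y in Ioi (0 : ℝ), y ^ 6 *
        ∑' q : ℕ, (logisticPoly 7).eval (Real.sigmoid (-((2 * q + 1) * π * y))) := by
  rw [integral_Ioi_eq_integral_comp_periodRatio, intervalIntegral.integral_of_le zero_le_one,
    integral_Ioc_eq_integral_Ioo, ← integral_const_mul]
  refine setIntegral_congr_fun measurableSet_Ioo fun m hm ↦ ?_
  have hK := ellipticK_pos hm.2
  have hm₁ : 0 < 1 - m := sub_pos.2 hm.2
  have hm₀ := hm.1
  have h := mul_ellipticK_pow_eight hm
  generalize ∑' q : ℕ, (logisticPoly 7).eval _ = S at h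
  simp only [periodRatio]
  field_simp
  linear_combination 8 * ellipticK (1 - m) ^ 6 * h

lemma integral_pow_six_mul_tsum_logisticPoly :
    ∫ y in Ioi (0 : ℝ), y ^ 6 *
        ∑' q : ℕ, (logisticPoly 7).eval (Real.sigmoid (-((2 * q + 1) * π * y))) =
      360 / π ^ 7 * ∑' q : ℕ, 1 / (2 * q + 1 : ℝ) ^ 7 := by
  have hodd (q : ℕ) : 1 / ((2 * q + 1) * π) ^ 7 = 1 / π ^ 7 * (1 / (2 * q + 1 : ℝ) ^ 7) := by
    rw [mul_pow, one_div_mul_one_div_rev]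
  have hsum : Summable fun q : ℕ ↦ 1 / ((2 * q + 1) * π) ^ 7 := by
    simpa only [hodd] using (summable_one_div_odd_pow (by norm_num)).mul_left _
  rw [integral_pow_mul_tsum_comp_mul_left (g := fun y ↦ (logisticPoly 7).eval (Real.sigmoid (-y)))
    (fun q ↦ by positivity) hsum (integrableOn_pow_mul_eval_logisticPoly 6 7),
    integral_pow_mul_eval_logisticPoly_succ, tsum_congr hodd, tsum_mul_left,
    show (Nat.factorial 6 : ℝ) = 720 by norm_num [Nat.factorial]]
  ring

end Substitution

theorem stmt_17 :
    ((∫ k in (0:ℝ)..(1:ℝ), k * (2 - 17 * k^2 + 17 * k^4) * (EllK k)^6 : ℝ) : ℂ)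
      = 5715/64 * riemannZeta 7 := by
  have hreal : ∫ k in (0:ℝ)..(1:ℝ), k * (2 - 17 * k^2 + 17 * k^4) * (EllK k)^6 =
      90 * ∑' q : ℕ, 1 / (2 * q + 1 : ℝ) ^ 7 :=
    calc ∫ k in (0:ℝ)..(1:ℝ), k * (2 - 17 * k^2 + 17 * k^4) * (EllK k)^6
      _ = 1 / 2 * ∫ m in (0:ℝ)..1, (2 - 17 * (m * (1 - m))) * ellipticK (1 - m) ^ 6 := by
        rw [← integral_mul_comp_one_sub_sq]
        refine intervalIntegral.integral_congr fun k _ ↦ ?_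
        simp only [EllK_eq_ellipticK, sub_sub_cancel]
        ring
      _ = 90 * ∑' q : ℕ, 1 / (2 * q + 1 : ℝ) ^ 7 := by
        rw [integral_mul_ellipticK_one_sub_pow_six, integral_pow_six_mul_tsum_logisticPoly]
        field_simp
        ring
  rw [hreal, Complex.ofReal_mul, tsum_one_div_odd_pow_eq_riemannZeta (by norm_num)]
  push_cast
  ring
end

section
/- ∫₀¹ k(4+k²-k⁴) K'(k)⁷ dk = 3Γ(1/4)¹⁶/(2¹²·5·π⁴). -/
open scoped Real
open MeasureTheory

noncomputable def EllE (k : ℝ) : ℝ :=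
  ∫ x in (0:ℝ)..(1:ℝ), Real.sqrt ((1 - k^2 * x^2) / (1 - x^2))

noncomputable def EllK' (k : ℝ) : ℝ := EllK (Real.sqrt (1 - k^2))

/-!
On the imaginary axis `K'` is parametrised by theta constants: if `k' = θ₄² / θ₃²` at the point
`i y`, then `K'(k') = π / 2 * θ₃²`. Substituting this modulus for `k` turns the integrand into a
form of weight nine, which is the fourth Rankin–Cohen bracket of `θ₃` with itself and hence the
theta series `∑ Re (z⁸) exp (-π y |z|²)` over the Gaussian integers. Its Mellin transform at `1`
equals, by the functional equation, the one at `8`, which is a multiple of `∑ z⁻⁸ = G₈(i)`. Finally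
`7 G₈ = 3 G₄²`, and `G₄(i)` is found by computing the real half-period `1 / 2` of `℘` as a beta
integral.

The identities between theta constants are proved by doubling: a function of `y` that is invariant
under `y ↦ 2 y` and has a limit at infinity is constant.
-/

open Filter Topology

section Doubling

lemma frequently_atTop_of_two_mul {p : ℝ → Prop} (hp : ∀ y, 0 < y → p y → p (2 * y))
    {y : ℝ} (hy : 0 < y) (h : p y) : ∃ᶠ z in atTop, p z := by
  have hpow (n : ℕ) : p (2 ^ n * y) := by
    induction n with
    | zero => simpa using h
    | succ n ih =>
      rw [pow_succ', mul_assoc]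
      exact hp _ (by positivity) ih
  exact ((tendsto_pow_atTop_atTop_of_one_lt one_lt_two).atTop_mul_const hy).frequently
    (Frequently.of_forall hpow)

lemma eq_of_two_mul_eq_of_tendsto {X : Type*} [TopologicalSpace X] [T1Space X] {f : ℝ → X}
    {a : X} (hf : ∀ y, 0 < y → f (2 * y) = f y) (ha : Tendsto f atTop (𝓝 a))
    {y : ℝ} (hy : 0 < y) : f y = a :=
  (isClosed_singleton.mem_of_frequently_of_tendsto
    (frequently_atTop_of_two_mul (p := fun z => f z = f y) (fun z hz h => (hf z hz).trans h) hy rfl)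
    ha).symm

lemma hasDerivAt_comp_two_mul {f : ℝ → ℝ} {f' y : ℝ} (hf : HasDerivAt f f' (2 * y)) :
    HasDerivAt (fun z => f (2 * z)) (2 * f') y := by
  have hmul : HasDerivAt (fun z : ℝ => 2 * z) 2 y := by
    simpa using (hasDerivAt_id y).const_mul (2 : ℝ)
  exact (hf.comp y hmul).congr_deriv (mul_comm _ _)

end Doubling

section ThetaSeries

/-- The series `∑ c n * exp (-π n² y)` over the integers: the one-dimensional theta series with
coefficients `c` at the point `i y` of the imaginary axis. -/
noncomputable def thetaSeries (c : ℤ → ℝ) (y : ℝ) : ℝ :=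
  ∑' n : ℤ, c n * Real.exp (-π * y * n ^ 2)

/-- The coefficient sequences whose theta series converges absolutely on the half-line `0 < y`. -/
def ThetaSummable (c : ℤ → ℝ) : Prop :=
  ∀ y : ℝ, 0 < y → Summable fun n : ℤ => |c n| * Real.exp (-π * y * n ^ 2)

variable {c d : ℤ → ℝ} {y : ℝ}

lemma ThetaSummable.summable_norm (hc : ThetaSummable c) (hy : 0 < y) :
    Summable fun n : ℤ => ‖c n * Real.exp (-π * y * n ^ 2)‖ := by
  simpa only [norm_mul, Real.norm_eq_abs, Real.abs_exp] using hc y hy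

lemma ThetaSummable.summable (hc : ThetaSummable c) (hy : 0 < y) :
    Summable fun n : ℤ => c n * Real.exp (-π * y * n ^ 2) :=
  (hc.summable_norm hy).of_norm

lemma ThetaSummable.of_abs_le {C : ℝ} (hd : ThetaSummable d) (h : ∀ n, |c n| ≤ C * |d n|) :
    ThetaSummable c := fun y hy =>
  .of_nonneg_of_le (fun n => by positivity)
    (fun n => (mul_le_mul_of_nonneg_right (h n) (Real.exp_nonneg _)).trans_eq (mul_assoc _ _ _))
    ((hd y hy).mul_left C)

lemma thetaSummable_one : ThetaSummable fun _ => 1 := by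
  intro y hy
  refine (summable_pow_mul_jacobiTheta₂_term_bound 0 hy 0).congr fun n => ?_
  simp only [pow_zero, one_mul, abs_one, mul_zero, zero_mul, sub_zero, mul_assoc]

lemma thetaSummable_neg_one_zpow : ThetaSummable fun n => (-1) ^ n :=
  thetaSummable_one.of_abs_le (C := 1) fun n => by simp

lemma mul_exp_neg_mul_le (hy : 0 < y) (x : ℝ) :
    x * Real.exp (-y * x) ≤ 2 / y * Real.exp (-(y / 2) * x) := by
  have hexp : y / 2 * x ≤ Real.exp (y / 2 * x) := by linarith [Real.add_one_le_exp (y / 2 * x)]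
  calc x * Real.exp (-y * x)
      = 2 / y * (y / 2 * x) * Real.exp (-y * x) := by field_simp
    _ ≤ 2 / y * Real.exp (y / 2 * x) * Real.exp (-y * x) := by gcongr
    _ = 2 / y * Real.exp (-(y / 2) * x) := by rw [mul_assoc, ← Real.exp_add]; ring_nf

lemma ThetaSummable.sq_mul (hc : ThetaSummable c) :
    ThetaSummable fun n => -π * n ^ 2 * c n := by
  intro y hy
  refine .of_nonneg_of_le (fun n => by positivity) (fun n => ?_)
    ((hc (y / 2) (by positivity)).mul_left (2 / y))
  have hπ : 0 ≤ π * (n : ℝ) ^ 2 := by positivity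
  calc |-π * (n : ℝ) ^ 2 * c n| * Real.exp (-π * y * n ^ 2)
      = |c n| * (π * n ^ 2 * Real.exp (-y * (π * n ^ 2))) := by
        rw [abs_mul, neg_mul, abs_neg, abs_of_nonneg hπ]; ring_nf
    _ ≤ |c n| * (2 / y * Real.exp (-(y / 2) * (π * n ^ 2))) := by
        gcongr _ * ?_; exact mul_exp_neg_mul_le hy _
    _ = 2 / y * (|c n| * Real.exp (-π * (y / 2) * n ^ 2)) := by ring_nf

lemma hasDerivAt_thetaSeries (hc : ThetaSummable c) (hy : 0 < y) :
    HasDerivAt (thetaSeries c) (thetaSeries (fun n => -π * n ^ 2 * c n) y) y := by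
  refine hasDerivAt_tsum_of_isPreconnected (t := Set.Ioi (y / 2)) (y₀ := y)
    (g := fun n z => c n * Real.exp (-π * z * n ^ 2))
    (g' := fun n z => -π * n ^ 2 * c n * Real.exp (-π * z * n ^ 2))
    (hc.sq_mul _ (half_pos hy)) isOpen_Ioi isPreconnected_Ioi ?_ ?_ (by simp [hy])
    (hc.summable hy) (by simp [hy])
  · intro n z _
    have h := ((((hasDerivAt_id z).const_mul (-π)).mul_const ((n : ℝ) ^ 2)).exp).const_mul (c n)
    exact h.congr_deriv (by simp only [id, mul_one]; ring)
  · intro n z hz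
    rw [norm_mul, Real.norm_eq_abs, Real.norm_eq_abs, Real.abs_exp]
    have hyz : π * (n : ℝ) ^ 2 * (y / 2) ≤ π * (n : ℝ) ^ 2 * z := by
      gcongr; exact le_of_lt hz
    gcongr _ * Real.exp ?_
    linarith

lemma one_le_int_sq {n : ℤ} (hn : n ≠ 0) : (1 : ℝ) ≤ (n : ℝ) ^ 2 := by
  exact_mod_cast (one_le_sq_iff_one_le_abs n).2 (Int.one_le_abs hn)

lemma tendsto_exp_neg_pi_mul_int_sq_sub_one {n : ℤ} (hn : n ≠ 0) :
    Tendsto (fun y => Real.exp (-π * y * ((n : ℝ) ^ 2 - 1))) atTop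
      (𝓝 (if n ∈ ({1, -1} : Finset ℤ) then 1 else 0)) := by
  split_ifs with h
  · have hn1 : (n : ℝ) ^ 2 - 1 = 0 := by
      rcases (by simpa using h : n = 1 ∨ n = -1) with rfl | rfl <;> norm_num
    simp [hn1]
  · have hn1 : 0 < (n : ℝ) ^ 2 - 1 := by
      refine sub_pos.2 (lt_of_le_of_ne (one_le_int_sq hn) fun heq => h ?_)
      simpa using (by exact_mod_cast heq.symm : n ^ 2 = 1)
    refine (Real.tendsto_exp_neg_atTop_nhds_zero.comp
      (tendsto_id.const_mul_atTop (mul_pos Real.pi_pos hn1))).congr fun y => ?_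
    simp only [Function.comp_apply, id]
    ring_nf

lemma tendsto_thetaSeries_mul_exp (hc : ThetaSummable c) (h0 : c 0 = 0) :
    Tendsto (fun y => thetaSeries c y * Real.exp (π * y)) atTop (𝓝 (c 1 + c (-1))) := by
  have hexp (y : ℝ) (n : ℤ) : c n * Real.exp (-π * y * n ^ 2) * Real.exp (π * y)
      = c n * Real.exp (-π * y * ((n : ℝ) ^ 2 - 1)) := by
    rw [mul_assoc, ← Real.exp_add]; ring_nf
  have hlim : ∑' n : ℤ, c n * (if n ∈ ({1, -1} : Finset ℤ) then 1 else 0) = c 1 + c (-1) := by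
    rw [tsum_eq_sum (s := {1, -1}) fun n hn => by rw [if_neg hn, mul_zero]]
    simp
  simp_rw [← hlim, thetaSeries, ← tsum_mul_right, hexp]
  refine tendsto_tsum_of_dominated_convergence ((hc 1 one_pos).mul_left (Real.exp π)) ?_ ?_
  · intro n
    rcases eq_or_ne n 0 with rfl | hn
    · simp [h0]
    · exact (tendsto_exp_neg_pi_mul_int_sq_sub_one hn).const_mul _
  · filter_upwards [eventually_ge_atTop 1] with y hy n
    rcases eq_or_ne n 0 with rfl | hn
    · simp [h0]
    rw [norm_mul, Real.norm_eq_abs, Real.norm_eq_abs, Real.abs_exp, mul_left_comm, ← Real.exp_add]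
    gcongr _ * Real.exp ?_
    nlinarith [Real.pi_pos, mul_nonneg Real.pi_pos.le (sub_nonneg.2 (one_le_int_sq hn))]

lemma tendsto_pow_mul_thetaSeries (hc : ThetaSummable c) (h0 : c 0 = 0) (k : ℕ) :
    Tendsto (fun y => y ^ k * thetaSeries c y) atTop (𝓝 0) := by
  have hexp : Tendsto (fun y : ℝ => y ^ k * Real.exp (-π * y)) atTop (𝓝 0) := by
    simpa only [Real.rpow_natCast] using
      tendsto_rpow_mul_exp_neg_mul_atTop_nhds_zero k π Real.pi_pos
  have h := hexp.mul (tendsto_thetaSeries_mul_exp hc h0)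
  rw [zero_mul] at h
  refine h.congr fun y => ?_
  rw [mul_mul_mul_comm, ← Real.exp_add]
  simp

lemma tendsto_thetaSeries (hc : ThetaSummable c) :
    Tendsto (thetaSeries c) atTop (𝓝 (c 0)) := by
  have hupdate : ThetaSummable (Function.update c 0 0) := hc.of_abs_le (C := 1) fun n => by
    rcases eq_or_ne n 0 with rfl | hn <;> simp [*]
  have h := (tendsto_pow_mul_thetaSeries hupdate (by simp) 0).add_const (c 0)
  rw [zero_add] at h
  refine h.congr' ?_
  filter_upwards [eventually_gt_atTop 0] with y hy
  rw [pow_zero, one_mul, thetaSeries, thetaSeries, (hc.summable hy).tsum_eq_add_tsum_ite 0,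
    add_comm]
  congr 1
  · simp
  · refine tsum_congr fun n => ?_
    rcases eq_or_ne n 0 with rfl | hn <;> simp [*]

lemma ThetaSummable.hasSum_mul (hc : ThetaSummable c) (hd : ThetaSummable d) (hy : 0 < y) :
    HasSum (fun p : ℤ × ℤ =>
      c p.1 * d p.2 * Real.exp (-π * y * ((p.1 : ℝ) ^ 2 + (p.2 : ℝ) ^ 2)))
      (thetaSeries c y * thetaSeries d y) := by
  have h := (hc.summable hy).hasSum.mul (hd.summable hy).hasSum
    (summable_mul_of_summable_norm (hc.summable_norm hy) (hd.summable_norm hy))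
  simp only [mul_mul_mul_comm, ← Real.exp_add, ← mul_add] at h
  exact h

lemma hasSum_add_sub_iff {M : Type*} [AddCommMonoid M] [TopologicalSpace M] {f : ℤ × ℤ → M}
    {a : M} (hf : ∀ p : ℤ × ℤ, ¬ Even (p.1 + p.2) → f p = 0) :
    HasSum (fun p : ℤ × ℤ => f (p.1 + p.2, p.1 - p.2)) a ↔ HasSum f a := by
  have hinj : Function.Injective fun p : ℤ × ℤ => (p.1 + p.2, p.1 - p.2) := by
    rintro ⟨m, n⟩ ⟨m', n'⟩ h
    simp only [Prod.mk.injEq] at h ⊢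
    omega
  refine hinj.hasSum_iff fun p hp => hf p fun ⟨r, hr⟩ => hp ⟨(r, p.1 - r), ?_⟩
  ext <;> dsimp only <;> omega

end ThetaSeries

section ThetaConstants

/-- The theta constant `θ₃` at the point `i y` of the imaginary axis. -/
noncomputable def theta₃ : ℝ → ℝ := thetaSeries fun _ => 1

/-- The theta constant `θ₄` at the point `i y` of the imaginary axis. -/
noncomputable def theta₄ : ℝ → ℝ := thetaSeries fun n => (-1) ^ n

variable {y : ℝ}

lemma theta₃_inv_sq (hy : 0 < y) : theta₃ y⁻¹ ^ 2 = y * theta₃ y ^ 2 := by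
  have h := Real.tsum_exp_neg_mul_int_sq hy
  have htheta : theta₃ y = 1 / √y * theta₃ y⁻¹ := by
    simp only [theta₃, thetaSeries, one_mul]
    rw [h, Real.sqrt_eq_rpow]
    simp only [div_eq_mul_inv]
  rw [htheta, mul_pow, div_pow, Real.sq_sqrt hy.le]
  field_simp

lemma theta₃_sq_add_theta₄_sq (hy : 0 < y) :
    theta₃ y ^ 2 + theta₄ y ^ 2 = 2 * theta₃ (2 * y) ^ 2 := by
  have hlhs := (thetaSummable_one.hasSum_mul thetaSummable_one hy).add
    (thetaSummable_neg_one_zpow.hasSum_mul thetaSummable_neg_one_zpow hy)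
  have hrhs := (thetaSummable_one.hasSum_mul thetaSummable_one (mul_pos two_pos hy)).mul_left 2
  rw [← hasSum_add_sub_iff] at hlhs
  · rw [sq, sq, sq]
    refine hlhs.unique (hrhs.congr_fun fun p => ?_)
    have hparity : (-1 : ℝ) ^ (p.1 + p.2) * (-1) ^ (p.1 - p.2) = 1 := by
      rw [← zpow_add₀ (by norm_num)]
      exact Even.neg_one_zpow ⟨p.1, by ring⟩
    rw [hparity]
    push_cast
    ring_nf
  · intro p hp
    rw [← zpow_add₀ (by norm_num), (Int.not_even_iff_odd.1 hp).neg_one_zpow]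
    ring

lemma theta₃_mul_theta₄ (hy : 0 < y) : theta₃ y * theta₄ y = theta₄ (2 * y) ^ 2 := by
  have hlhs := (thetaSummable_one.hasSum_mul thetaSummable_neg_one_zpow hy).add
    (thetaSummable_neg_one_zpow.hasSum_mul thetaSummable_one hy)
  have hrhs := (thetaSummable_neg_one_zpow.hasSum_mul thetaSummable_neg_one_zpow
    (mul_pos two_pos hy)).mul_left 2
  suffices h : theta₃ y * theta₄ y + theta₄ y * theta₃ y
      = 2 * (theta₄ (2 * y) * theta₄ (2 * y)) by linarith
  rw [← hasSum_add_sub_iff] at hlhs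
  · refine hlhs.unique (hrhs.congr_fun fun p => ?_)
    have hsub : (-1 : ℝ) ^ (p.1 - p.2) = (-1) ^ (p.1 + p.2) := by
      rw [show p.1 + p.2 = p.1 - p.2 + 2 * p.2 by ring, zpow_add₀ (by norm_num),
        (even_two_mul _).neg_one_zpow, mul_one]
    rw [hsub, zpow_add₀ (by norm_num)]
    push_cast
    ring_nf
  · intro p hp
    have hodd := (Int.not_even_iff_odd.1 hp).neg_one_zpow (α := ℝ)
    rw [zpow_add₀ (by norm_num)] at hodd
    rcases Int.even_or_odd p.1 with h | h <;> simp_all [h.neg_one_zpow]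

lemma one_le_theta₃ (hy : 0 < y) : 1 ≤ theta₃ y := by
  simpa [theta₃, thetaSeries] using
    (thetaSummable_one.summable hy).le_tsum 0 fun n _ => by positivity

lemma theta₃_pos (hy : 0 < y) : 0 < theta₃ y := one_pos.trans_le (one_le_theta₃ hy)

lemma tendsto_theta₃ : Tendsto theta₃ atTop (𝓝 1) := tendsto_thetaSeries thetaSummable_one

lemma tendsto_theta₄ : Tendsto theta₄ atTop (𝓝 1) := by
  rw [← zpow_zero (-1 : ℝ)]
  exact tendsto_thetaSeries thetaSummable_neg_one_zpow

lemma theta₄_pos (hy : 0 < y) : 0 < theta₄ y := by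
  have hnonneg : 0 ≤ theta₄ y :=
    nonneg_of_mul_nonneg_right ((sq_nonneg _).trans_eq (theta₃_mul_theta₄ hy).symm) (theta₃_pos hy)
  refine hnonneg.lt_of_ne' fun hzero => zero_ne_one (α := ℝ) ?_
  refine (isClosed_singleton.mem_of_frequently_of_tendsto (s := {(0 : ℝ)})
    (frequently_atTop_of_two_mul (p := fun z => theta₄ z = 0) (fun z hz h => ?_) hy hzero)
    tendsto_theta₄).symm
  rw [← sq_eq_zero_iff, ← theta₃_mul_theta₄ hz, h, mul_zero]

lemma thetaSummable_one_sub_neg_one_zpow : ThetaSummable fun n => 1 - (-1) ^ n :=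
  thetaSummable_one.of_abs_le (C := 2) fun n => by
    rcases Int.even_or_odd n with h | h <;> norm_num [h.neg_one_zpow]

lemma theta₃_sub_theta₄ (hy : 0 < y) :
    theta₃ y - theta₄ y = thetaSeries (fun n => 1 - (-1) ^ n) y := by
  simp only [theta₃, theta₄, thetaSeries, sub_mul]
  exact ((thetaSummable_one.summable hy).tsum_sub (thetaSummable_neg_one_zpow.summable hy)).symm

lemma theta₄_lt_theta₃ (hy : 0 < y) : theta₄ y < theta₃ y := by
  rw [← sub_pos, theta₃_sub_theta₄ hy]
  refine (thetaSummable_one_sub_neg_one_zpow.summable hy).tsum_pos (fun n => ?_) 1 ?_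
  · rcases Int.even_or_odd n with h | h <;> norm_num [h.neg_one_zpow, Real.exp_nonneg]
  · norm_num [Real.exp_pos]

lemma tendsto_theta₃_sub_theta₄_mul_exp :
    Tendsto (fun y => (theta₃ y - theta₄ y) * Real.exp (π * y)) atTop (𝓝 4) := by
  have h := tendsto_thetaSeries_mul_exp thetaSummable_one_sub_neg_one_zpow (by simp)
  norm_num at h
  refine h.congr' ?_
  filter_upwards [eventually_gt_atTop 0] with y hy
  rw [theta₃_sub_theta₄ hy]

end ThetaConstants

section ComplModulus

/-- The complementary modulus `k' = θ₄² / θ₃²` at the point `i y` of the imaginary axis. -/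
noncomputable def complModulus (y : ℝ) : ℝ := theta₄ y ^ 2 / theta₃ y ^ 2

variable {y : ℝ}

lemma complModulus_pos (hy : 0 < y) : 0 < complModulus y :=
  div_pos (pow_pos (theta₄_pos hy) 2) (pow_pos (theta₃_pos hy) 2)

lemma complModulus_lt_one (hy : 0 < y) : complModulus y < 1 :=
  (div_lt_one (pow_pos (theta₃_pos hy) 2)).2
    (pow_lt_pow_left₀ (theta₄_lt_theta₃ hy) (theta₄_pos hy).le two_ne_zero)

lemma theta₄_sq_eq_complModulus_mul (hy : 0 < y) :
    theta₄ y ^ 2 = complModulus y * theta₃ y ^ 2 :=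
  (div_mul_cancel₀ _ (pow_pos (theta₃_pos hy) 2).ne').symm

lemma tendsto_complModulus_atTop : Tendsto complModulus atTop (𝓝 1) := by
  have h := (tendsto_theta₄.pow 2).div (tendsto_theta₃.pow 2) (by norm_num)
  rwa [div_self (by norm_num)] at h

lemma theta₄_inv_sq (hy : 0 < y) :
    theta₄ y⁻¹ ^ 2 = y * (theta₃ (y / 2) ^ 2 - theta₃ y ^ 2) := by
  have hsum := theta₃_sq_add_theta₄_sq (inv_pos.2 hy)
  have hhalf := theta₃_inv_sq (half_pos hy)
  rw [theta₃_inv_sq hy, show 2 * y⁻¹ = (y / 2)⁻¹ by rw [inv_div, div_eq_mul_inv], hhalf] at hsum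
  linarith

lemma complModulus_inv_sq (hy : 0 < y) : complModulus y⁻¹ ^ 2 = 1 - complModulus y ^ 2 := by
  have h₃ := theta₃_pos hy
  have hsum := theta₃_sq_add_theta₄_sq (half_pos hy)
  have hmul := theta₃_mul_theta₄ (half_pos hy)
  rw [mul_div_cancel₀ _ two_ne_zero] at hsum hmul
  rw [complModulus, complModulus, theta₄_inv_sq hy, theta₃_inv_sq hy, ← hmul]
  field_simp
  linear_combination theta₃ (y / 2) ^ 2 * hsum

lemma tendsto_complModulus_nhdsGT_zero : Tendsto complModulus (𝓝[>] 0) (𝓝 0) := by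
  have h : Tendsto (fun y => √(1 - complModulus y⁻¹ ^ 2)) (𝓝[>] 0) (𝓝 0) := by
    have hinv := tendsto_complModulus_atTop.comp tendsto_inv_nhdsGT_zero
    simpa using ((hinv.pow 2).const_sub 1).sqrt
  refine h.congr' ?_
  filter_upwards [self_mem_nhdsWithin] with y hy
  rw [complModulus_inv_sq hy, sub_sub_cancel, Real.sqrt_sq (complModulus_pos hy).le]

end ComplModulus

section JacobiDerivative

variable {y : ℝ}

lemma hasDerivAt_theta₃ (hy : 0 < y) :
    HasDerivAt theta₃ (theta₃ y * logDeriv theta₃ y) y := by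
  rw [logDeriv_apply, mul_div_cancel₀ _ (theta₃_pos hy).ne']
  exact (hasDerivAt_thetaSeries thetaSummable_one hy).differentiableAt.hasDerivAt

lemma hasDerivAt_theta₄ (hy : 0 < y) :
    HasDerivAt theta₄ (theta₄ y * logDeriv theta₄ y) y := by
  rw [logDeriv_apply, mul_div_cancel₀ _ (theta₄_pos hy).ne']
  exact (hasDerivAt_thetaSeries thetaSummable_neg_one_zpow hy).differentiableAt.hasDerivAt

lemma hasDerivAt_unique_of_eqOn_Ioi {f g : ℝ → ℝ} {f' g' : ℝ} (hfg : ∀ z, 0 < z → f z = g z)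
    (hy : 0 < y) (hf : HasDerivAt f f' y) (hg : HasDerivAt g g' y) : f' = g' :=
  hf.unique (hg.congr_of_eventuallyEq (mem_of_superset (Ioi_mem_nhds hy) hfg))

lemma logDeriv_theta₃_two_mul (hy : 0 < y) :
    4 * logDeriv theta₃ (2 * y) * theta₃ (2 * y) ^ 2
      = logDeriv theta₃ y * theta₃ y ^ 2 + logDeriv theta₄ y * theta₄ y ^ 2 := by
  have h := hasDerivAt_unique_of_eqOn_Ioi (fun z => theta₃_sq_add_theta₄_sq) hy
    (((hasDerivAt_theta₃ hy).fun_pow 2).add ((hasDerivAt_theta₄ hy).fun_pow 2))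
    (((hasDerivAt_comp_two_mul (hasDerivAt_theta₃ (mul_pos two_pos hy))).fun_pow 2).const_mul 2)
  norm_num at h
  linarith

lemma logDeriv_theta₄_two_mul (hy : 0 < y) :
    4 * logDeriv theta₄ (2 * y) = logDeriv theta₃ y + logDeriv theta₄ y := by
  have h := hasDerivAt_unique_of_eqOn_Ioi (fun z => theta₃_mul_theta₄) hy
    ((hasDerivAt_theta₃ hy).fun_mul (hasDerivAt_theta₄ hy))
    ((hasDerivAt_comp_two_mul (hasDerivAt_theta₄ (mul_pos two_pos hy))).fun_pow 2)
  have hpos := mul_pos (theta₃_pos hy) (theta₄_pos hy)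
  refine mul_left_cancel₀ hpos.ne' ?_
  norm_num at h
  linear_combination (4 * logDeriv theta₄ (2 * y)) * theta₃_mul_theta₄ hy - h

lemma theta₃_pow_four_sub_theta₄_pow_four_two_mul (hy : 0 < y) :
    theta₃ (2 * y) ^ 4 - theta₄ (2 * y) ^ 4 = (theta₃ y ^ 2 - theta₄ y ^ 2) ^ 2 / 4 := by
  have hsum := theta₃_sq_add_theta₄_sq hy
  have hmul := theta₃_mul_theta₄ hy
  linear_combination (-(theta₃ y ^ 2 + theta₄ y ^ 2) / 4 - theta₃ (2 * y) ^ 2 / 2) * hsum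
    + (theta₃ y * theta₄ y + theta₄ (2 * y) ^ 2) * hmul

lemma theta₃_pow_four_sub_theta₄_pow_four_pos (hy : 0 < y) : 0 < theta₃ y ^ 4 - theta₄ y ^ 4 :=
  sub_pos.2 (pow_lt_pow_left₀ (theta₄_lt_theta₃ hy) (theta₄_pos hy).le four_ne_zero)

lemma logDeriv_sub_div_two_mul (hy : 0 < y) :
    (logDeriv theta₄ (2 * y) - logDeriv theta₃ (2 * y)) / (theta₃ (2 * y) ^ 4 - theta₄ (2 * y) ^ 4)
      = (logDeriv theta₄ y - logDeriv theta₃ y) / (theta₃ y ^ 4 - theta₄ y ^ 4) := by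
  have hsum := theta₃_sq_add_theta₄_sq hy
  have h₃ := theta₃_pos (mul_pos two_pos hy)
  have hlog₃ := logDeriv_theta₃_two_mul hy
  have hlog₄ := logDeriv_theta₄_two_mul hy
  rw [div_eq_div_iff (theta₃_pow_four_sub_theta₄_pow_four_pos (mul_pos two_pos hy)).ne'
    (theta₃_pow_four_sub_theta₄_pow_four_pos hy).ne',
    theta₃_pow_four_sub_theta₄_pow_four_two_mul hy]
  refine mul_left_cancel₀ (pow_pos h₃ 2).ne' ?_
  linear_combination (theta₃ y ^ 4 - theta₄ y ^ 4) / 4 * (theta₃ (2 * y) ^ 2 * hlog₄ - hlog₃)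
    - ((theta₃ y ^ 4 - theta₄ y ^ 4) * (logDeriv theta₃ y + logDeriv theta₄ y)
      - (logDeriv theta₄ y - logDeriv theta₃ y) * (theta₃ y ^ 2 - theta₄ y ^ 2) ^ 2) / 8 * hsum

lemma tendsto_logDeriv_theta₃_mul_exp :
    Tendsto (fun y => logDeriv theta₃ y * Real.exp (π * y)) atTop (𝓝 (-(2 * π))) := by
  have h := (tendsto_thetaSeries_mul_exp thetaSummable_one.sq_mul (by simp)).div tendsto_theta₃
    one_ne_zero
  convert h.congr' ?_ using 2
  · norm_num; ring
  filter_upwards [eventually_gt_atTop 0] with y hy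
  rw [logDeriv_apply, theta₃, (hasDerivAt_thetaSeries thetaSummable_one hy).deriv, Pi.div_apply,
    div_mul_eq_mul_div]

lemma tendsto_logDeriv_theta₄_mul_exp :
    Tendsto (fun y => logDeriv theta₄ y * Real.exp (π * y)) atTop (𝓝 (2 * π)) := by
  have h := (tendsto_thetaSeries_mul_exp thetaSummable_neg_one_zpow.sq_mul (by simp)).div
    tendsto_theta₄ one_ne_zero
  convert h.congr' ?_ using 2
  · norm_num; ring
  filter_upwards [eventually_gt_atTop 0] with y hy
  rw [logDeriv_apply, theta₄, (hasDerivAt_thetaSeries thetaSummable_neg_one_zpow hy).deriv,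
    Pi.div_apply, div_mul_eq_mul_div]

lemma theta₃_pow_four_sub_theta₄_pow_four (y : ℝ) : theta₃ y ^ 4 - theta₄ y ^ 4
    = (theta₃ y - theta₄ y) * ((theta₃ y + theta₄ y) * (theta₃ y ^ 2 + theta₄ y ^ 2)) := by
  ring

lemma tendsto_logDeriv_sub_div :
    Tendsto (fun y => (logDeriv theta₄ y - logDeriv theta₃ y) / (theta₃ y ^ 4 - theta₄ y ^ 4))
      atTop (𝓝 (π / 4)) := by
  have hden := tendsto_theta₃_sub_theta₄_mul_exp.mul ((tendsto_theta₃.add tendsto_theta₄).mul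
    ((tendsto_theta₃.pow 2).add (tendsto_theta₄.pow 2)))
  convert ((tendsto_logDeriv_theta₄_mul_exp.sub tendsto_logDeriv_theta₃_mul_exp).div hden
    (by norm_num)).congr fun y => ?_ using 2
  · ring
  · rw [Pi.div_apply, ← sub_mul, mul_right_comm, ← theta₃_pow_four_sub_theta₄_pow_four,
      mul_div_mul_right _ _ (Real.exp_pos _).ne']

lemma logDeriv_theta₄_sub_logDeriv_theta₃ (hy : 0 < y) :
    logDeriv theta₄ y - logDeriv theta₃ y = π / 4 * (theta₃ y ^ 4 - theta₄ y ^ 4) :=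
  (div_eq_iff (theta₃_pow_four_sub_theta₄_pow_four_pos hy).ne').1
    (eq_of_two_mul_eq_of_tendsto (fun _ => logDeriv_sub_div_two_mul) tendsto_logDeriv_sub_div hy)

lemma hasDerivAt_complModulus (hy : 0 < y) :
    HasDerivAt complModulus
      (π / 2 * complModulus y * (1 - complModulus y ^ 2) * theta₃ y ^ 4) y := by
  have h₃ := theta₃_pos hy
  refine (((hasDerivAt_theta₄ hy).fun_pow 2).fun_div ((hasDerivAt_theta₃ hy).fun_pow 2)
    (by positivity)).congr_deriv ?_
  have h := logDeriv_theta₄_sub_logDeriv_theta₃ hy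
  rw [sub_eq_iff_eq_add] at h
  rw [h, complModulus]
  field_simp
  ring

end JacobiDerivative

section Riccati

/-- The `j`-th derivative of `θ₃`, as the termwise differentiated series. -/
noncomputable def theta₃Deriv (j : ℕ) : ℝ → ℝ := thetaSeries fun n => (-π * n ^ 2) ^ j

/-- The weight four form `θ₂⁴ - θ₄⁴`, with `θ₂⁴` written as `θ₃⁴ - θ₄⁴` by Jacobi's identity. -/
noncomputable def thetaDiff (y : ℝ) : ℝ := theta₃ y ^ 4 - 2 * theta₄ y ^ 4

/-- The weight eight form `θ₂⁴ θ₄⁴`, with `θ₂⁴` written as `θ₃⁴ - θ₄⁴` by Jacobi's identity. -/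
noncomputable def thetaProd (y : ℝ) : ℝ := theta₄ y ^ 4 * (theta₃ y ^ 4 - theta₄ y ^ 4)

variable {y : ℝ}

lemma thetaSummable_pow (j : ℕ) : ThetaSummable fun n => (-π * n ^ 2) ^ j := by
  induction j with
  | zero => simpa only [pow_zero] using thetaSummable_one
  | succ j ih => simpa only [pow_succ'] using ih.sq_mul

lemma theta₃Deriv_zero : theta₃Deriv 0 = theta₃ := by
  simp only [theta₃Deriv, pow_zero, theta₃]

lemma hasDerivAt_theta₃Deriv (j : ℕ) (hy : 0 < y) :
    HasDerivAt (theta₃Deriv j) (theta₃Deriv (j + 1) y) y := by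
  simpa only [theta₃Deriv, pow_succ'] using hasDerivAt_thetaSeries (thetaSummable_pow j) hy

lemma theta₃Deriv_one (hy : 0 < y) : theta₃Deriv 1 y = theta₃ y * logDeriv theta₃ y :=
  (theta₃Deriv_zero ▸ hasDerivAt_theta₃Deriv 0 hy).unique (hasDerivAt_theta₃ hy)

lemma hasDerivAt_logDeriv_theta₃_of_theta₃Deriv (hy : 0 < y) :
    HasDerivAt (logDeriv theta₃) (theta₃Deriv 2 y / theta₃ y - logDeriv theta₃ y ^ 2) y := by
  have h₃ := theta₃_pos hy
  have hdiv := (hasDerivAt_theta₃Deriv 1 hy).fun_div (hasDerivAt_theta₃ hy) h₃.ne'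
  refine (hdiv.congr_of_eventuallyEq (mem_of_superset (Ioi_mem_nhds hy) fun z hz => ?_)).congr_deriv
    ?_
  · exact eq_div_of_mul_eq (theta₃_pos hz).ne' (by rw [theta₃Deriv_one hz, mul_comm])
  · rw [theta₃Deriv_one hy]
    field_simp

lemma tendsto_pow_mul_theta₃Deriv_succ (k j : ℕ) :
    Tendsto (fun y => y ^ k * theta₃Deriv (j + 1) y) atTop (𝓝 0) :=
  tendsto_pow_mul_thetaSeries (thetaSummable_pow _) (by simp) k

lemma differentiableAt_logDeriv_theta₃ (hy : 0 < y) : DifferentiableAt ℝ (logDeriv theta₃) y :=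
  (hasDerivAt_logDeriv_theta₃_of_theta₃Deriv hy).differentiableAt

lemma logDeriv_theta₃_two_mul_eq (hy : 0 < y) : logDeriv theta₃ (2 * y)
    = logDeriv theta₃ y / 2 + π / 8 * (theta₄ y ^ 2 * (theta₃ y ^ 2 - theta₄ y ^ 2)) := by
  refine mul_left_cancel₀ (pow_pos (theta₃_pos (mul_pos two_pos hy)) 2).ne' ?_
  linear_combination logDeriv_theta₃_two_mul hy / 4
    + theta₄ y ^ 2 / 4 * logDeriv_theta₄_sub_logDeriv_theta₃ hy
    + (logDeriv theta₃ y / 4 + π / 16 * (theta₄ y ^ 2 * (theta₃ y ^ 2 - theta₄ y ^ 2)))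
      * theta₃_sq_add_theta₄_sq hy

lemma thetaProd_two_mul (hy : 0 < y) : thetaProd (2 * y)
    = theta₃ y ^ 2 * theta₄ y ^ 2 * (theta₃ y ^ 2 - theta₄ y ^ 2) ^ 2 / 4 := by
  rw [thetaProd, theta₃_pow_four_sub_theta₄_pow_four_two_mul hy,
    show theta₄ (2 * y) ^ 4 = (theta₄ (2 * y) ^ 2) ^ 2 by ring, ← theta₃_mul_theta₄ hy]
  ring

lemma hasDerivAt_theta₄_logDeriv_theta₃ (hy : 0 < y) : HasDerivAt theta₄
    (theta₄ y * (logDeriv theta₃ y + π / 4 * (theta₃ y ^ 4 - theta₄ y ^ 4))) y := by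
  rw [← logDeriv_theta₄_sub_logDeriv_theta₃ hy, add_sub_cancel]
  exact hasDerivAt_theta₄ hy

/-- The failure of the Riccati equation for `logDeriv θ₃`; it has weight four and vanishes at
infinity faster than `y⁻²`, so doubling forces it to vanish. -/
noncomputable def riccatiDefect (y : ℝ) : ℝ :=
  deriv (logDeriv theta₃) y - 2 * logDeriv theta₃ y ^ 2 - π ^ 2 / 8 * thetaProd y

lemma riccatiDefect_two_mul (hy : 0 < y) : 4 * riccatiDefect (2 * y) = riccatiDefect y := by
  have h₃ := hasDerivAt_theta₃ hy
  have h₄ := hasDerivAt_theta₄_logDeriv_theta₃ hy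
  have h := hasDerivAt_unique_of_eqOn_Ioi (fun z => logDeriv_theta₃_two_mul_eq) hy
    (hasDerivAt_comp_two_mul (differentiableAt_logDeriv_theta₃ (mul_pos two_pos hy)).hasDerivAt)
    (((differentiableAt_logDeriv_theta₃ hy).hasDerivAt.div_const 2).fun_add
      (((h₄.fun_pow 2).fun_mul ((h₃.fun_pow 2).fun_sub (h₄.fun_pow 2))).const_mul (π / 8)))
  rw [riccatiDefect, logDeriv_theta₃_two_mul_eq hy, thetaProd_two_mul hy, riccatiDefect, thetaProd]
  norm_num at h
  linear_combination 2 * h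

lemma tendsto_sq_mul_riccatiDefect :
    Tendsto (fun y => y ^ 2 * riccatiDefect y) atTop (𝓝 0) := by
  have hderiv₂ := (tendsto_pow_mul_theta₃Deriv_succ 2 1).div tendsto_theta₃ one_ne_zero
  have hderiv₁ := (tendsto_pow_mul_theta₃Deriv_succ 1 0).div tendsto_theta₃ one_ne_zero
  have hsub := (tendsto_pow_mul_thetaSeries thetaSummable_one_sub_neg_one_zpow (by simp) 2).mul
    ((tendsto_theta₃.add tendsto_theta₄).mul ((tendsto_theta₃.pow 2).add (tendsto_theta₄.pow 2)))
  have h := (hderiv₂.sub ((hderiv₁.pow 2).const_mul 3)).sub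
    (((tendsto_theta₄.pow 4).mul hsub).const_mul (π ^ 2 / 8))
  convert h.congr' ?_ using 2
  · norm_num
  filter_upwards [eventually_gt_atTop 0] with y hy
  have h₃ := theta₃_pos hy
  have hlog : logDeriv theta₃ y = theta₃Deriv 1 y / theta₃ y := by
    rw [theta₃Deriv_one hy, mul_div_cancel_left₀ _ h₃.ne']
  rw [riccatiDefect, (hasDerivAt_logDeriv_theta₃_of_theta₃Deriv hy).deriv, thetaProd,
    theta₃_pow_four_sub_theta₄_pow_four, theta₃_sub_theta₄ hy, hlog]
  simp only [Pi.div_apply]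
  ring

lemma hasDerivAt_logDeriv_theta₃ (hy : 0 < y) : HasDerivAt (logDeriv theta₃)
    (2 * logDeriv theta₃ y ^ 2 + π ^ 2 / 8 * thetaProd y) y := by
  have h : y ^ 2 * riccatiDefect y = 0 :=
    eq_of_two_mul_eq_of_tendsto (f := fun y => y ^ 2 * riccatiDefect y)
      (fun z hz => by rw [← riccatiDefect_two_mul hz]; ring) tendsto_sq_mul_riccatiDefect hy
  have hdefect : riccatiDefect y = 0 := (mul_eq_zero.1 h).resolve_left (pow_pos hy 2).ne'
  refine (differentiableAt_logDeriv_theta₃ hy).hasDerivAt.congr_deriv ?_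
  rw [riccatiDefect] at hdefect
  linarith

lemma hasDerivAt_thetaProd (hy : 0 < y) :
    HasDerivAt thetaProd (thetaProd y * (8 * logDeriv theta₃ y + π * thetaDiff y)) y := by
  have h₄ := (hasDerivAt_theta₄_logDeriv_theta₃ hy).fun_pow 4
  refine (h₄.fun_mul (((hasDerivAt_theta₃ hy).fun_pow 4).fun_sub h₄)).congr_deriv ?_
  rw [thetaProd, thetaDiff]
  norm_num
  ring

lemma hasDerivAt_thetaDiff (hy : 0 < y) :
    HasDerivAt thetaDiff (4 * logDeriv theta₃ y * thetaDiff y - 2 * π * thetaProd y) y := by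
  refine (((hasDerivAt_theta₃ hy).fun_pow 4).fun_sub
    (((hasDerivAt_theta₄_logDeriv_theta₃ hy).fun_pow 4).const_mul 2)).congr_deriv ?_
  rw [thetaProd, thetaDiff]
  norm_num
  ring

lemma theta₃Deriv_two (hy : 0 < y) :
    theta₃Deriv 2 y = theta₃ y * (3 * logDeriv theta₃ y ^ 2 + π ^ 2 / 8 * thetaProd y) := by
  rw [hasDerivAt_unique_of_eqOn_Ioi (fun z => theta₃Deriv_one) hy (hasDerivAt_theta₃Deriv 1 hy)
    ((hasDerivAt_theta₃ hy).fun_mul (hasDerivAt_logDeriv_theta₃ hy))]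
  ring

lemma theta₃Deriv_three (hy : 0 < y) :
    theta₃Deriv 3 y = theta₃ y * (15 * logDeriv theta₃ y ^ 3
      + 15 * π ^ 2 / 8 * (logDeriv theta₃ y * thetaProd y)
      + π ^ 3 / 8 * (thetaProd y * thetaDiff y)) := by
  have hP := hasDerivAt_logDeriv_theta₃ hy
  rw [hasDerivAt_unique_of_eqOn_Ioi (fun z => theta₃Deriv_two) hy (hasDerivAt_theta₃Deriv 2 hy)
    ((hasDerivAt_theta₃ hy).fun_mul (((hP.fun_pow 2).const_mul 3).fun_add
      ((hasDerivAt_thetaProd hy).const_mul (π ^ 2 / 8))))]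
  norm_num
  ring

lemma theta₃Deriv_four (hy : 0 < y) :
    theta₃Deriv 4 y = theta₃ y * (105 * logDeriv theta₃ y ^ 4
      + 105 * π ^ 2 / 4 * (logDeriv theta₃ y ^ 2 * thetaProd y)
      + 7 * π ^ 3 / 2 * (logDeriv theta₃ y * (thetaProd y * thetaDiff y))
      - π ^ 4 / 64 * thetaProd y ^ 2 + π ^ 4 / 8 * (thetaProd y * thetaDiff y ^ 2)) := by
  have hP := hasDerivAt_logDeriv_theta₃ hy
  have hW := hasDerivAt_thetaProd hy
  rw [hasDerivAt_unique_of_eqOn_Ioi (fun z => theta₃Deriv_three) hy (hasDerivAt_theta₃Deriv 3 hy)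
    ((hasDerivAt_theta₃ hy).fun_mul ((((hP.fun_pow 3).const_mul 15).fun_add
      ((hP.fun_mul hW).const_mul (15 * π ^ 2 / 8))).fun_add
      ((hW.fun_mul (hasDerivAt_thetaDiff hy)).const_mul (π ^ 3 / 8))))]
  norm_num
  ring

lemma thetaProd_eq_complModulus (hy : 0 < y) :
    thetaProd y = complModulus y ^ 2 * (1 - complModulus y ^ 2) * theta₃ y ^ 8 := by
  rw [thetaProd, show theta₄ y ^ 4 = (theta₄ y ^ 2) ^ 2 by ring, theta₄_sq_eq_complModulus_mul hy]
  ring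

/-- The left side is the fourth Rankin–Cohen bracket of `θ₃` with itself, up to a constant; being
a modular form, it involves no logarithmic derivative of `θ₃`. -/
lemma theta₃_rankinCohen (hy : 0 < y) :
    2 * theta₃ y * theta₃Deriv 4 y - 56 * theta₃Deriv 1 y * theta₃Deriv 3 y
      + 70 * theta₃Deriv 2 y ^ 2
      = π ^ 4 / 16 * (theta₃ y ^ 2 * thetaProd y * (4 * theta₃ y ^ 8 + thetaProd y)) := by
  rw [theta₃Deriv_one hy, theta₃Deriv_two hy, theta₃Deriv_three hy, theta₃Deriv_four hy, thetaDiff,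
    thetaProd]
  ring

end Riccati

section GaussTransformation

/-- The substitution `x ↦ (1 + k) x / (1 + k x²)` of the unit interval that realises Gauss's
transformation of the complete elliptic integral of the first kind. -/
noncomputable def gaussMap (k x : ℝ) : ℝ := (1 + k) * x / (1 + k * x ^ 2)

variable {k : ℝ}

lemma continuous_gaussMap (hk₀ : 0 ≤ k) : Continuous (gaussMap k) :=
  .div (by fun_prop) (by fun_prop) fun x => by positivity

lemma gaussMap_image_Ioo (hk₀ : 0 ≤ k) (hk₁ : k < 1) :
    gaussMap k '' Set.Ioo 0 1 = Set.Ioo 0 1 := by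
  apply Set.Subset.antisymm
  · rintro _ ⟨x, ⟨hx₀, hx₁⟩, rfl⟩
    have hkx : k * x < 1 := by nlinarith
    refine ⟨by unfold gaussMap; positivity, ?_⟩
    rw [gaussMap, div_lt_one (by positivity)]
    nlinarith
  · have hzero : gaussMap k 0 = 0 := by simp [gaussMap]
    have hone : gaussMap k 1 = 1 := by
      rw [gaussMap, one_pow, mul_one, mul_one]
      exact div_self (by positivity)
    have h := intermediate_value_Ioo zero_le_one (continuous_gaussMap hk₀).continuousOn
    rwa [hzero, hone] at h

lemma injOn_gaussMap (hk₀ : 0 ≤ k) (hk₁ : k < 1) : Set.InjOn (gaussMap k) (Set.Ioo 0 1) := by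
  rintro x ⟨hx₀, hx₁⟩ y ⟨hy₀, hy₁⟩ h
  rw [gaussMap, gaussMap, div_eq_div_iff (by positivity) (by positivity)] at h
  have hxy : x * y < 1 := by nlinarith
  have hfactor : (1 + k) * (1 - k * (x * y)) * (x - y) = 0 := by linear_combination h
  have hpos : 0 < 1 - k * (x * y) := by nlinarith [mul_pos hx₀ hy₀]
  exact sub_eq_zero.1 ((mul_eq_zero.1 hfactor).resolve_left (by positivity))

lemma hasDerivAt_gaussMap (hk₀ : 0 ≤ k) (x : ℝ) :
    HasDerivAt (gaussMap k) ((1 + k) * (1 - k * x ^ 2) / (1 + k * x ^ 2) ^ 2) x := by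
  have h := ((hasDerivAt_id' x).const_mul (1 + k)).fun_div
    ((((hasDerivAt_id' x).fun_pow 2).const_mul k).const_add 1) (by positivity)
  refine h.congr_deriv ?_
  norm_num
  ring

lemma EllK_eq_setIntegral (k : ℝ) :
    EllK k = ∫ x in Set.Ioo 0 1, 1 / √((1 - x ^ 2) * (1 - k ^ 2 * x ^ 2)) := by
  rw [EllK, intervalIntegral.integral_of_le zero_le_one, integral_Ioc_eq_integral_Ioo]

lemma gaussMap_radicand {m : ℝ} (hk₀ : 0 ≤ k) (hm : m ^ 2 = 4 * k / (1 + k) ^ 2) (x : ℝ) :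
    (1 - gaussMap k x ^ 2) * (1 - m ^ 2 * gaussMap k x ^ 2)
      = (1 - x ^ 2) * (1 - k ^ 2 * x ^ 2) * ((1 - k * x ^ 2) / (1 + k * x ^ 2) ^ 2) ^ 2 := by
  rw [hm, gaussMap]
  field_simp
  ring

lemma EllK_gauss {m : ℝ} (hk₀ : 0 ≤ k) (hk₁ : k < 1) (hm : m ^ 2 = 4 * k / (1 + k) ^ 2) :
    EllK m = (1 + k) * EllK k := by
  rw [EllK_eq_setIntegral, EllK_eq_setIntegral, ← integral_const_mul]
  conv_lhs => rw [← gaussMap_image_Ioo hk₀ hk₁]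
  rw [integral_image_eq_integral_abs_deriv_smul measurableSet_Ioo
    (fun x _ => (hasDerivAt_gaussMap hk₀ x).hasDerivWithinAt) (injOn_gaussMap hk₀ hk₁)]
  refine setIntegral_congr_fun measurableSet_Ioo fun x ⟨hx₀, hx₁⟩ => ?_
  have hkx : 0 < 1 - k * x ^ 2 := by nlinarith
  simp only [smul_eq_mul]
  rw [gaussMap_radicand hk₀ hm, Real.sqrt_mul' _ (by positivity), Real.sqrt_sq (by positivity),
    abs_of_pos (by positivity)]
  field_simp

end GaussTransformation

section EllKBounds

lemma integrableOn_one_div_sqrt_one_sub_sq :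
    IntegrableOn (fun x : ℝ => 1 / √(1 - x ^ 2)) (Set.Ioo 0 1) :=
  (intervalIntegral.integrableOn_deriv_of_nonneg Real.continuous_arcsin.continuousOn
    (fun x hx => Real.hasDerivAt_arcsin (by linarith [hx.1]) hx.2.ne)
    fun x _ => by positivity).mono_set Set.Ioo_subset_Ioc_self

lemma integral_one_div_sqrt_one_sub_sq :
    ∫ x in Set.Ioo (0 : ℝ) 1, 1 / √(1 - x ^ 2) = π / 2 := by
  have hint : IntervalIntegrable (fun x : ℝ => 1 / √(1 - x ^ 2)) volume 0 1 :=
    (intervalIntegrable_iff_integrableOn_Ioo_of_le zero_le_one).2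
      integrableOn_one_div_sqrt_one_sub_sq
  rw [← integral_Ioc_eq_integral_Ioo, ← intervalIntegral.integral_of_le zero_le_one,
    intervalIntegral.integral_eq_sub_of_hasDerivAt_of_le zero_le_one
      Real.continuous_arcsin.continuousOn
      (fun x hx => Real.hasDerivAt_arcsin (by linarith [hx.1]) hx.2.ne) hint,
    Real.arcsin_one, Real.arcsin_zero, sub_zero]

variable {k : ℝ}

lemma one_div_sqrt_le_EllK_integrand (hk : k ^ 2 < 1) {x : ℝ} (hx : x ∈ Set.Ioo (0 : ℝ) 1) :
    1 / √(1 - x ^ 2) ≤ 1 / √((1 - x ^ 2) * (1 - k ^ 2 * x ^ 2)) := by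
  have hx₂ : x ^ 2 < 1 := pow_lt_one₀ hx.1.le hx.2 two_ne_zero
  have hkx : 0 < 1 - k ^ 2 * x ^ 2 := by nlinarith [sq_nonneg k, sq_nonneg x]
  have hpos : 0 < 1 - x ^ 2 := sub_pos.2 hx₂
  gcongr
  exact mul_le_of_le_one_right hpos.le (by linarith [mul_nonneg (sq_nonneg k) (sq_nonneg x)])

lemma EllK_integrand_le (hk : k ^ 2 < 1) {x : ℝ} (hx : x ∈ Set.Ioo (0 : ℝ) 1) :
    1 / √((1 - x ^ 2) * (1 - k ^ 2 * x ^ 2)) ≤ 1 / √(1 - k ^ 2) * (1 / √(1 - x ^ 2)) := by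
  have hx₂ : 0 < 1 - x ^ 2 := sub_pos.2 (pow_lt_one₀ hx.1.le hx.2 two_ne_zero)
  have hk₂ : 0 < 1 - k ^ 2 := sub_pos.2 hk
  rw [one_div_mul_one_div, ← Real.sqrt_mul hk₂.le, mul_comm (1 - k ^ 2)]
  gcongr
  nlinarith [mul_nonneg (sq_nonneg k) hx₂.le]

lemma integrableOn_EllK_integrand (hk : k ^ 2 < 1) :
    IntegrableOn (fun x : ℝ => 1 / √((1 - x ^ 2) * (1 - k ^ 2 * x ^ 2))) (Set.Ioo 0 1) := by
  refine Integrable.mono' (integrableOn_one_div_sqrt_one_sub_sq.const_mul (1 / √(1 - k ^ 2)))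
    (Measurable.aestronglyMeasurable (by fun_prop)) ?_
  filter_upwards [ae_restrict_mem measurableSet_Ioo] with x hx
  rw [Real.norm_of_nonneg (by positivity)]
  exact EllK_integrand_le hk hx

lemma EllK_mem_Icc (hk : k ^ 2 < 1) :
    EllK k ∈ Set.Icc (π / 2) (1 / √(1 - k ^ 2) * (π / 2)) := by
  rw [EllK_eq_setIntegral, ← integral_one_div_sqrt_one_sub_sq, ← integral_const_mul]
  exact ⟨setIntegral_mono_on integrableOn_one_div_sqrt_one_sub_sq (integrableOn_EllK_integrand hk)
      measurableSet_Ioo fun _ => one_div_sqrt_le_EllK_integrand hk,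
    setIntegral_mono_on (integrableOn_EllK_integrand hk)
      (integrableOn_one_div_sqrt_one_sub_sq.const_mul _) measurableSet_Ioo
      fun _ => EllK_integrand_le hk⟩

lemma EllK'_mem_Icc (hk₀ : 0 < k) (hk₁ : k < 1) : EllK' k ∈ Set.Icc (π / 2) (k⁻¹ * (π / 2)) := by
  have hsq : √(1 - k ^ 2) ^ 2 = 1 - k ^ 2 := Real.sq_sqrt (by nlinarith)
  have h := EllK_mem_Icc (k := √(1 - k ^ 2)) (by rw [hsq]; nlinarith)
  rwa [hsq, sub_sub_cancel, Real.sqrt_sq hk₀.le, one_div] at h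

end EllKBounds

section JacobiEvaluation

variable {y : ℝ}

lemma tendsto_EllK'_complModulus : Tendsto (fun y => EllK' (complModulus y)) atTop (𝓝 (π / 2)) := by
  have hupper : Tendsto (fun y => (complModulus y)⁻¹ * (π / 2)) atTop (𝓝 (π / 2)) := by
    simpa using (tendsto_complModulus_atTop.inv₀ one_ne_zero).mul_const (π / 2)
  have hmem : ∀ᶠ y in atTop,
      EllK' (complModulus y) ∈ Set.Icc (π / 2) ((complModulus y)⁻¹ * (π / 2)) := by
    filter_upwards [eventually_gt_atTop 0] with y hy
    exact EllK'_mem_Icc (complModulus_pos hy) (complModulus_lt_one hy)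
  exact tendsto_of_tendsto_of_tendsto_of_le_of_le' tendsto_const_nhds hupper
    (hmem.mono fun _ h => h.1) (hmem.mono fun _ h => h.2)

lemma theta₃_two_mul_sq (hy : 0 < y) :
    theta₃ (2 * y) ^ 2 = theta₃ y ^ 2 * (1 + complModulus y) / 2 := by
  linear_combination (theta₄_sq_eq_complModulus_mul hy - theta₃_sq_add_theta₄_sq hy) / 2

lemma complModulus_two_mul_sq (hy : 0 < y) :
    complModulus (2 * y) ^ 2 = 4 * complModulus y / (1 + complModulus y) ^ 2 := by
  have hκ := complModulus_pos hy
  have h₃ := theta₃_pos hy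
  have h₄ : (theta₄ (2 * y) ^ 2) ^ 2 = theta₃ y ^ 4 * complModulus y := by
    rw [← theta₃_mul_theta₄ hy, mul_pow, theta₄_sq_eq_complModulus_mul hy]
    ring
  rw [complModulus, div_pow, h₄, theta₃_two_mul_sq hy]
  field_simp
  norm_num

lemma sqrt_one_sub_complModulus_two_mul_sq (hy : 0 < y) :
    √(1 - complModulus (2 * y) ^ 2) = (1 - complModulus y) / (1 + complModulus y) := by
  have hκ₀ := complModulus_pos hy
  have hκ₁ := complModulus_lt_one hy
  have hsq : 1 - complModulus (2 * y) ^ 2 = ((1 - complModulus y) / (1 + complModulus y)) ^ 2 := by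
    rw [complModulus_two_mul_sq hy]
    field_simp
    ring
  rw [hsq, Real.sqrt_sq (div_nonneg (by linarith) (by linarith))]

lemma EllK'_complModulus_two_mul (hy : 0 < y) :
    EllK' (complModulus y) = 2 / (1 + complModulus y) * EllK' (complModulus (2 * y)) := by
  have hκ₀ := complModulus_pos hy
  have hκ₁ := complModulus_lt_one hy
  have hsum : 1 + (1 - complModulus y) / (1 + complModulus y) = 2 / (1 + complModulus y) := by
    field_simp
    ring
  rw [EllK', EllK', sqrt_one_sub_complModulus_two_mul_sq hy, ← hsum]
  refine EllK_gauss (div_nonneg (by linarith) (by linarith)) ?_ ?_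
  · rw [div_lt_one (by linarith)]
    linarith
  · rw [Real.sq_sqrt (by nlinarith), hsum]
    field_simp
    ring

lemma EllK'_complModulus (hy : 0 < y) : EllK' (complModulus y) = π / 2 * theta₃ y ^ 2 := by
  have hdouble (z : ℝ) (hz : 0 < z) : EllK' (complModulus (2 * z)) / theta₃ (2 * z) ^ 2
      = EllK' (complModulus z) / theta₃ z ^ 2 := by
    have hκ := complModulus_pos hz
    rw [EllK'_complModulus_two_mul hz, theta₃_two_mul_sq hz]
    field_simp
  have hlim : Tendsto (fun z => EllK' (complModulus z) / theta₃ z ^ 2) atTop (𝓝 (π / 2)) := by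
    simpa [Pi.div_def] using tendsto_EllK'_complModulus.div (tendsto_theta₃.pow 2) (by norm_num)
  exact (div_eq_iff (pow_pos (theta₃_pos hy) 2).ne').1 (eq_of_two_mul_eq_of_tendsto hdouble hlim hy)

end JacobiEvaluation

section ModulusSubstitution

lemma strictMonoOn_complModulus : StrictMonoOn complModulus (Set.Ioi 0) := by
  refine strictMonoOn_of_deriv_pos (convex_Ioi 0)
    (fun y hy => (hasDerivAt_complModulus hy).continuousAt.continuousWithinAt) fun y hy => ?_
  rw [interior_Ioi] at hy
  have hκ := complModulus_pos hy
  have h₃ := theta₃_pos hy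
  have hκ₂ : 0 < 1 - complModulus y ^ 2 :=
    sub_pos.2 (pow_lt_one₀ hκ.le (complModulus_lt_one hy) two_ne_zero)
  rw [(hasDerivAt_complModulus hy).deriv]
  positivity

lemma complModulus_image_Ioi : complModulus '' Set.Ioi 0 = Set.Ioo 0 1 := by
  apply Set.Subset.antisymm
  · rintro _ ⟨y, hy, rfl⟩
    exact ⟨complModulus_pos hy, complModulus_lt_one hy⟩
  · exact isPreconnected_Ioi.intermediate_value_Ioo (l₁ := 𝓝[>] 0) inf_le_right
      (le_principal_iff.2 (Ioi_mem_atTop 0))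
      (fun y hy => (hasDerivAt_complModulus hy).continuousAt.continuousWithinAt)
      tendsto_complModulus_nhdsGT_zero tendsto_complModulus_atTop

lemma integral_comp_complModulus (f : ℝ → ℝ) :
    ∫ k in (0 : ℝ)..1, f k = ∫ y in Set.Ioi 0,
      π / 2 * complModulus y * (1 - complModulus y ^ 2) * theta₃ y ^ 4 * f (complModulus y) := by
  rw [intervalIntegral.integral_of_le zero_le_one, integral_Ioc_eq_integral_Ioo,
    ← complModulus_image_Ioi, integral_image_eq_integral_deriv_smul_of_monotoneOn measurableSet_Ioi
      (fun y hy => (hasDerivAt_complModulus hy).hasDerivWithinAt)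
      strictMonoOn_complModulus.monotoneOn]
  rfl

end ModulusSubstitution

section GaussianTheta

/-- The Gaussian integer `m + n i`, as a complex number. -/
def gaussInt (p : ℤ × ℤ) : ℂ := p.1 + p.2 * Complex.I

/-- The theta series `∑ z⁸ exp (-π y |z|²)` over the Gaussian integers `z`, a modular form of
weight nine. Only the real parts are summed, the imaginary ones cancelling under conjugation. -/
noncomputable def gaussTheta (y : ℝ) : ℝ :=
  ∑' p, (gaussInt p ^ 8).re * Real.exp (-π * Complex.normSq (gaussInt p) * y)

variable {y : ℝ}

lemma normSq_gaussInt (p : ℤ × ℤ) :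
    Complex.normSq (gaussInt p) = (p.1 : ℝ) ^ 2 + (p.2 : ℝ) ^ 2 := by
  simp [gaussInt, Complex.normSq_apply, sq]

lemma re_gaussInt_pow_eight (p : ℤ × ℤ) : (gaussInt p ^ 8).re
    = p.1 ^ 8 - 28 * p.1 ^ 6 * p.2 ^ 2 + 70 * p.1 ^ 4 * p.2 ^ 4 - 28 * p.1 ^ 2 * p.2 ^ 6
      + p.2 ^ 8 := by
  simp [gaussInt, pow_succ]
  ring

lemma hasSum_theta₃Deriv_mul (i j : ℕ) (hy : 0 < y) : HasSum (fun p : ℤ × ℤ =>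
    (-π * p.1 ^ 2) ^ i * (-π * p.2 ^ 2) ^ j * Real.exp (-π * Complex.normSq (gaussInt p) * y))
    (theta₃Deriv i y * theta₃Deriv j y) := by
  simpa only [normSq_gaussInt, mul_right_comm, theta₃Deriv] using
    (thetaSummable_pow i).hasSum_mul (thetaSummable_pow j) hy

lemma hasSum_gaussTheta_theta₃Deriv (hy : 0 < y) : HasSum
    (fun p => (gaussInt p ^ 8).re * Real.exp (-π * Complex.normSq (gaussInt p) * y))
    ((2 * theta₃ y * theta₃Deriv 4 y - 56 * theta₃Deriv 1 y * theta₃Deriv 3 y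
      + 70 * theta₃Deriv 2 y ^ 2) / π ^ 4) := by
  have h := ((((hasSum_theta₃Deriv_mul 0 4 hy).add (hasSum_theta₃Deriv_mul 4 0 hy)).sub
    (((hasSum_theta₃Deriv_mul 1 3 hy).add (hasSum_theta₃Deriv_mul 3 1 hy)).mul_left 28)).add
    ((hasSum_theta₃Deriv_mul 2 2 hy).mul_left 70)).div_const (π ^ 4)
  rw [theta₃Deriv_zero] at h
  have hval : 2 * theta₃ y * theta₃Deriv 4 y - 56 * theta₃Deriv 1 y * theta₃Deriv 3 y
        + 70 * theta₃Deriv 2 y ^ 2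
      = theta₃ y * theta₃Deriv 4 y + theta₃Deriv 4 y * theta₃ y
        - 28 * (theta₃Deriv 1 y * theta₃Deriv 3 y + theta₃Deriv 3 y * theta₃Deriv 1 y)
        + 70 * (theta₃Deriv 2 y * theta₃Deriv 2 y) := by
    ring
  rw [hval]
  refine h.congr_fun fun p => ?_
  rw [re_gaussInt_pow_eight]
  field_simp
  ring

lemma hasSum_gaussTheta (hy : 0 < y) : HasSum
    (fun p => (gaussInt p ^ 8).re * Real.exp (-π * Complex.normSq (gaussInt p) * y))
    (gaussTheta y) :=
  (hasSum_gaussTheta_theta₃Deriv hy).summable.hasSum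

lemma gaussTheta_eq (hy : 0 < y) :
    gaussTheta y = theta₃ y ^ 2 * thetaProd y * (4 * theta₃ y ^ 8 + thetaProd y) / 16 := by
  rw [gaussTheta, (hasSum_gaussTheta_theta₃Deriv hy).tsum_eq, theta₃_rankinCohen hy]
  field_simp

lemma thetaProd_inv (hy : 0 < y) : thetaProd y⁻¹ = y ^ 4 * thetaProd y := by
  rw [thetaProd_eq_complModulus (inv_pos.2 hy), thetaProd_eq_complModulus hy,
    complModulus_inv_sq hy, show theta₃ y⁻¹ ^ 8 = (theta₃ y⁻¹ ^ 2) ^ 4 by ring, theta₃_inv_sq hy]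
  ring

lemma gaussTheta_inv (hy : 0 < y) : gaussTheta y⁻¹ = y ^ 9 * gaussTheta y := by
  rw [gaussTheta_eq (inv_pos.2 hy), gaussTheta_eq hy, thetaProd_inv hy,
    show theta₃ y⁻¹ ^ 8 = (theta₃ y⁻¹ ^ 2) ^ 4 by ring, theta₃_inv_sq hy]
  ring

lemma integral_EllK'_eq_integral_gaussTheta :
    ∫ k in (0 : ℝ)..1, k * (4 + k ^ 2 - k ^ 4) * EllK' k ^ 7
      = π ^ 8 / 16 * ∫ y in Set.Ioi 0, gaussTheta y := by
  rw [integral_comp_complModulus, ← integral_const_mul]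
  refine setIntegral_congr_fun measurableSet_Ioi fun y hy => ?_
  rw [EllK'_complModulus hy, gaussTheta_eq hy, thetaProd_eq_complModulus hy]
  ring

lemma mellin_gaussTheta_eight_eq_one :
    mellin (fun y => (gaussTheta y : ℂ)) 8 = mellin (fun y => (gaussTheta y : ℂ)) 1 := by
  rw [← neg_neg 8, ← mellin_comp_inv, show (1 : ℂ) = -8 + 9 by norm_num, ← mellin_cpow_smul]
  refine setIntegral_congr_fun measurableSet_Ioi fun y hy => ?_
  simp only [gaussTheta_inv hy, smul_eq_mul, Complex.ofReal_mul, Complex.ofReal_pow,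
    Complex.cpow_ofNat]

lemma integral_EllK'_eq_mellin_gaussTheta :
    ((∫ k in (0 : ℝ)..1, k * (4 + k ^ 2 - k ^ 4) * EllK' k ^ 7 : ℝ) : ℂ)
      = π ^ 8 / 16 * mellin (fun y => (gaussTheta y : ℂ)) 8 := by
  rw [mellin_gaussTheta_eight_eq_one, integral_EllK'_eq_integral_gaussTheta]
  simp [mellin, integral_complex_ofReal]

end GaussianTheta

section EisensteinRelation

/-- The Weierstrass differential equation multiplied by `z ^ 6`: both sides are then analytic at `0`
and their eighth Taylor coefficients can be compared. -/
lemma weierstrass_relation_eventuallyEq (L : PeriodPair) :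
    (fun z => (L.derivWeierstrassPExcept 0 z * z ^ 3 - 2) ^ 2
      - 4 * (L.weierstrassPExcept 0 z * z ^ 2 + 1) ^ 3
      + L.g₂ * (L.weierstrassPExcept 0 z * z ^ 6 + z ^ 4) + L.g₃ * z ^ 6) =ᶠ[𝓝 0] fun _ => 0 := by
  filter_upwards [L.compl_lattice_sdiff_singleton_mem_nhds _] with z hz
  rcases eq_or_ne z 0 with rfl | hz0
  · norm_num
  have hz' : z ∉ L.lattice := by simp_all
  have hP' := L.derivWeierstrassPExcept_def 0 z
  have hP := L.weierstrassPExcept_def 0 z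
  simp only [ZeroMemClass.coe_zero, sub_zero, zero_pow two_ne_zero, div_zero] at hP hP'
  rw [hP', hP]
  field_simp
  linear_combination z ^ 6 * L.derivWeierstrassP_sq z hz'

lemma seven_mul_G_eight (L : PeriodPair) : 7 * L.G 8 = 3 * L.G 4 ^ 2 := by
  have hP (n : WithTop ℕ∞) : ContDiffAt ℂ n (L.weierstrassPExcept 0) 0 :=
    (L.analyticAt_weierstrassPExcept 0).contDiffAt
  have hP' (n : WithTop ℕ∞) : ContDiffAt ℂ n (L.derivWeierstrassPExcept 0) 0 :=
    (L.analyticAt_derivWeierstrassPExcept 0).contDiffAt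
  have h := (weierstrass_relation_eventuallyEq L).iteratedDeriv_eq 8
  simp_rw [pow_succ (_ + _), pow_succ (_ - _), pow_zero, one_mul] at h
  simp (discharger := fun_prop) only [iteratedDeriv_fun_add, iteratedDeriv_fun_sub,
    iteratedDeriv_fun_mul, iteratedDeriv_const, iteratedDeriv_fun_pow_zero,
    PeriodPair.iteratedDeriv_derivWeierstrassPExcept_self,
    PeriodPair.iteratedDeriv_weierstrassPExcept_self] at h
  norm_num [Finset.sum_range_succ, L.G_eq_zero_of_odd 3 (by decide),
    L.G_eq_zero_of_odd 5 (by decide), L.G_eq_zero_of_odd 7 (by decide), PeriodPair.g₂,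
    PeriodPair.g₃, Nat.choose, Nat.factorial] at h
  linear_combination (-1 / 1451520) * h

end EisensteinRelation

section GaussianLattice

/-- The period pair `(1, i)` of the Gaussian integers. -/
noncomputable def gaussPair : PeriodPair where
  ω₁ := 1
  ω₂ := Complex.I
  indep := by
    rw [LinearIndependent.pair_iff]
    intro s t h
    simpa using Complex.ext_iff.1 h

lemma gaussPair_latticeEquivProd_symm (p : ℤ × ℤ) :
    (gaussPair.latticeEquivProd.symm p : ℂ) = gaussInt p := by
  rw [PeriodPair.latticeEquiv_symm_apply]
  simp [gaussPair, gaussInt]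

lemma hasSum_gaussPair_iff {f : ℂ → ℂ} {a : ℂ} :
    HasSum (fun l : gaussPair.lattice => f l) a ↔ HasSum (fun p => f (gaussInt p)) a := by
  rw [← gaussPair.latticeEquivProd.symm.toEquiv.hasSum_iff]
  simp only [Function.comp_def, LinearEquiv.coe_toEquiv, gaussPair_latticeEquivProd_symm]

lemma hasSum_gaussPair_G {n : ℕ} (hn : 2 < n) :
    HasSum (fun p => (gaussInt p ^ n)⁻¹) (gaussPair.G n) := by
  have h := gaussPair.hasSum_sumInvPow 0 hn
  simp only [PeriodPair.sumInvPow_zero, sub_zero] at h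
  exact (hasSum_gaussPair_iff (f := fun z => (z ^ n)⁻¹)).1 h

lemma re_inv_gaussInt_pow_eight (p : ℤ × ℤ) :
    ((gaussInt p ^ 8)⁻¹).re = (gaussInt p ^ 8).re / Complex.normSq (gaussInt p) ^ 8 := by
  rw [Complex.inv_re, map_pow]

lemma summable_re_gaussInt_pow_eight_div :
    Summable fun p => ‖((gaussInt p ^ 8).re : ℂ)‖ / Complex.normSq (gaussInt p) ^ (8 : ℂ).re := by
  have hG := Complex.hasSum_re (hasSum_gaussPair_G (n := 8) (by norm_num))
  refine hG.summable.norm.congr fun p => ?_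
  rw [re_inv_gaussInt_pow_eight, norm_div, norm_pow, Real.norm_of_nonneg (Complex.normSq_nonneg _),
    Complex.norm_real, Complex.re_ofNat, Real.rpow_ofNat]

lemma Gamma_eight_complex : Complex.Gamma 8 = 5040 := by
  rw [show (8 : ℂ) = (7 : ℕ) + 1 by norm_num, Complex.Gamma_nat_eq_factorial]
  norm_num [Nat.factorial]

lemma mellin_gaussTheta_eight :
    mellin (fun y => (gaussTheta y : ℂ)) 8 = 5040 / π ^ 8 * (gaussPair.G 8).re := by
  have htheta : ∀ y ∈ Set.Ioi (0 : ℝ), HasSum (fun p => ((gaussInt p ^ 8).re : ℂ) *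
      Real.exp (-π * Complex.normSq (gaussInt p) * y)) (gaussTheta y : ℂ) := fun y hy => by
    simpa only [Complex.ofReal_mul] using Complex.hasSum_ofReal.2 (hasSum_gaussTheta hy)
  have hzero (p : ℤ × ℤ) : ((gaussInt p ^ 8).re : ℂ) = 0 ∨ 0 < Complex.normSq (gaussInt p) := by
    rcases eq_or_ne (gaussInt p) 0 with h | h
    · simp [h]
    · exact .inr (Complex.normSq_pos.2 h)
  have hmellin := hasSum_mellin_pi_mul hzero (s := 8) (by norm_num) htheta
    summable_re_gaussInt_pow_eight_div
  have hG := (Complex.hasSum_ofReal.2 (Complex.hasSum_re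
    (hasSum_gaussPair_G (n := 8) (by norm_num)))).mul_left (5040 / π ^ 8 : ℂ)
  refine hmellin.unique (hG.congr_fun fun p => ?_)
  rw [Gamma_eight_complex, re_inv_gaussInt_pow_eight, Complex.cpow_neg, Complex.cpow_ofNat,
    Complex.cpow_ofNat, Complex.ofReal_div, Complex.ofReal_pow]
  ring

lemma integral_EllK'_eq_G_eight :
    ∫ k in (0 : ℝ)..1, k * (4 + k ^ 2 - k ^ 4) * EllK' k ^ 7 = 315 * (gaussPair.G 8).re := by
  have h := integral_EllK'_eq_mellin_gaussTheta
  rw [mellin_gaussTheta_eight, show (π ^ 8 / 16 : ℂ) * (5040 / π ^ 8 * (gaussPair.G 8).re)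
    = 315 * (gaussPair.G 8).re by field_simp; ring] at h
  exact mod_cast h

lemma conj_eq_of_hasSum_gaussPair {f : ℂ → ℂ} {a : ℂ}
    (hf : ∀ z, f (starRingEnd ℂ z) = starRingEnd ℂ (f z))
    (h : HasSum (fun l : gaussPair.lattice => f l) a) : starRingEnd ℂ a = a := by
  rw [hasSum_gaussPair_iff] at h
  have hneg := ((Equiv.refl ℤ).prodCongr (Equiv.neg ℤ)).hasSum_iff.2 h
  refine (Complex.hasSum_conj'.2 h).unique (hneg.congr_fun fun p => ?_)
  rw [← hf]
  simp [gaussInt]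

lemma eq_zero_of_hasSum_gaussPair {f : ℂ → ℂ} {a : ℂ} (hf : ∀ z, f (Complex.I * z) = -f z)
    (h : HasSum (fun l : gaussPair.lattice => f l) a) : a = 0 := by
  rw [hasSum_gaussPair_iff] at h
  have hrot := ((Equiv.prodComm ℤ ℤ).trans ((Equiv.neg ℤ).prodCongr (Equiv.refl ℤ))).hasSum_iff.2 h
  have ha : -a = a := by
    refine h.neg.unique (hrot.congr_fun fun p => ?_)
    rw [← hf]
    congr 1
    simp only [Equiv.trans_apply, Equiv.prodComm_apply, Equiv.prodCongr_apply,
      Prod.map, Prod.swap, Equiv.neg_apply, Equiv.refl_apply, gaussInt, Int.cast_neg]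
    linear_combination (p.2 : ℂ) * Complex.I_sq
  exact self_eq_neg.1 ha.symm

lemma gaussPair_g₃ : gaussPair.g₃ = 0 := by
  have h := gaussPair.hasSum_sumInvPow 0 (r := 6) (by norm_num)
  simp only [PeriodPair.sumInvPow_zero, sub_zero] at h
  have hI : Complex.I ^ 6 = -1 := by rw [Complex.I_pow_eq_pow_mod, Complex.I_sq]
  rw [PeriodPair.g₃, eq_zero_of_hasSum_gaussPair (f := fun z => (z ^ 6)⁻¹) (fun z => ?_) h,
    mul_zero]
  rw [mul_pow, hI, neg_one_mul, inv_neg]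

lemma gaussPair_G_four_eq_tsum_eisSummand :
    gaussPair.G 4 = ∑' v : Fin 2 → ℤ, EisensteinSeries.eisSummand 4 v UpperHalfPlane.I := by
  rw [← (hasSum_gaussPair_G (n := 4) (by norm_num)).tsum_eq,
    ← (finTwoArrowEquiv ℤ).symm.tsum_eq, ← (Equiv.prodComm ℤ ℤ).tsum_eq]
  refine tsum_congr fun p => ?_
  simp [EisensteinSeries.eisSummand, gaussInt, add_comm]

lemma gaussPair_G_four_eq_tsum_sigma :
    gaussPair.G 4 = (2 * (π ^ 4 / 90) + 2 * ((2 * π) ^ 4 / 6) *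
      ∑' n : ℕ+, (ArithmeticFunction.sigma 3 n : ℝ) * Real.exp (-(2 * π)) ^ (n : ℕ) : ℝ) := by
  have hq : Complex.exp (2 * π * Complex.I * (UpperHalfPlane.I : UpperHalfPlane))
      = Real.exp (-(2 * π)) := by
    rw [UpperHalfPlane.coe_I, Complex.ofReal_exp]
    push_cast
    congr 1
    linear_combination (2 * π : ℂ) * Complex.I_sq
  have hI : (-2 * π * Complex.I) ^ 4 = (2 * π : ℂ) ^ 4 := by
    rw [mul_pow, Complex.I_pow_four]
    ring
  have h := tsum_eisSummand_eq_tsum_sigma_mul_cexp_pow (k := 4) (by norm_num) (by decide)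
    UpperHalfPlane.I
  refine (gaussPair_G_four_eq_tsum_eisSummand.trans h).trans ?_
  rw [hq, Nat.cast_ofNat, riemannZeta_four, hI]
  push_cast
  norm_num [Nat.factorial]

lemma exists_gaussPair_G_four_eq_ofReal : ∃ r : ℝ, 0 < r ∧ gaussPair.G 4 = r := by
  refine ⟨_, ?_, gaussPair_G_four_eq_tsum_sigma⟩
  have hsum : 0 ≤ ∑' n : ℕ+,
      (ArithmeticFunction.sigma 3 n : ℝ) * Real.exp (-(2 * π)) ^ (n : ℕ) :=
    tsum_nonneg fun n => by positivity
  exact add_pos_of_pos_of_nonneg (by positivity) (mul_nonneg (by positivity) hsum)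

end GaussianLattice

/-- `P` is a positive real solution of `P' ^ 2 = 4 P (P ^ 2 - e ^ 2)` on `(0, ω]` with a pole at `0`
and a critical point at `ω`: the restriction to the real axis of a lemniscatic Weierstrass function
(`g₂ = 4 e ^ 2`, `g₃ = 0`) with real half-period `ω`. -/
structure LemniscaticODE (P : ℝ → ℝ) (e ω : ℝ) : Prop where
  e_pos : 0 < e
  halfPeriod_pos : 0 < ω
  analyticOnNhd : AnalyticOnNhd ℝ P (Set.Ioc 0 ω)
  deriv_sq : ∀ x ∈ Set.Ioc 0 ω, deriv P x ^ 2 = 4 * P x * (P x ^ 2 - e ^ 2)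
  tendsto_atTop : Tendsto P (𝓝[>] 0) atTop
  deriv_halfPeriod : deriv P ω = 0

namespace LemniscaticODE

variable {P : ℝ → ℝ} {e ω x : ℝ} (h : LemniscaticODE P e ω)

include h

lemma le_apply (hx : x ∈ Set.Ioc 0 ω) : e ≤ P x := by
  by_contra! hlt
  obtain ⟨y, hPy, hy⟩ := ((h.tendsto_atTop.eventually_ge_atTop e).and
    (Ioo_mem_nhdsGT hx.1)).exists
  have hsub : Set.Icc y x ⊆ Set.Ioc 0 ω := fun z hz => ⟨hy.1.trans_le hz.1, hz.2.trans hx.2⟩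
  have he := h.e_pos
  obtain ⟨z, hz, hPz⟩ := intermediate_value_Icc' hy.2.le (h.analyticOnNhd.continuousOn.mono hsub)
    (show max (P x) (e / 2) ∈ Set.Icc (P x) (P y) from
      ⟨le_max_left _ _, max_le (hlt.le.trans hPy) (by linarith)⟩)
  have hpos : 0 < P z := by rw [hPz]; exact lt_max_of_lt_right (by positivity)
  have hlt' : P z < e := by rw [hPz]; exact max_lt hlt (by linarith)
  have hneg : P z * (P z ^ 2 - e ^ 2) < 0 := mul_neg_of_pos_of_neg hpos (by nlinarith)
  linarith [h.deriv_sq z (hsub hz), sq_nonneg (deriv P z)]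

lemma apply_eq_of_deriv_eq_zero (hx : x ∈ Set.Ioc 0 ω) (h0 : deriv P x = 0) : P x = e := by
  have he := h.e_pos
  have hpos : 0 < P x := he.trans_le (h.le_apply hx)
  have hode := h.deriv_sq x hx
  have hprod : P x * (P x + e) * (P x - e) = 0 := by
    rw [h0] at hode
    linear_combination -hode / 4
  exact sub_eq_zero.1 ((mul_eq_zero.1 hprod).resolve_left (by positivity))

lemma apply_halfPeriod : P ω = e :=
  h.apply_eq_of_deriv_eq_zero ⟨h.halfPeriod_pos, le_rfl⟩ h.deriv_halfPeriod

/-- Differentiating the equation gives `P' (P'' - 6 P ^ 2 + 2 e ^ 2) = 0`; the first factor can be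
cancelled because a product of analytic functions vanishes only if one of them does. -/
lemma deriv_deriv (hx : x ∈ Set.Ioo 0 ω) : deriv (deriv P) x = 6 * P x ^ 2 - 2 * e ^ 2 := by
  have hP := h.analyticOnNhd.mono Set.Ioo_subset_Ioc_self
  have hprod : ∀ y ∈ Set.Ioo 0 ω,
      deriv P y * (deriv (deriv P) y - (6 * P y ^ 2 - 2 * e ^ 2)) = 0 := fun y hy => by
    have hdP := (hP y hy).differentiableAt.hasDerivAt
    have hlhs := (hP.deriv y hy).differentiableAt.hasDerivAt.fun_pow 2
    have hrhs := (hdP.const_mul 4).fun_mul ((hdP.fun_pow 2).sub_const (e ^ 2))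
    have hode : (fun z => deriv P z ^ 2) =ᶠ[𝓝 y] fun z => 4 * P z * (P z ^ 2 - e ^ 2) :=
      mem_of_superset (Ioo_mem_nhds hy.1 hy.2) fun z hz => h.deriv_sq z ⟨hz.1, hz.2.le⟩
    have hderiv := hlhs.unique (hrhs.congr_of_eventuallyEq hode)
    norm_num at hderiv
    linear_combination hderiv / 2
  have hfactor : AnalyticOnNhd ℝ (fun y => deriv (deriv P) y - (6 * P y ^ 2 - 2 * e ^ 2))
      (Set.Ioo 0 ω) :=
    hP.deriv.deriv.sub ((analyticOnNhd_const.mul (hP.pow 2)).sub analyticOnNhd_const)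
  rcases AnalyticOnNhd.eq_zero_or_eq_zero_of_mul_eq_zero hP.deriv hfactor hprod
    isPreconnected_Ioo with hconst | hzero
  · obtain ⟨y, hPy, hy⟩ := ((h.tendsto_atTop.eventually_gt_atTop e).and
      (Ioo_mem_nhdsGT h.halfPeriod_pos)).exists
    exact absurd (h.apply_eq_of_deriv_eq_zero ⟨hy.1, hy.2.le⟩ (hconst y hy)) hPy.ne'
  · exact sub_eq_zero.1 (hzero x hx)

lemma strictMonoOn_deriv : StrictMonoOn (deriv P) (Set.Ioc 0 ω) := by
  refine strictMonoOn_of_deriv_pos (convex_Ioc 0 ω) h.analyticOnNhd.deriv.continuousOn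
    fun x hx => ?_
  rw [interior_Ioc] at hx
  have hle := h.le_apply (Set.Ioo_subset_Ioc_self hx)
  have he := h.e_pos
  rw [h.deriv_deriv hx]
  nlinarith

lemma deriv_neg (hx : x ∈ Set.Ioo 0 ω) : deriv P x < 0 := by
  rw [← h.deriv_halfPeriod]
  exact h.strictMonoOn_deriv (Set.Ioo_subset_Ioc_self hx) ⟨h.halfPeriod_pos, le_rfl⟩ hx.2

lemma lt_apply (hx : x ∈ Set.Ioo 0 ω) : e < P x := by
  have hx' := Set.Ioo_subset_Ioc_self hx
  refine (h.le_apply hx').lt_of_ne fun heq => (h.deriv_neg hx).ne ?_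
  simpa [← heq] using h.deriv_sq x hx'

lemma hasDerivAt_sq_div (hx : x ∈ Set.Ioo 0 ω) :
    HasDerivAt (fun y => (e / P y) ^ 2) (-2 * e ^ 2 * deriv P x / P x ^ 3) x := by
  have hx' := Set.Ioo_subset_Ioc_self hx
  have hP0 : P x ≠ 0 := (h.e_pos.trans_le (h.le_apply hx')).ne'
  have hP := (h.analyticOnNhd x hx').differentiableAt.hasDerivAt
  refine (((hasDerivAt_const x e).fun_div hP hP0).fun_pow 2).congr_deriv ?_
  rw [Nat.add_one_sub_one, pow_one, Nat.cast_ofNat]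
  field_simp
  ring

lemma deriv_sq_div_pos (hx : x ∈ Set.Ioo 0 ω) : 0 < -2 * e ^ 2 * deriv P x / P x ^ 3 := by
  have he := h.e_pos
  have hP : 0 < P x := he.trans (h.lt_apply hx)
  have hderiv : 0 < -deriv P x := neg_pos.2 (h.deriv_neg hx)
  rw [show -2 * e ^ 2 * deriv P x / P x ^ 3 = 2 * e ^ 2 * -deriv P x / P x ^ 3 by ring]
  positivity

lemma strictMonoOn_sq_div : StrictMonoOn (fun x => (e / P x) ^ 2) (Set.Ioo 0 ω) := by
  refine strictMonoOn_of_deriv_pos (convex_Ioo 0 ω)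
    (fun x hx => (h.hasDerivAt_sq_div hx).continuousAt.continuousWithinAt) fun x hx => ?_
  rw [interior_Ioo] at hx
  rw [(h.hasDerivAt_sq_div hx).deriv]
  exact h.deriv_sq_div_pos hx

lemma image_sq_div : (fun x => (e / P x) ^ 2) '' Set.Ioo 0 ω = Set.Ioo 0 1 := by
  have he := h.e_pos
  have hω := h.halfPeriod_pos
  have hcont : ContinuousOn (fun x => (e / P x) ^ 2) (Set.Ioo 0 ω) :=
    fun x hx => (h.hasDerivAt_sq_div hx).continuousAt.continuousWithinAt
  have hzero : Tendsto (fun x => (e / P x) ^ 2) (𝓝[>] 0) (𝓝 0) := by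
    simpa using (h.tendsto_atTop.const_div_atTop e).pow 2
  have hone : Tendsto (fun x => (e / P x) ^ 2) (𝓝[<] ω) (𝓝 1) := by
    have hP : Tendsto P (𝓝[<] ω) (𝓝 e) := by
      have hlim := (h.analyticOnNhd ω ⟨hω, le_rfl⟩).continuousAt.tendsto
      rw [h.apply_halfPeriod] at hlim
      exact hlim.mono_left nhdsWithin_le_nhds
    have hdiv : Tendsto (fun x => e / P x) (𝓝[<] ω) (𝓝 (e / e)) := tendsto_const_nhds.div hP he.ne'
    simpa [he.ne'] using hdiv.pow 2
  refine Set.Subset.antisymm ?_ ?_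
  · rintro _ ⟨x, hx, rfl⟩
    have hlt := h.lt_apply hx
    have hP : 0 < P x := he.trans hlt
    exact ⟨by positivity, pow_lt_one₀ (by positivity) ((div_lt_one hP).2 hlt) two_ne_zero⟩
  · exact isPreconnected_Ioo.intermediate_value_Ioo
      (l₁ := 𝓝[>] 0) (l₂ := 𝓝[<] ω) (le_principal_iff.2 (Ioo_mem_nhdsGT hω))
      (le_principal_iff.2 (Ioo_mem_nhdsLT hω)) hcont hzero hone

lemma deriv_eq_neg_sqrt (hx : x ∈ Set.Ioo 0 ω) :
    deriv P x = -(2 * √(P x) * √(P x ^ 2 - e ^ 2)) := by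
  have he := h.e_pos
  have hlt := h.lt_apply hx
  have hd : 0 ≤ P x ^ 2 - e ^ 2 := by nlinarith
  have hsq : (-deriv P x) ^ 2 = (2 * √(P x) * √(P x ^ 2 - e ^ 2)) ^ 2 := by
    rw [neg_sq, h.deriv_sq x (Set.Ioo_subset_Ioc_self hx), mul_pow, mul_pow,
      Real.sq_sqrt (he.trans hlt).le, Real.sq_sqrt hd]
    ring
  have hderiv : 0 ≤ -deriv P x := neg_nonneg.2 (h.deriv_neg hx).le
  exact neg_eq_iff_eq_neg.1 ((sq_eq_sq₀ hderiv (by positivity)).1 hsq)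

lemma sq_div_rpow_mul_one_sub_rpow (hx : x ∈ Set.Ioo 0 ω) :
    ((e / P x) ^ 2) ^ (-(3 / 4) : ℝ) * (1 - (e / P x) ^ 2) ^ (-(1 / 2) : ℝ)
      = P x ^ 2 * √(P x) / (e * √e * √(P x ^ 2 - e ^ 2)) := by
  have he := h.e_pos
  have hlt := h.lt_apply hx
  have hP : 0 < P x := he.trans hlt
  have hd : 0 < P x ^ 2 - e ^ 2 := by nlinarith
  have hep : 0 < e / P x := by positivity
  have hleft : ((e / P x) ^ 2) ^ (-(3 / 4) : ℝ) = P x * √(P x) / (e * √e) := by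
    rw [← Real.rpow_natCast, ← Real.rpow_mul hep.le,
      show ((2 : ℕ) : ℝ) * -(3 / 4) = -(1 + 1 / 2) by norm_num, Real.rpow_neg hep.le,
      Real.rpow_add hep, Real.rpow_one, ← Real.sqrt_eq_rpow, Real.sqrt_div he.le]
    field_simp
  have hsub : 1 - (e / P x) ^ 2 = (P x ^ 2 - e ^ 2) / P x ^ 2 := by field_simp
  have hright : (1 - (e / P x) ^ 2) ^ (-(1 / 2) : ℝ) = P x / √(P x ^ 2 - e ^ 2) := by
    rw [hsub, Real.rpow_neg (by positivity), ← Real.sqrt_eq_rpow, Real.sqrt_div hd.le,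
      Real.sqrt_sq hP.le, inv_div]
  rw [hleft, hright]
  field_simp

lemma deriv_smul_integrand (hx : x ∈ Set.Ioo 0 ω) :
    (-2 * e ^ 2 * deriv P x / P x ^ 3) •
      (((e / P x) ^ 2) ^ (-(3 / 4) : ℝ) * (1 - (e / P x) ^ 2) ^ (-(1 / 2) : ℝ)) = 4 * √e := by
  have he := h.e_pos
  have hlt := h.lt_apply hx
  have hP : 0 < P x := he.trans hlt
  have hsd : 0 < √(P x ^ 2 - e ^ 2) := Real.sqrt_pos.2 (by nlinarith)
  rw [h.sq_div_rpow_mul_one_sub_rpow hx, h.deriv_eq_neg_sqrt hx, smul_eq_mul]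
  field_simp
  rw [Real.sq_sqrt hP.le, Real.sq_sqrt he.le]
  ring

lemma integral_beta_eq :
    ∫ s in Set.Ioo (0 : ℝ) 1, s ^ (-(3 / 4) : ℝ) * (1 - s) ^ (-(1 / 2) : ℝ) = 4 * ω * √e := by
  rw [← h.image_sq_div, integral_image_eq_integral_deriv_smul_of_monotoneOn measurableSet_Ioo
      (fun x hx => (h.hasDerivAt_sq_div hx).hasDerivWithinAt) h.strictMonoOn_sq_div.monotoneOn,
    setIntegral_congr_fun measurableSet_Ioo fun x hx => h.deriv_smul_integrand hx]
  simp [h.halfPeriod_pos.le]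
  ring

end LemniscaticODE

section LemniscateIntegral

lemma ofReal_integral_rpow_mul_one_sub_rpow (a b : ℝ) :
    ((∫ s in Set.Ioo (0 : ℝ) 1, s ^ (a - 1) * (1 - s) ^ (b - 1) : ℝ) : ℂ)
      = Complex.betaIntegral a b := by
  rw [Complex.betaIntegral, intervalIntegral.integral_of_le zero_le_one,
    integral_Ioc_eq_integral_Ioo, ← integral_complex_ofReal]
  refine setIntegral_congr_fun measurableSet_Ioo fun s hs => ?_
  push_cast [Complex.ofReal_cpow hs.1.le, Complex.ofReal_cpow (sub_nonneg.2 hs.2.le)]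
  rfl

lemma integral_rpow_mul_one_sub_rpow {a b : ℝ} (ha : 0 < a) (hb : 0 < b) :
    ∫ s in Set.Ioo (0 : ℝ) 1, s ^ (a - 1) * (1 - s) ^ (b - 1)
      = Real.Gamma a * Real.Gamma b / Real.Gamma (a + b) := by
  have h := ProbabilityTheory.beta_eq_betaIntegralReal a b ha hb
  rw [← ofReal_integral_rpow_mul_one_sub_rpow, Complex.ofReal_re] at h
  exact h.symm

lemma Gamma_one_fourth_mul_Gamma_three_fourths :
    Real.Gamma (1 / 4) * Real.Gamma (3 / 4) = π * √2 := by
  have h := Real.Gamma_mul_Gamma_one_sub (1 / 4)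
  rw [show π * (1 / 4) = π / 4 by ring, Real.sin_pi_div_four,
    show (1 : ℝ) - 1 / 4 = 3 / 4 by norm_num] at h
  rw [h]
  field_simp
  norm_num

lemma integral_rpow_neg_mul_one_sub_rpow_neg :
    ∫ s in Set.Ioo (0 : ℝ) 1, s ^ (-(3 / 4) : ℝ) * (1 - s) ^ (-(1 / 2) : ℝ)
      = Real.Gamma (1 / 4) ^ 2 / √(2 * π) := by
  have h := integral_rpow_mul_one_sub_rpow (a := 1 / 4) (b := 1 / 2) (by norm_num) (by norm_num)
  rw [show (1 / 4 - 1 : ℝ) = -(3 / 4) by norm_num, show (1 / 2 - 1 : ℝ) = -(1 / 2) by norm_num,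
    show (1 / 4 + 1 / 2 : ℝ) = 3 / 4 by norm_num, Real.Gamma_one_half_eq] at h
  have hΓ := Gamma_one_fourth_mul_Gamma_three_fourths
  have hpos : 0 < Real.Gamma (3 / 4) := Real.Gamma_pos_of_pos (by norm_num)
  rw [h, div_eq_div_iff hpos.ne' (by positivity), Real.sqrt_mul zero_le_two]
  linear_combination Real.Gamma (1 / 4) * √2 * Real.sq_sqrt Real.pi_pos.le
    - Real.Gamma (1 / 4) * hΓ

end LemniscateIntegral

section GaussianWeierstrass

lemma ofReal_notMem_gaussPair_lattice {x : ℝ} (hx : x ∈ Set.Ioo (0 : ℝ) 1) :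
    (x : ℂ) ∉ gaussPair.lattice := by
  rw [PeriodPair.mem_lattice]
  rintro ⟨m, n, h⟩
  have hm : (m : ℝ) = x := by simpa [gaussPair] using congrArg Complex.re h
  rw [← hm] at hx
  have hpos : (0 : ℤ) < m := mod_cast hx.1
  have hlt : m < (1 : ℤ) := mod_cast hx.2
  omega

lemma gaussPair_weierstrassP_ofReal (x : ℝ) :
    ((gaussPair.weierstrassP x).re : ℂ) = gaussPair.weierstrassP x :=
  Complex.conj_eq_iff_re.1 (conj_eq_of_hasSum_gaussPair
    (f := fun l => 1 / ((x : ℂ) - l) ^ 2 - 1 / l ^ 2) (fun z => by simp)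
    (gaussPair.hasSum_weierstrassP x))

lemma gaussPair_derivWeierstrassP_ofReal (x : ℝ) :
    ((gaussPair.derivWeierstrassP x).re : ℂ) = gaussPair.derivWeierstrassP x :=
  Complex.conj_eq_iff_re.1 (conj_eq_of_hasSum_gaussPair
    (f := fun l => -2 / ((x : ℂ) - l) ^ 3) (fun z => by simp [map_ofNat])
    (gaussPair.hasSum_derivWeierstrassP x))

lemma tendsto_re_weierstrassP (L : PeriodPair) :
    Tendsto (fun x : ℝ => (L.weierstrassP x).re) (𝓝[>] 0) atTop := by
  have hregular : ContinuousAt (fun x : ℝ => (L.weierstrassPExcept 0 x).re) 0 :=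
    Complex.continuous_re.continuousAt.comp ((L.analyticAt_weierstrassPExcept 0).continuousAt
      |>.comp_of_eq Complex.continuous_ofReal.continuousAt Complex.ofReal_zero)
  have hpole : Tendsto (fun x : ℝ => (x⁻¹) ^ 2) (𝓝[>] 0) atTop :=
    (tendsto_pow_atTop two_ne_zero).comp tendsto_inv_nhdsGT_zero
  refine ((hregular.tendsto.mono_left nhdsWithin_le_nhds).add_atTop hpole).congr fun x => ?_
  have hP := L.weierstrassPExcept_def 0 x
  simp only [ZeroMemClass.coe_zero, sub_zero] at hP
  rw [hP]
  simp [← Complex.ofReal_pow, ← Complex.ofReal_inv, -Complex.inv_re]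

lemma analyticAt_re_gaussPair_weierstrassP {x : ℝ} (hx : x ∈ Set.Ioo (0 : ℝ) 1) :
    AnalyticAt ℝ (fun x : ℝ => (gaussPair.weierstrassP x).re) x := by
  have h := (gaussPair.analyticOnNhd_weierstrassP x
    (ofReal_notMem_gaussPair_lattice hx)).restrictScalars (𝕜 := ℝ)
  exact (Complex.reCLM.analyticAt _).comp (h.comp (Complex.ofRealCLM.analyticAt x))

lemma deriv_re_gaussPair_weierstrassP {x : ℝ} (hx : x ∈ Set.Ioo (0 : ℝ) 1) :
    deriv (fun x : ℝ => (gaussPair.weierstrassP x).re) x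
      = (gaussPair.derivWeierstrassP x).re := by
  have h := (gaussPair.differentiableOn_weierstrassP.differentiableAt
    (gaussPair.isClosed_lattice.isOpen_compl.mem_nhds
      (ofReal_notMem_gaussPair_lattice hx))).hasDerivAt
  rw [PeriodPair.deriv_weierstrassP] at h
  exact h.real_of_complex.deriv

lemma gaussPair_derivWeierstrassP_half : gaussPair.derivWeierstrassP (1 / 2) = 0 := by
  have h := gaussPair.derivWeierstrassP_add_coe (-(1 / 2))
    ⟨gaussPair.ω₁, gaussPair.ω₁_mem_lattice⟩
  rw [PeriodPair.derivWeierstrassP_neg, show (-(1 / 2) : ℂ) + gaussPair.ω₁ = 1 / 2 by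
    norm_num [gaussPair]] at h
  exact self_eq_neg.1 h

lemma re_gaussPair_derivWeierstrassP_sq {x r : ℝ} (hx : x ∈ Set.Ioo (0 : ℝ) 1)
    (hr : gaussPair.G 4 = r) :
    (gaussPair.derivWeierstrassP x).re ^ 2 = 4 * (gaussPair.weierstrassP x).re *
      ((gaussPair.weierstrassP x).re ^ 2 - 15 * r) := by
  have h := gaussPair.derivWeierstrassP_sq x (ofReal_notMem_gaussPair_lattice hx)
  rw [gaussPair_g₃, sub_zero, PeriodPair.g₂, hr, ← gaussPair_weierstrassP_ofReal,
    ← gaussPair_derivWeierstrassP_ofReal] at h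
  have hreal : (gaussPair.derivWeierstrassP x).re ^ 2 = 4 * (gaussPair.weierstrassP x).re ^ 3
      - 60 * r * (gaussPair.weierstrassP x).re := mod_cast h
  linear_combination hreal

lemma lemniscaticODE_gaussPair {r : ℝ} (hr : 0 < r) (hG : gaussPair.G 4 = r) :
    LemniscaticODE (fun x : ℝ => (gaussPair.weierstrassP x).re) √(15 * r) (1 / 2) := by
  have hsub : Set.Ioc (0 : ℝ) (1 / 2) ⊆ Set.Ioo 0 1 :=
    Set.Ioc_subset_Ioo_right (by norm_num)
  refine ⟨by positivity, by norm_num,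
    fun x hx => analyticAt_re_gaussPair_weierstrassP (hsub hx), fun x hx => ?_,
    tendsto_re_weierstrassP gaussPair, ?_⟩
  · rw [deriv_re_gaussPair_weierstrassP (hsub hx), Real.sq_sqrt (by positivity)]
    exact re_gaussPair_derivWeierstrassP_sq (hsub hx) hG
  · have hhalf : ((1 / 2 : ℝ) : ℂ) = 1 / 2 := by norm_num
    rw [deriv_re_gaussPair_weierstrassP (by norm_num), hhalf, gaussPair_derivWeierstrassP_half,
      Complex.zero_re]

lemma gaussPair_G_four :
    gaussPair.G 4 = (Real.Gamma (1 / 4) ^ 8 / (960 * π ^ 2) : ℝ) := by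
  obtain ⟨r, hr, hG⟩ := exists_gaussPair_G_four_eq_ofReal
  have hperiod := (lemniscaticODE_gaussPair hr hG).integral_beta_eq
  rw [integral_rpow_neg_mul_one_sub_rpow_neg, show (4 * (1 / 2) : ℝ) = 2 by norm_num] at hperiod
  have hpow : (Real.Gamma (1 / 4) ^ 2) ^ 4 / √(2 * π) ^ 4 = 2 ^ 4 * √√(15 * r) ^ 4 := by
    rw [← div_pow, hperiod, mul_pow]
  rw [pow_mul √(2 * π) 2 2, pow_mul √√(15 * r) 2 2, Real.sq_sqrt (by positivity),
    Real.sq_sqrt (by positivity), Real.sq_sqrt (by positivity)] at hpow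
  rw [hG]
  congr 1
  field_simp at hpow ⊢
  linear_combination -hpow

end GaussianWeierstrass

theorem stmt_18 :
    ∫ k in (0:ℝ)..(1:ℝ), k * (4 + k^2 - k^4) * (EllK' k)^7
      = 3 * Real.Gamma (1/4) ^ 16 / (2^12 * 5 * π^4) := by
  have hG8 : gaussPair.G 8 =
      ((3 / 7 * (Real.Gamma (1 / 4) ^ 8 / (960 * π ^ 2)) ^ 2 : ℝ) : ℂ) := by
    have h := seven_mul_G_eight gaussPair
    rw [gaussPair_G_four] at h
    push_cast at h ⊢
    linear_combination h / 7
  rw [integral_EllK'_eq_G_eight, hG8, Complex.ofReal_re]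
  field_simp
  norm_num
end
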